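/- arXiv:2406.13293 — 3 statements merged into one kernel-verified Lean document; each statement's English description precedes it below -/
import Mathlib

section
/- If (K,c) ∉ D₁ ∪ D₂ (with K ≠ 0), then for every μ ∈ ℝ the system (TV) has no nonconstant periodic solution with u > 0. Moreover, under condition (C), for (K,c) ∈ D₁ ∪ D₂ and a fixed q in the admissible interval ((u₁,u₀) when (K,c) ∈ D₁ with μ_b ≥ μ_f; (u₀,u₂) when (K,c) ∈ D₁ with μ_b < μ_f or (K,c) ∈ D₂), there is at most one value of μ for which (TV) has a nonconstant periodic solution with initial condition (u(0),w(0)) = (q,0): if μ ≠ μ_per(K,c,q), no such periodic solution exists. -/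
open Set Filter MeasureTheory

noncomputable section

namespace TrafficTW

/-- `f(u) = (K u - V(u) - c)/K`. -/
def fTV (V : ℝ → ℝ) (K c u : ℝ) : ℝ := (K * u - V u - c) / K

/-- `f'(u) = (K - V'(u))/K`. -/
def fdTV (V' : ℝ → ℝ) (K u : ℝ) : ℝ := (K - V' u) / K

/-- `h(u,μ) = f'(u) + μ`. -/
def hTV (V' : ℝ → ℝ) (K μ u : ℝ) : ℝ := fdTV V' K u + μ

/-- `g₁(u) = 1/(τ κ(1/u))`. -/
def g1TV (κ : ℝ → ℝ) (τ u : ℝ) : ℝ := 1 / (τ * κ (1 / u))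

/-- `g₂(u) = u/(2 τ κ(1/u))`. -/
def g2TV (κ : ℝ → ℝ) (τ u : ℝ) : ℝ := u / (2 * τ * κ (1 / u))

/-- The traveling-wave system (TV): `u' = w`, `w' = g₁ f + g₂ h w`. -/
def IsTVSol (V V' κ : ℝ → ℝ) (τ K c μ : ℝ) (u w : ℝ → ℝ) : Prop :=
  (∀ z, HasDerivAt u (w z) z) ∧
  (∀ z, HasDerivAt w
    (g1TV κ τ (u z) * fTV V K c (u z) + g2TV κ τ (u z) * hTV V' K μ (u z) * w z) z)

/-- Assumption (A1), where `V'` and `V''` are the first and second derivatives of `V`. -/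
def A1 (V V' V'' : ℝ → ℝ) (UM : ℝ) : Prop :=
  (∀ u ∈ Ici (0:ℝ), HasDerivWithinAt V (V' u) (Ici 0) u) ∧
  ContinuousOn V' (Ici 0) ∧
  (∀ u ∈ Ioi (0:ℝ), HasDerivAt V' (V'' u) u) ∧
  ContinuousOn V'' (Ioi 0) ∧
  (∀ u, 0 < u → 0 < V' u) ∧ (∃ M, ∀ u, 0 < u → V' u ≤ M) ∧
  Tendsto V' atTop (nhds 0) ∧
  0 < UM ∧ (∀ u, 0 < u → V' u ≤ V' UM) ∧
  (∀ u, 0 < u → (V'' u = 0 ↔ u = UM))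

/-- Assumption (A2). -/
def A2 (κ : ℝ → ℝ) : Prop :=
  ContDiffOn ℝ 1 κ (Ioi 0) ∧ ∀ ρ, 0 < ρ → 0 < κ ρ

/-- `c₀ = -V(0)`. -/
def c0v (V : ℝ → ℝ) : ℝ := - V 0

/-- `c_M(K) = K u_M(K) - V(u_M(K))`, where `uMx` is the function `K ↦ u_M(K)`. -/
def cMf (V : ℝ → ℝ) (uMx : ℝ → ℝ) (K : ℝ) : ℝ := K * uMx K - V (uMx K)

/-- `c_m(K) = K u_m(K) - V(u_m(K))`, where `umx` is the function `K ↦ u_m(K)`. -/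
def cmf (V : ℝ → ℝ) (umx : ℝ → ℝ) (K : ℝ) : ℝ := K * umx K - V (umx K)

/-- `c₁(K) = max (c₀, c_m(K))`. -/
def c1f (V : ℝ → ℝ) (umx : ℝ → ℝ) (K : ℝ) : ℝ := max (c0v V) (cmf V umx K)

/-- `uMx K = u_M(K)` is the unique local maximum point of `u ↦ K u - V(u)`, characterized
by `u_M(K) ∈ (0, U_M)` and `V'(u_M(K)) = K`, for `K ∈ (K₀, K_M)`. -/
def UMaxHyp (V' : ℝ → ℝ) (UM : ℝ) (uMx : ℝ → ℝ) : Prop :=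
  ∀ K, V' 0 < K → K < V' UM → uMx K ∈ Ioo 0 UM ∧ V' (uMx K) = K

/-- `umx K = u_m(K)` is the unique local minimum point of `u ↦ K u - V(u)`, characterized
by `u_m(K) ∈ (U_M, ∞)` and `V'(u_m(K)) = K`, for `K ∈ (0, K_M)`. -/
def UMinHyp (V' : ℝ → ℝ) (UM : ℝ) (umx : ℝ → ℝ) : Prop :=
  ∀ K, 0 < K → K < V' UM → UM < umx K ∧ V' (umx K) = K

/-- Characterization of `K₁ ∈ (K₀, K_M)`: `c_m(K) < c₀` for `K < K₁` and `c_m(K) > c₀`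
for `K > K₁`. -/
def K1Hyp (V V' : ℝ → ℝ) (UM : ℝ) (umx : ℝ → ℝ) (K₁ : ℝ) : Prop :=
  V' 0 < K₁ ∧ K₁ < V' UM ∧
  (∀ K, 0 < K → K < K₁ → cmf V umx K < c0v V) ∧
  cmf V umx K₁ = c0v V ∧
  (∀ K, K₁ < K → K < V' UM → c0v V < cmf V umx K)

/-- The parameter region `D₁`. -/
def D1 (V V' : ℝ → ℝ) (UM : ℝ) (uMx umx : ℝ → ℝ) : Set (ℝ × ℝ) :=
  {p | V' 0 < p.1 ∧ p.1 < V' UM ∧ c1f V umx p.1 < p.2 ∧ p.2 < cMf V uMx p.1}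

/-- The parameter region `D₂`. -/
def D2 (V V' : ℝ → ℝ) (umx : ℝ → ℝ) (K₁ : ℝ) : Set (ℝ × ℝ) :=
  {p | (V' 0 < p.1 ∧ p.1 < K₁ ∧ p.2 = c0v V) ∨
       (0 < p.1 ∧ p.1 < K₁ ∧ cmf V umx p.1 < p.2 ∧ p.2 < c0v V)}

/-- For `(K,c) ∈ D₁`: `u₁ < u₀ < u₂` are the exactly three positive zeros of `f`. -/
def ZerosD1 (V : ℝ → ℝ) (K c u1 u0 u2 : ℝ) : Prop :=
  0 < u1 ∧ u1 < u0 ∧ u0 < u2 ∧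
  fTV V K c u1 = 0 ∧ fTV V K c u0 = 0 ∧ fTV V K c u2 = 0 ∧
  ∀ u, 0 < u → fTV V K c u = 0 → u = u1 ∨ u = u0 ∨ u = u2

/-- For `(K,c) ∈ D₂`: `u₀ < u₂` are the exactly two positive zeros of `f`. -/
def ZerosD2 (V : ℝ → ℝ) (K c u0 u2 : ℝ) : Prop :=
  0 < u0 ∧ u0 < u2 ∧ fTV V K c u0 = 0 ∧ fTV V K c u2 = 0 ∧
  ∀ u, 0 < u → fTV V K c u = 0 → u = u0 ∨ u = u2

/-- Condition (HE1). -/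
def HE1 (u1 u2 : ℝ) (u w : ℝ → ℝ) : Prop :=
  Tendsto u atBot (nhds u1) ∧ Tendsto u atTop (nhds u2) ∧
  Tendsto w atBot (nhds 0) ∧ Tendsto w atTop (nhds 0) ∧ ∀ z, 0 < w z

/-- Condition (HE2). -/
def HE2 (u1 u2 : ℝ) (u w : ℝ → ℝ) : Prop :=
  Tendsto u atBot (nhds u2) ∧ Tendsto u atTop (nhds u1) ∧
  Tendsto w atBot (nhds 0) ∧ Tendsto w atTop (nhds 0) ∧ ∀ z, w z < 0

/-- Condition (HO) with level `ub`. -/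
def HO (ub : ℝ) (u w : ℝ → ℝ) : Prop :=
  Tendsto u atBot (nhds ub) ∧ Tendsto u atTop (nhds ub) ∧
  Tendsto w atBot (nhds 0) ∧ Tendsto w atTop (nhds 0) ∧
  ¬ (∀ z, u z = ub ∧ w z = 0)

/-- (TV) with parameter `μ` has a positive solution satisfying (HE1). -/
def HasHE1 (V V' κ : ℝ → ℝ) (τ K c μ u1 u2 : ℝ) : Prop :=
  ∃ u w : ℝ → ℝ, IsTVSol V V' κ τ K c μ u w ∧ (∀ z, 0 < u z) ∧ HE1 u1 u2 u w

/-- (TV) with parameter `μ` has a positive solution satisfying (HE2). -/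
def HasHE2 (V V' κ : ℝ → ℝ) (τ K c μ u1 u2 : ℝ) : Prop :=
  ∃ u w : ℝ → ℝ, IsTVSol V V' κ τ K c μ u w ∧ (∀ z, 0 < u z) ∧ HE2 u1 u2 u w

/-- (TV) with parameter `μ` has a positive solution satisfying (HO) with level `ub`. -/
def HasHO (V V' κ : ℝ → ℝ) (τ K c μ ub : ℝ) : Prop :=
  ∃ u w : ℝ → ℝ, IsTVSol V V' κ τ K c μ u w ∧ (∀ z, 0 < u z) ∧ HO ub u w

/-- Condition (H): `∫₁^∞ dρ/(ρ³ κ(ρ)) = ∞`. -/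
def CondH (κ : ℝ → ℝ) : Prop :=
  ¬ IntegrableOn (fun ρ => 1 / (ρ ^ 3 * κ ρ)) (Ioi 1)

/-- Condition (C). -/
def CondC (V' κ : ℝ → ℝ) (UM K₁ K : ℝ) : Prop :=
  (K₁ < K ∧ K < V' UM) ∨ (CondH κ ∧ V' 0 < K ∧ K ≤ K₁)

/-- Periodic solution. -/
def IsPeriodicSol (u w : ℝ → ℝ) : Prop :=
  ∃ Z, 0 < Z ∧ ∀ z, u (z + Z) = u z ∧ w (z + Z) = w z

/-- Nonconstant pair of functions. -/
def Nonconst (u w : ℝ → ℝ) : Prop := ∃ z, u z ≠ u 0 ∨ w z ≠ w 0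

/-- Discriminant of the Jacobian at an equilibrium `(u,0)`. -/
def discTV (V' κ : ℝ → ℝ) (τ K u μ : ℝ) : ℝ :=
  (g2TV κ τ u) ^ 2 * (hTV V' K μ u) ^ 2 + 4 * g1TV κ τ u * fdTV V' K u

/-- The eigenvalue `λ₊(u)`. -/
def lamP (V' κ : ℝ → ℝ) (τ K u μ : ℝ) : ℝ :=
  (g2TV κ τ u * hTV V' K μ u + Real.sqrt (discTV V' κ τ K u μ)) / 2

/-- The eigenvalue `λ₋(u)`. -/
def lamM (V' κ : ℝ → ℝ) (τ K u μ : ℝ) : ℝ :=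
  (g2TV κ τ u * hTV V' K μ u - Real.sqrt (discTV V' κ τ K u μ)) / 2

/-- `Z` is the minimal period of `(u,w)`. -/
def IsMinPeriod (u w : ℝ → ℝ) (Z : ℝ) : Prop :=
  0 < Z ∧ (∀ z, u (z + Z) = u z ∧ w (z + Z) = w z) ∧
  ∀ Z', 0 < Z' → (∀ z, u (z + Z') = u z ∧ w (z + Z') = w z) → Z ≤ Z'

/-- Abstract periodic orbit data for `u' = w`, `w' = A(u) + B(u) w`. -/
structure PO (A B : ℝ → ℝ) (u0 : ℝ) (u w : ℝ → ℝ) : Prop where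
  du : ∀ z, HasDerivAt u (w z) z
  dw : ∀ z, HasDerivAt w (A (u z) + B (u z) * w z) z
  per : ∃ Z, 0 < Z ∧ ∀ z, u (z + Z) = u z ∧ w (z + Z) = w z
  uniq : ∀ s t, u s = u t → w s = w t → ∀ z, u (s + z) = u (t + z) ∧ w (s + z) = w (t + z)
  nd : ∀ z, w z = 0 → A (u z) ≠ 0
  sepL : ∀ z, u z ≤ u0 → 0 ≤ A (u z)
  sepR : ∀ z, u0 ≤ u z → A (u z) ≤ 0

/-- Upper arc from time `s` to time `t`. -/
structure Arc (A : ℝ → ℝ) (u w : ℝ → ℝ) (s t : ℝ) : Prop where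
  lt : s < t
  pos : ∀ z ∈ Ioo s t, 0 < w z
  ws : w s = 0
  wt : w t = 0
  As : 0 < A (u s)
  At : A (u t) < 0

theorem PO.refl {A B : ℝ → ℝ} {u0 : ℝ} {u w : ℝ → ℝ} (h : PO A B u0 u w) :
    PO (fun x => - A (-x)) (fun x => B (-x)) (-u0) (fun z => - u z) (fun z => - w z) where
  du z := (h.du z).neg
  dw z := by
    refine (h.dw z).neg.congr_deriv ?_
    simp only [neg_neg]; ring
  per := by
    obtain ⟨Z, hZ, hp⟩ := h.per
    exact ⟨Z, hZ, fun z => ⟨by rw [(hp z).1], by rw [(hp z).2]⟩⟩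
  uniq s t h1 h2 z := by
    have := h.uniq s t (neg_injective h1) (neg_injective h2) z
    exact ⟨by rw [this.1], by rw [this.2]⟩
  nd z hz := by
    have := h.nd z (by simpa using hz)
    simpa using this
  sepL z hz := by
    have := h.sepR z (by linarith)
    simpa using this
  sepR z hz := by
    have := h.sepL z (by linarith)
    simpa using this

theorem PO.rev {A B : ℝ → ℝ} {u0 : ℝ} {u w : ℝ → ℝ} (h : PO A B u0 u w) :
    PO (fun x => - A (-x)) (fun x => - B (-x)) (-u0) (fun z => - u (-z)) (fun z => w (-z)) where
  du z := by
    have := ((h.du (-z)).comp z (hasDerivAt_neg z)).neg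
    refine this.congr_deriv ?_
    ring
  dw z := by
    have := ((h.dw (-z)).comp z (hasDerivAt_neg z))
    refine this.congr_deriv ?_
    simp only [neg_neg]; ring
  per := by
    obtain ⟨Z, hZ, hp⟩ := h.per
    refine ⟨Z, hZ, fun z => ?_⟩
    have := hp (-(z + Z))
    rw [show -(z + Z) + Z = -z by ring] at this
    exact ⟨by rw [this.1], by rw [this.2]⟩
  uniq s t h1 h2 z := by
    have := h.uniq (-s) (-t) (neg_injective h1) h2 (-z)
    rw [show -s + -z = -(s + z) by ring, show -t + -z = -(t + z) by ring] at this
    exact ⟨by rw [this.1], by rw [this.2]⟩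
  nd z hz := by
    have := h.nd (-z) (by simpa using hz)
    simpa using this
  sepL z hz := by
    have := h.sepR (-z) (by linarith)
    simpa using this
  sepR z hz := by
    have := h.sepL (-z) (by linarith)
    simpa using this

theorem PO.exists_arc {A B : ℝ → ℝ} {u0 : ℝ} {u w : ℝ → ℝ} (h : PO A B u0 u w) {s : ℝ}
    (hs : w s = 0) (hA : 0 < A (u s)) : ∃ t, Arc A u w s t := by
  have hwc : Continuous w := continuous_iff_continuousAt.2 fun z => (h.dw z).continuousAt
  have hd : HasDerivAt w (A (u s)) s := by simpa [hs] using h.dw s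
  -- positive just after s
  have hev : ∀ᶠ z in nhdsWithin s (Ioi s), 0 < w z := by
    have h1 := (hasDerivAt_iff_tendsto_slope.1 hd).eventually (lt_mem_nhds hA)
    have h2 : nhdsWithin s (Ioi s) ≤ nhdsWithin s {s}ᶜ :=
      nhdsWithin_mono _ (fun x hx => ne_of_gt hx)
    filter_upwards [h2 h1, self_mem_nhdsWithin] with z hz hz'
    rw [slope_def_field, hs, sub_zero] at hz
    have hz'' : 0 < z - s := sub_pos.2 hz'
    by_contra hcon
    exact absurd hz (not_lt.2 (div_nonpos_of_nonpos_of_nonneg (not_lt.1 hcon) hz''.le))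
  obtain ⟨e, he, hpos⟩ := (mem_nhdsGT_iff_exists_Ioo_subset).1 hev
  obtain ⟨Z, hZ, hp⟩ := h.per
  have he' : s < e := he
  let m := (s + min e (s + Z)) / 2
  have hmin : s < min e (s + Z) := lt_min he' (by linarith)
  have hm1 : s < m := by simp only [m]; linarith
  have hm2 : m < e := by have := min_le_left e (s+Z); simp only [m]; linarith
  have hm3 : m < s + Z := by have := min_le_right e (s+Z); simp only [m]; linarith
  let S := Icc m (s + Z) ∩ w ⁻¹' {0}
  have hSc : IsCompact S := isCompact_Icc.inter_right (isClosed_singleton.preimage hwc)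
  have hSn : S.Nonempty := ⟨s + Z, ⟨hm3.le, le_rfl⟩, by simp [(hp s).2, hs]⟩
  obtain ⟨t, htS, htm⟩ := hSc.exists_isLeast hSn
  have hwt : w t = 0 := htS.2
  have hwm : 0 < w m := hpos ⟨hm1, hm2⟩
  have hmt : m < t := lt_of_le_of_ne htS.1.1 (by rintro hh; rw [hh, hwt] at hwm; exact lt_irrefl _ hwm)
  have hpos' : ∀ z ∈ Ioo s t, 0 < w z := by
    intro z hz
    rcases lt_or_ge z e with hze | hze
    · exact hpos ⟨hz.1, hze⟩
    · by_contra hcon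
      have hmz : m ≤ z := hm2.le.trans hze
      obtain ⟨y, hy, hy0⟩ := intermediate_value_Icc' hmz hwc.continuousOn
        (show (0:ℝ) ∈ Icc (w z) (w m) from ⟨not_lt.1 hcon, hwm.le⟩)
      have := htm (show y ∈ S from ⟨⟨hy.1, hy.2.trans (hz.2.le.trans htS.1.2)⟩, hy0⟩)
      linarith [hy.2, hz.2]
  have hst : s < t := hm1.trans hmt
  refine ⟨t, hst, hpos', hs, hwt, hA, ?_⟩
  have hdt : HasDerivAt w (A (u t)) t := by simpa [hwt] using h.dw t
  refine lt_of_le_of_ne ?_ (h.nd t hwt)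
  have h1 := (hasDerivAt_iff_tendsto_slope.1 hdt)
  have h2 : nhdsWithin t (Iio t) ≤ nhdsWithin t {t}ᶜ :=
      nhdsWithin_mono _ (fun x hx => ne_of_lt hx)
  refine le_of_tendsto (h1.mono_left h2) ?_
  filter_upwards [Ioo_mem_nhdsLT hst] with z hz
  rw [slope_def_field, hwt, sub_zero]
  exact div_nonpos_of_nonneg_of_nonpos (hpos' z hz).le (by linarith [hz.2])

theorem PO.exists_arc_back {A B : ℝ → ℝ} {u0 : ℝ} {u w : ℝ → ℝ} (h : PO A B u0 u w) {t : ℝ}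
    (hs : w t = 0) (hA : A (u t) < 0) : ∃ s, Arc A u w s t := by
  obtain ⟨s, ha⟩ := h.rev.exists_arc (s := -t) (by simpa using hs) (by simpa using hA)
  refine ⟨-s, by linarith [ha.lt], fun z hz => ?_, ha.ws |> fun _ => ha.wt, hs, ?_, hA⟩
  · have := ha.pos (-z) ⟨by linarith [hz.2], by linarith [hz.1]⟩
    simpa using this
  · have := ha.At
    simpa using this

theorem arc_fun {A B : ℝ → ℝ} {u0 : ℝ} {u w : ℝ → ℝ} (h : PO A B u0 u w) {s t : ℝ}
    (ha : Arc A u w s t) : StrictMonoOn u (Icc s t) ∧ ∃ W : ℝ → ℝ,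
      ContinuousOn W (Icc (u s) (u t)) ∧
      (∀ z ∈ Icc s t, W (u z) = w z) ∧
      (∀ x ∈ Icc (u s) (u t), ∃ z ∈ Icc s t, u z = x) ∧
      (∀ x ∈ Ioo (u s) (u t), 0 < W x ∧ HasDerivAt W (A x / W x + B x) x) := by
  have hwc : Continuous w := continuous_iff_continuousAt.2 fun z => (h.dw z).continuousAt
  have huc : Continuous u := continuous_iff_continuousAt.2 fun z => (h.du z).continuousAt
  have hm : StrictMonoOn u (Icc s t) := by
    refine strictMonoOn_of_deriv_pos (convex_Icc s t) huc.continuousOn ?_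
    intro x hx
    rw [interior_Icc] at hx
    rw [(h.du x).deriv]; exact ha.pos x hx
  refine ⟨hm, ?_⟩
  have hsurj : ∀ x ∈ Icc (u s) (u t), ∃ z ∈ Icc s t, u z = x :=
    fun x hx => intermediate_value_Icc ha.lt.le huc.continuousOn hx
  let ζ := Function.invFunOn u (Icc s t)
  have hζ : ∀ z ∈ Icc s t, ζ (u z) = z := fun z hz => hm.injOn.leftInvOn_invFunOn hz
  have hζm : ∀ x ∈ Icc (u s) (u t), ζ x ∈ Icc s t ∧ u (ζ x) = x := by
    intro x hx
    obtain ⟨z, hz, rfl⟩ := hsurj x hx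
    rw [hζ z hz]; exact ⟨hz, rfl⟩
  have hζc : ContinuousOn ζ (Icc (u s) (u t)) := by
    rw [continuousOn_iff_isClosed]
    intro C hC
    refine ⟨u '' (Icc s t ∩ C), ((isCompact_Icc.inter_right hC).image huc).isClosed, ?_⟩
    ext x
    constructor
    · rintro ⟨h1, h2⟩
      exact ⟨⟨ζ x, ⟨(hζm x h2).1, h1⟩, (hζm x h2).2⟩, h2⟩
    · rintro ⟨⟨z, ⟨hz, hzC⟩, rfl⟩, h2⟩
      refine ⟨?_, h2⟩
      rw [mem_preimage, hζ z hz]; exact hzC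
  refine ⟨fun x => w (ζ x), hwc.comp_continuousOn hζc, fun z hz => by simp only [hζ z hz], hsurj, ?_⟩
  intro x hx
  have hxI := Ioo_subset_Icc_self hx
  obtain ⟨hz, hzx⟩ := hζm x hxI
  have hzz : ζ x ∈ Ioo s t := by
    refine ⟨lt_of_le_of_ne hz.1 ?_, lt_of_le_of_ne hz.2 ?_⟩
    · intro hh; rw [← hh] at hzx; exact hx.1.ne hzx
    · intro hh; rw [hh] at hzx; exact hx.2.ne hzx.symm
  have hp := ha.pos _ hzz
  refine ⟨hp, ?_⟩
  have hca : ContinuousAt ζ x := hζc.continuousAt (Icc_mem_nhds hx.1 hx.2)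
  have hdζ : HasDerivAt ζ (w (ζ x))⁻¹ x := by
    refine HasDerivAt.of_local_left_inverse hca (h.du _) hp.ne' ?_
    filter_upwards [Icc_mem_nhds hx.1 hx.2] with y hy using (hζm y hy).2
  have := (h.dw (ζ x)).comp x hdζ
  refine this.congr_deriv ?_
  rw [hzx]
  field_simp

theorem arc_lt {A B : ℝ → ℝ} {u0 : ℝ} {u w : ℝ → ℝ} (h : PO A B u0 u w) {s t : ℝ}
    (ha : Arc A u w s t) : u s < u0 ∧ u0 < u t := by
  constructor
  · by_contra hc
    have := h.sepR s (not_lt.1 hc)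
    linarith [ha.As]
  · by_contra hc
    have := h.sepL t (not_lt.1 hc)
    linarith [ha.At]

/-- Strict comparison. -/
theorem arc_compare {A B1 B2 : ℝ → ℝ} {u0 : ℝ} {u1 w1 u2 w2 : ℝ → ℝ}
    (h1 : PO A B1 u0 u1 w1) (h2 : PO A B2 u0 u2 w2) {s1 t1 s2 t2 : ℝ}
    (a1 : Arc A u1 w1 s1 t1) (a2 : Arc A u2 w2 s2 t2)
    (hB : ∀ z, B1 (u1 z) < B2 (u1 z)) (hs : u2 s2 ≤ u1 s1) : u1 t1 < u2 t2 := by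
  by_contra hcon
  push Not at hcon
  obtain ⟨m1, W1, c1, e1, r1, d1⟩ := arc_fun h1 a1
  obtain ⟨m2, W2, c2, e2, r2, d2⟩ := arc_fun h2 a2
  obtain ⟨l1, l1'⟩ := arc_lt h1 a1
  obtain ⟨l2, l2'⟩ := arc_lt h2 a2
  set X := u1 s1 with hX
  set Y := u2 t2 with hY
  have W1X : W1 X = 0 := by rw [e1 s1 ⟨le_rfl, a1.lt.le⟩, a1.ws]
  have W2Y : W2 Y = 0 := by rw [e2 t2 ⟨a2.lt.le, le_rfl⟩, a2.wt]
  have nonneg1 : ∀ z ∈ Icc s1 t1, 0 ≤ w1 z := by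
    intro z hz
    rcases eq_or_lt_of_le hz.1 with h | h
    · rw [← h, a1.ws]
    rcases eq_or_lt_of_le hz.2 with h' | h'
    · rw [h', a1.wt]
    exact (a1.pos z ⟨h, h'⟩).le
  have nonneg2 : ∀ z ∈ Icc s2 t2, 0 ≤ w2 z := by
    intro z hz
    rcases eq_or_lt_of_le hz.1 with h | h
    · rw [← h, a2.ws]
    rcases eq_or_lt_of_le hz.2 with h' | h'
    · rw [h', a2.wt]
    exact (a2.pos z ⟨h, h'⟩).le
  have W2X : 0 ≤ W2 X := by
    obtain ⟨z, hz, hzx⟩ := r2 X ⟨hs, by linarith⟩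
    rw [← hzx, e2 z hz]; exact nonneg2 z hz
  have W1Y : 0 ≤ W1 Y := by
    obtain ⟨z, hz, hzx⟩ := r1 Y ⟨by linarith, hcon⟩
    rw [← hzx, e1 z hz]; exact nonneg1 z hz
  set D : ℝ → ℝ := fun x => W2 x - W1 x with hD
  have DX : 0 ≤ D X := by simp only [hD]; linarith
  have DY : D Y ≤ 0 := by simp only [hD]; linarith
  have Dc : ContinuousOn D (Icc X Y) :=
    (c2.mono (Icc_subset_Icc hs le_rfl)).sub (c1.mono (Icc_subset_Icc le_rfl hcon))
  have Dd : ∀ x ∈ Ioo X Y, ∃ d, HasDerivAt D d x ∧ (0 ≤ - A x * D x → 0 < d) := by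
    intro x hx
    obtain ⟨p1, q1⟩ := d1 x ⟨hx.1, hx.2.trans_le hcon⟩
    obtain ⟨p2, q2⟩ := d2 x ⟨hs.trans_lt hx.1, hx.2⟩
    refine ⟨_, q2.sub q1, fun hh => ?_⟩
    obtain ⟨z, hz, hzx⟩ := r1 x ⟨hx.1.le, hx.2.le.trans hcon⟩
    have hb := hB z
    rw [hzx] at hb
    have : A x / W2 x + B2 x - (A x / W1 x + B1 x) = (- A x * D x) / (W1 x * W2 x) + (B2 x - B1 x) := by
      simp only [hD]; field_simp; ring
    rw [this]
    have := div_nonneg hh (mul_pos p1 p2).le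
    linarith
  have AL : ∀ x ∈ Ioo X Y, x ≤ u0 → 0 ≤ A x := by
    intro x hx hle
    obtain ⟨z, hz, hzx⟩ := r1 x ⟨hx.1.le, hx.2.le.trans hcon⟩
    rw [← hzx]; exact h1.sepL z (hzx ▸ hle)
  have AR : ∀ x ∈ Ioo X Y, u0 ≤ x → A x ≤ 0 := by
    intro x hx hle
    obtain ⟨z, hz, hzx⟩ := r1 x ⟨hx.1.le, hx.2.le.trans hcon⟩
    rw [← hzx]; exact h1.sepR z (hzx ▸ hle)
  have hu0 : u0 ∈ Ioo X Y := ⟨l1, l2'⟩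
  have A0 : A u0 = 0 := le_antisymm (AR u0 hu0 le_rfl) (AL u0 hu0 le_rfl)
  obtain ⟨d0, hd0, hd0'⟩ := Dd u0 hu0
  have hd0p : 0 < d0 := hd0' (by simp [A0])
  -- a point with positive derivative is neither a left-minimum nor a right-maximum
  have key1 : ∀ x d, HasDerivAt D d x → 0 < d → ∀ y, y < x → ¬ ∀ z ∈ Ioo y x, D x ≤ D z := by
    intro x d hd hdp y hy hmin
    have h2 : nhdsWithin x (Iio x) ≤ nhdsWithin x {x}ᶜ :=
      nhdsWithin_mono _ (fun x hx => ne_of_lt hx)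
    have : d ≤ 0 := by
      refine le_of_tendsto ((hasDerivAt_iff_tendsto_slope.1 hd).mono_left h2) ?_
      filter_upwards [Ioo_mem_nhdsLT hy] with z hz
      rw [slope_def_field]
      exact div_nonpos_of_nonneg_of_nonpos (by linarith [hmin z hz]) (by linarith [hz.2])
    linarith
  have key2 : ∀ x d, HasDerivAt D d x → 0 < d → ∀ y, x < y → ¬ ∀ z ∈ Ioo x y, D z ≤ D x := by
    intro x d hd hdp y hy hmin
    have h2 : nhdsWithin x (Ioi x) ≤ nhdsWithin x {x}ᶜ :=
      nhdsWithin_mono _ (fun x hx => ne_of_gt hx)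
    have : d ≤ 0 := by
      refine le_of_tendsto ((hasDerivAt_iff_tendsto_slope.1 hd).mono_left h2) ?_
      filter_upwards [Ioo_mem_nhdsGT hy] with z hz
      rw [slope_def_field]
      exact div_nonpos_of_nonpos_of_nonneg (by linarith [hmin z hz]) (by linarith [hz.1])
    linarith
  have D0 : 0 < D u0 := by
    by_contra hneg
    push Not at hneg
    obtain ⟨x, hx, hxm⟩ := isCompact_Icc.exists_isMinOn (nonempty_Icc.2 l1.le)
      (Dc.mono (Icc_subset_Icc le_rfl l2'.le))
    have hx0 : D x ≤ D u0 := hxm ⟨l1.le, le_rfl⟩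
    -- we may take x > X
    have : ∃ x ∈ Ioc X u0, D x ≤ 0 ∧ ∀ z ∈ Icc X u0, D x ≤ D z := by
      rcases eq_or_lt_of_le hx.1 with h | h
      · refine ⟨u0, ⟨l1, le_rfl⟩, hneg, fun z hz => ?_⟩
        have := hxm hz
        simp only [mem_ofPred_eq] at this
        rw [← h] at this
        linarith
      · exact ⟨x, ⟨h, hx.2⟩, hx0.trans hneg, fun z hz => hxm hz⟩
    obtain ⟨x, hx, hx0, hxm⟩ := this
    have hxI : x ∈ Ioo X Y := ⟨hx.1, hx.2.trans_lt l2'⟩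
    obtain ⟨d, hd, hd'⟩ := Dd x hxI
    refine key1 x d hd (hd' ?_) X hx.1 (fun z hz => hxm z ⟨hz.1.le, hz.2.le.trans hx.2⟩)
    have := AL x hxI hx.2
    nlinarith
  obtain ⟨x, hx, hxm⟩ := isCompact_Icc.exists_isMaxOn (nonempty_Icc.2 l2'.le)
      (Dc.mono (Icc_subset_Icc l1.le le_rfl))
  have hx0 : D u0 ≤ D x := hxm ⟨le_rfl, l2'.le⟩
  have hxY : x < Y := by
    refine lt_of_le_of_ne hx.2 ?_
    rintro rfl
    linarith
  have hxI : x ∈ Ioo X Y := ⟨l1.trans_le hx.1, hxY⟩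
  obtain ⟨d, hd, hd'⟩ := Dd x hxI
  refine key2 x d hd (hd' ?_) Y hxY (fun z hz => hxm ⟨hx.1.trans hz.1.le, hz.2.le⟩)
  have := AR x hxI hx.1
  nlinarith

/-- Nesting of arcs of one orbit. -/
theorem arc_nest {A B : ℝ → ℝ} {u0 : ℝ} {u w : ℝ → ℝ}
    (h : PO A B u0 u w) {s t s' t' : ℝ}
    (a1 : Arc A u w s t) (a2 : Arc A u w s' t') (hs : u s ≤ u s') : u t' ≤ u t := by
  by_contra hcon
  push Not at hcon
  obtain ⟨m1, W1, c1, e1, r1, d1⟩ := arc_fun h a1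
  obtain ⟨m2, W2, c2, e2, r2, d2⟩ := arc_fun h a2
  obtain ⟨l1, l1'⟩ := arc_lt h a1
  obtain ⟨l2, l2'⟩ := arc_lt h a2
  have hlt : u s' < u t := l2.trans l1'
  have W1X : 0 ≤ W1 (u s') := by
    rcases eq_or_lt_of_le hs with hh | hh
    · rw [← hh, e1 s ⟨le_rfl, a1.lt.le⟩, a1.ws]
    · exact (d1 _ ⟨hh, hlt⟩).1.le
  have W2X : W2 (u s') = 0 := by rw [e2 s' ⟨le_rfl, a2.lt.le⟩, a2.ws]
  have W1Y : W1 (u t) = 0 := by rw [e1 t ⟨a1.lt.le, le_rfl⟩, a1.wt]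
  have W2Y : 0 < W2 (u t) := (d2 _ ⟨hlt, hcon⟩).1
  have Dc : ContinuousOn (fun x => W2 x - W1 x) (Icc (u s') (u t)) :=
    (c2.mono (Icc_subset_Icc le_rfl hcon.le)).sub (c1.mono (Icc_subset_Icc hs le_rfl))
  obtain ⟨x, hx, hx0⟩ := intermediate_value_Icc hlt.le Dc
    (show (0:ℝ) ∈ Icc _ _ from ⟨by linarith, by linarith⟩)
  simp only at hx0
  obtain ⟨z, hz, hzx⟩ := r1 x ⟨hs.trans hx.1, hx.2⟩
  obtain ⟨z', hz', hzx'⟩ := r2 x ⟨hx.1, hx.2.trans hcon.le⟩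
  have hw : w z = w z' := by
    rw [← e1 z hz, ← e2 z' hz', hzx, hzx']; linarith
  have hU := h.uniq z z' (hzx.trans hzx'.symm) hw
  rcases lt_or_ge (z' + (t - z)) t' with hc | hc
  · have := hU (t - z)
    rw [show z + (t - z) = t by ring, a1.wt] at this
    rcases eq_or_lt_of_le (show s' ≤ z' + (t - z) by linarith [hz'.1, hz.2]) with hh | hh
    · rw [← hh] at this; linarith [this.1]
    · have h3 := a2.pos _ ⟨hh, hc⟩
      linarith [this.2]
  · have := hU (t' - z')
    rw [show z' + (t' - z') = t' by ring] at this
    have h3 := m1.monotoneOn (show z + (t' - z') ∈ Icc s t from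
      ⟨by linarith [hz.1, hz'.2], by linarith⟩) (show t ∈ Icc s t from ⟨a1.lt.le, le_rfl⟩)
      (by linarith)
    linarith [this.1]

/-- Structure of a closed orbit through an up-crossing point. -/
theorem PO.loop {A B : ℝ → ℝ} {u0 : ℝ} {u w : ℝ → ℝ}
    (h : PO A B u0 u w) {s : ℝ} (hs : w s = 0) (hA : 0 < A (u s)) :
    ∃ t p, Arc A u w s t ∧ Arc (fun x => - A (-x)) (fun z => - u z) (fun z => - w z) t p ∧
      u p = u s := by
  have hwc : Continuous w := continuous_iff_continuousAt.2 fun z => (h.dw z).continuousAt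
  have huc : Continuous u := continuous_iff_continuousAt.2 fun z => (h.du z).continuousAt
  obtain ⟨Z, hZ, hp⟩ := h.per
  have hper : Function.Periodic (fun z => (u z, w z)) Z := fun z => by
    simp only [(hp z).1, (hp z).2]
  -- extreme points
  obtain ⟨za, -, hza'⟩ := isCompact_Icc.exists_isMinOn (nonempty_Icc.2 hZ.le) (huc.continuousOn (s := Icc 0 Z))
  obtain ⟨zb, -, hzb'⟩ := isCompact_Icc.exists_isMaxOn (nonempty_Icc.2 hZ.le) (huc.continuousOn (s := Icc 0 Z))
  have hred : ∀ z, ∃ y ∈ Icc 0 Z, u z = u y := fun z => by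
    obtain ⟨y, hy, hyz⟩ := hper.exists_mem_Ico hZ z 0
    rw [zero_add] at hy
    exact ⟨y, Ico_subset_Icc_self hy, congrArg Prod.fst hyz⟩
  have hza : ∀ z, u za ≤ u z := fun z => by
    obtain ⟨y, hy, hyz⟩ := hred z
    rw [hyz]; exact hza' hy
  have hzb : ∀ z, u z ≤ u zb := fun z => by
    obtain ⟨y, hy, hyz⟩ := hred z
    rw [hyz]; exact hzb' hy
  have wa : w za = 0 := by
    have : IsLocalMin u za := Filter.Eventually.of_forall hza
    exact this.hasDerivAt_eq_zero (h.du za)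
  have wb : w zb = 0 := by
    have : IsLocalMax u zb := Filter.Eventually.of_forall hzb
    exact this.hasDerivAt_eq_zero (h.du zb)
  obtain ⟨t0, at0⟩ := h.exists_arc hs hA
  have hl := arc_lt h at0
  have Aa : 0 < A (u za) :=
    lt_of_le_of_ne (h.sepL za ((hza s).trans hl.1.le)) (h.nd za wa).symm
  have Ab : A (u zb) < 0 :=
    lt_of_le_of_ne (h.sepR zb (hl.2.le.trans (hzb t0))) (h.nd zb wb)
  obtain ⟨t, hat⟩ := h.exists_arc wa Aa
  have hutb : u t = u zb := by
    obtain ⟨sb, hsb⟩ := h.exists_arc_back wb Ab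
    exact le_antisymm (hzb t) (arc_nest h hat hsb (hza sb))
  obtain ⟨p, hap⟩ := h.refl.exists_arc (s := t) (by simp [hat.wt]) (by simpa using hat.At)
  have hup : u p = u za := by
    obtain ⟨sb, hsb⟩ := h.refl.exists_arc_back (t := za) (by simp [wa]) (by simpa using Aa)
    have := arc_nest h.refl hap hsb (by simpa [hutb] using hzb sb)
    simp only [neg_le_neg_iff] at this
    exact le_antisymm this (hza p)
  have wp : w p = 0 := by simpa using hap.wt
  have hper2 : Function.Periodic (fun z => (u z, w z)) (p - za) := fun z => by
    have := h.uniq p za hup (wp.trans wa.symm) (z - za)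
    rw [show p + (z - za) = z + (p - za) by ring, show za + (z - za) = z by ring] at this
    simp only [this.1, this.2]
  obtain ⟨y, hy, hyz⟩ := hper2.exists_mem_Ico (by linarith [hat.lt, hap.lt]) s za
  rw [show za + (p - za) = p by ring] at hy
  simp only [Prod.mk.injEq] at hyz
  have hya : y = za := by
    by_contra hne
    have h1 : za < y := lt_of_le_of_ne hy.1 (Ne.symm hne)
    rcases lt_trichotomy y t with h2 | h2 | h2
    · have := hat.pos y ⟨h1, h2⟩
      linarith [hyz.2]
    · have := hat.At
      rw [← h2, ← hyz.1] at this
      linarith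
    · have := hap.pos y ⟨h2, hy.2⟩
      linarith [hyz.2]
  rw [hya] at hyz
  have hU := h.uniq s za hyz.1 hyz.2
  have hU' : ∀ z, u (z + (s - za)) = u z ∧ w (z + (s - za)) = w z := fun z => by
    have := hU (z - za)
    rw [show s + (z - za) = z + (s - za) by ring, show za + (z - za) = z by ring] at this
    exact this
  refine ⟨t + (s - za), p + (s - za), ?_, ?_, ?_⟩
  · refine ⟨by linarith [hat.lt], fun z hz => ?_, hs, ?_, hA, ?_⟩
    · have := hU' (z - (s - za))
      rw [sub_add_cancel] at this
      rw [this.2]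
      exact hat.pos _ ⟨by linarith [hz.1], by linarith [hz.2]⟩
    · rw [(hU' t).2, hat.wt]
    · rw [(hU' t).1]; exact hat.At
  · refine ⟨by linarith [hap.lt], fun z hz => ?_, ?_, ?_, ?_, ?_⟩
    · have := hU' (z - (s - za))
      rw [sub_add_cancel] at this
      rw [this.2]
      exact hap.pos _ ⟨by linarith [hz.1], by linarith [hz.2]⟩
    · rw [(hU' t).2]; exact hap.ws
    · rw [(hU' p).2]; exact hap.wt
    · rw [(hU' t).1]; exact hap.As
    · rw [(hU' p).1]; exact hap.At
  · rw [(hU' p).1, hup, hyz.1]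

theorem PO.no_two_pos {A B1 B2 : ℝ → ℝ} {u0 : ℝ} {u1 w1 u2 w2 : ℝ → ℝ}
    (h1 : PO A B1 u0 u1 w1) (h2 : PO A B2 u0 u2 w2)
    (hB : ∀ z, B1 (u1 z) < B2 (u1 z)) (hu : u1 0 = u2 0) (hw1 : w1 0 = 0) (hw2 : w2 0 = 0)
    (hA : 0 < A (u1 0)) : False := by
  obtain ⟨t1, p1, a1, b1, e1⟩ := h1.loop hw1 hA
  obtain ⟨t2, p2, a2, b2, e2⟩ := h2.loop hw2 (hu ▸ hA)
  have := arc_compare h1 h2 a1 a2 hB hu.ge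
  have h3 := arc_compare h1.refl h2.refl b1 b2 (fun z => by simpa using hB z)
    (by simpa using this.le)
  simp only [neg_lt_neg_iff] at h3
  linarith

theorem PO.no_two {A B1 B2 : ℝ → ℝ} {u0 : ℝ} {u1 w1 u2 w2 : ℝ → ℝ}
    (h1 : PO A B1 u0 u1 w1) (h2 : PO A B2 u0 u2 w2)
    (hB : ∀ z, B1 (u1 z) < B2 (u1 z)) (hu : u1 0 = u2 0) (hw1 : w1 0 = 0) (hw2 : w2 0 = 0) :
    False := by
  rcases lt_or_gt_of_ne (h1.nd 0 hw1) with hA | hA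
  · exact h1.refl.no_two_pos h2.refl (fun z => by simpa using hB z) (by simpa using hu)
      (by simpa using hw1) (by simpa using hw2) (by simpa using hA)
  · exact h1.no_two_pos h2 hB hu hw1 hw2 hA

theorem strictLocal_aux {u w : ℝ → ℝ} {z0 d : ℝ} (du : ∀ z, HasDerivAt u (w z) z)
    (hd : HasDerivAt w d z0) (hw : w z0 = 0) (hneg : d < 0) : ∃ y, u y < u z0 := by
  have huc : Continuous u := continuous_iff_continuousAt.2 fun z => (du z).continuousAt
  have hev : ∀ᶠ z in nhdsWithin z0 (Ioi z0), w z < 0 := by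
    have h1 := (hasDerivAt_iff_tendsto_slope.1 hd).eventually (gt_mem_nhds hneg)
    have h2 : nhdsWithin z0 (Ioi z0) ≤ nhdsWithin z0 {z0}ᶜ :=
      nhdsWithin_mono _ (fun x hx => ne_of_gt hx)
    filter_upwards [h2 h1, self_mem_nhdsWithin] with z hz hz'
    rw [slope_def_field, hw, sub_zero] at hz
    have hz'' : 0 < z - z0 := sub_pos.2 hz'
    by_contra hcon
    exact absurd hz (not_lt.2 (div_nonneg (not_lt.1 hcon) hz''.le))
  obtain ⟨e, he, hlt⟩ := (mem_nhdsGT_iff_exists_Ioo_subset).1 hev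
  have he' : z0 < e := he
  have : StrictAntiOn u (Icc z0 e) := by
    refine strictAntiOn_of_deriv_neg (convex_Icc z0 e) huc.continuousOn ?_
    intro x hx
    rw [interior_Icc] at hx
    rw [(du x).deriv]; exact hlt hx
  exact ⟨e, this ⟨le_rfl, he'.le⟩ ⟨he'.le, le_rfl⟩ he'⟩

theorem contDiffOn_one_of_deriv {g g' : ℝ → ℝ} (h : ∀ x ∈ Ioi (0:ℝ), HasDerivAt g (g' x) x)
    (hc : ContinuousOn g' (Ioi 0)) : ContDiffOn ℝ 1 g (Ioi 0) := by
  rw [contDiffOn_one_iff_derivWithin isOpen_Ioi.uniqueDiffOn]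
  refine ⟨fun x hx => (h x hx).differentiableAt.differentiableWithinAt, hc.congr fun x hx => ?_⟩
  rw [derivWithin_of_isOpen isOpen_Ioi hx, (h x hx).deriv]

theorem ode_uniq {A B : ℝ → ℝ} (hA : ContDiffOn ℝ 1 A (Ioi 0)) (hB : ContDiffOn ℝ 1 B (Ioi 0))
    {a b M : ℝ} (ha : 0 < a) {u w u' w' : ℝ → ℝ}
    (du : ∀ z, HasDerivAt u (w z) z)
    (dw : ∀ z, HasDerivAt w (A (u z) + B (u z) * w z) z)
    (du' : ∀ z, HasDerivAt u' (w' z) z)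
    (dw' : ∀ z, HasDerivAt w' (A (u' z) + B (u' z) * w' z) z)
    (hu : ∀ z, u z ∈ Icc a b) (hu' : ∀ z, u' z ∈ Icc a b)
    (hw : ∀ z, w z ∈ Icc (-M) M) (hw' : ∀ z, w' z ∈ Icc (-M) M)
    (h0 : u 0 = u' 0) (h1 : w 0 = w' 0) : ∀ z, u z = u' z ∧ w z = w' z := by
  have hsub : Icc a b ×ˢ Icc (-M) M ⊆ (Ioi (0:ℝ)) ×ˢ (univ : Set ℝ) := by
    rintro ⟨x, y⟩ ⟨hx, _⟩
    exact ⟨ha.trans_le hx.1, trivial⟩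
  have hfst : MapsTo (Prod.fst : ℝ × ℝ → ℝ) (Icc a b ×ˢ Icc (-M) M) (Ioi 0) :=
    fun x hx => (hsub hx).1
  have hv : ContDiffOn ℝ 1 (fun x : ℝ × ℝ => (x.2, A x.1 + B x.1 * x.2))
      (Icc a b ×ˢ Icc (-M) M) := by
    refine contDiffOn_snd.prodMk ?_
    exact (hA.comp contDiffOn_fst hfst).add ((hB.comp contDiffOn_fst hfst).mul contDiffOn_snd)
  obtain ⟨C, hC⟩ := hv.exists_lipschitzOnWith one_ne_zero ((convex_Icc a b).prod (convex_Icc _ _))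
    (isCompact_Icc.prod isCompact_Icc)
  have := ODE_solution_unique_univ (v := fun _ x => (x.2, A x.1 + B x.1 * x.2))
    (s := fun _ => Icc a b ×ˢ Icc (-M) M) (K := C) (f := fun z => (u z, w z))
    (g := fun z => (u' z, w' z)) (t₀ := 0) (fun _ => hC)
    (fun t => ⟨(du t).prodMk (dw t), hu t, hw t⟩)
    (fun t => ⟨(du' t).prodMk (dw' t), hu' t, hw' t⟩) (by simp only [h0, h1])
  intro z
  have := congrFun this z
  simpa using this

/-- Basic facts on nonconstant periodic solutions. -/
theorem per_facts {A B : ℝ → ℝ} (hA : ContDiffOn ℝ 1 A (Ioi 0)) (hB : ContDiffOn ℝ 1 B (Ioi 0))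
    {u w : ℝ → ℝ}
    (du : ∀ z, HasDerivAt u (w z) z)
    (dw : ∀ z, HasDerivAt w (A (u z) + B (u z) * w z) z)
    (hpos : ∀ z, 0 < u z) (hper : IsPeriodicSol u w) (hnc : Nonconst u w) :
    (∀ s t, u s = u t → w s = w t → ∀ z, u (s + z) = u (t + z) ∧ w (s + z) = w (t + z)) ∧
    (∀ z, w z = 0 → A (u z) ≠ 0) ∧
    ∃ a b, 0 < a ∧ a < b ∧ (∀ z, u z ∈ Icc a b) ∧ 0 < A a ∧ A b < 0 := by
  have hwc : Continuous w := continuous_iff_continuousAt.2 fun z => (dw z).continuousAt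
  have huc : Continuous u := continuous_iff_continuousAt.2 fun z => (du z).continuousAt
  obtain ⟨Z, hZ, hp⟩ := hper
  have hper : Function.Periodic (fun z => (u z, w z)) Z := fun z => by
    simp only [(hp z).1, (hp z).2]
  obtain ⟨za, -, hza'⟩ := isCompact_Icc.exists_isMinOn (nonempty_Icc.2 hZ.le)
    (huc.continuousOn (s := Icc 0 Z))
  obtain ⟨zb, -, hzb'⟩ := isCompact_Icc.exists_isMaxOn (nonempty_Icc.2 hZ.le)
    (huc.continuousOn (s := Icc 0 Z))
  obtain ⟨zm, -, hzm'⟩ := isCompact_Icc.exists_isMaxOn (nonempty_Icc.2 hZ.le)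
    (hwc.abs.continuousOn (s := Icc 0 Z))
  have hred : ∀ z, ∃ y ∈ Icc 0 Z, u z = u y ∧ w z = w y := fun z => by
    obtain ⟨y, hy, hyz⟩ := hper.exists_mem_Ico hZ z 0
    rw [zero_add] at hy
    exact ⟨y, Ico_subset_Icc_self hy, congrArg Prod.fst hyz, congrArg Prod.snd hyz⟩
  have hza : ∀ z, u za ≤ u z := fun z => by
    obtain ⟨y, hy, hyz, _⟩ := hred z
    rw [hyz]; exact hza' hy
  have hzb : ∀ z, u z ≤ u zb := fun z => by
    obtain ⟨y, hy, hyz, _⟩ := hred z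
    rw [hyz]; exact hzb' hy
  have hzm : ∀ z, w z ∈ Icc (-|w zm|) |w zm| := fun z => by
    obtain ⟨y, hy, _, hyz⟩ := hred z
    rw [hyz]; exact abs_le.1 (hzm' hy)
  have hshift : ∀ s z, HasDerivAt (fun z => u (s + z)) (w (s + z)) z := fun s z => by
    have := (du (s + z)).comp_const_add s z
    exact this
  have hshift' : ∀ s z, HasDerivAt (fun z => w (s + z))
      (A (u (s + z)) + B (u (s + z)) * w (s + z)) z := fun s z => by
    have := (dw (s + z)).comp_const_add s z
    exact this
  have huniq : ∀ s t, u s = u t → w s = w t → ∀ z, u (s + z) = u (t + z) ∧ w (s + z) = w (t + z) := by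
    intro s t h1 h2
    exact ode_uniq hA hB (hpos za) (hshift s) (hshift' s) (hshift t) (hshift' t)
      (fun z => ⟨hza _, hzb _⟩) (fun z => ⟨hza _, hzb _⟩) (fun z => hzm _) (fun z => hzm _)
      (by simpa using h1) (by simpa using h2)
  have hnd : ∀ z, w z = 0 → A (u z) ≠ 0 := by
    intro z0 hz0 hA0
    have hconst : ∀ z, u (z0 + z) = u z0 ∧ w (z0 + z) = 0 :=
      ode_uniq hA hB (hpos za) (u' := fun _ => u z0) (w' := fun _ => 0) (hshift z0) (hshift' z0)
        (fun z => hasDerivAt_const z _)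
        (fun z => by simpa [hA0] using hasDerivAt_const z (0:ℝ))
      (fun z => ⟨hza _, hzb _⟩) (fun z => ⟨hza _, hzb _⟩) (fun z => hzm _)
      (fun z => ⟨by simp, by simp⟩)
      (by simp) (by simpa using hz0)
    obtain ⟨z, hz⟩ := hnc
    have h1 := hconst (z - z0)
    have h2 := hconst (0 - z0)
    rw [add_sub_cancel] at h1 h2
    rw [h1.1, h1.2, h2.1, h2.2] at hz
    simp at hz
  have wa : w za = 0 := by
    have : IsLocalMin u za := Filter.Eventually.of_forall hza
    exact this.hasDerivAt_eq_zero (du za)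
  have wb : w zb = 0 := by
    have : IsLocalMax u zb := Filter.Eventually.of_forall hzb
    exact this.hasDerivAt_eq_zero (du zb)
  have hconst : u za = u zb → False := by
    intro hab
    have hc : ∀ z, u z = u za := fun z => le_antisymm (hab ▸ hzb z) (hza z)
    have hw0 : ∀ z, w z = 0 := fun z => by
      have : IsLocalMin u z := Filter.Eventually.of_forall (fun y => by rw [hc z]; exact hza y)
      exact this.hasDerivAt_eq_zero (du z)
    obtain ⟨z, hz⟩ := hnc
    rw [hc z, hc 0, hw0 z, hw0 0] at hz
    simp at hz
  refine ⟨huniq, hnd, u za, u zb, hpos za, lt_of_le_of_ne (hza zb) hconst,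
    fun z => ⟨hza z, hzb z⟩, ?_, ?_⟩
  · by_contra hcon
    have hneg : A (u za) < 0 := lt_of_le_of_ne (not_lt.1 hcon) (hnd za wa)
    have hd : HasDerivAt w (A (u za)) za := by simpa [wa] using dw za
    obtain ⟨y, hy⟩ := strictLocal_aux du hd wa hneg
    exact absurd (hza y) (not_le.2 hy)
  · by_contra hcon
    have hneg : 0 < A (u zb) := lt_of_le_of_ne (not_lt.1 hcon) (hnd zb wb).symm
    have hd : HasDerivAt w (A (u zb)) zb := by simpa [wb] using dw zb
    obtain ⟨y, hy⟩ := strictLocal_aux (u := fun z => - u z) (w := fun z => - w z)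
      (fun z => (du z).neg) hd.neg (by simp [wb]) (by simpa using hneg)
    exact absurd (hzb y) (by linarith)

theorem Vp_mono {V V' V'' : ℝ → ℝ} {UM : ℝ} (h : A1 V V' V'' UM) :
    StrictMonoOn V' (Icc 0 UM) ∧ StrictAntiOn V' (Ici UM) := by
  obtain ⟨_, hc, hd, _, _, _, _, hUM, hmax, hz⟩ := h
  constructor
  · have hc' : ContinuousOn V' (Icc 0 UM) := hc.mono Icc_subset_Ici_self
    rcases hasDerivWithinAt_forall_lt_or_forall_gt_of_forall_ne (convex_Ioo 0 UM)
      (fun x hx => (hd x hx.1).hasDerivWithinAt) (m := 0)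
      (fun x hx h0 => hx.2.ne ((hz x hx.1).1 h0)) with hs | hs
    · exfalso
      have : StrictAntiOn V' (Icc 0 UM) := by
        refine strictAntiOn_of_deriv_neg (convex_Icc _ _) hc' fun x hx => ?_
        rw [interior_Icc] at hx
        rw [(hd x hx.1).deriv]; exact hs x hx
      have h1 := this (show UM / 2 ∈ Icc 0 UM from ⟨by linarith, by linarith⟩)
        (show UM ∈ Icc 0 UM from ⟨hUM.le, le_rfl⟩) (by linarith)
      linarith [hmax (UM / 2) (by linarith)]
    · refine strictMonoOn_of_deriv_pos (convex_Icc _ _) hc' fun x hx => ?_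
      rw [interior_Icc] at hx
      rw [(hd x hx.1).deriv]; exact hs x hx
  · have hc' : ContinuousOn V' (Ici UM) := hc.mono (Ici_subset_Ici.2 hUM.le)
    rcases hasDerivWithinAt_forall_lt_or_forall_gt_of_forall_ne (convex_Ioi UM)
      (fun x hx => (hd x (hUM.trans hx)).hasDerivWithinAt) (m := 0)
      (fun x hx h0 => (ne_of_gt hx) ((hz x (hUM.trans hx)).1 h0)) with hs | hs
    · refine strictAntiOn_of_deriv_neg (convex_Ici _) hc' fun x hx => ?_
      rw [interior_Ici] at hx
      rw [(hd x (hUM.trans hx)).deriv]; exact hs x hx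
    · exfalso
      have : StrictMonoOn V' (Ici UM) := by
        refine strictMonoOn_of_deriv_pos (convex_Ici _) hc' fun x hx => ?_
        rw [interior_Ici] at hx
        rw [(hd x (hUM.trans hx)).deriv]; exact hs x hx
      have h1 := this (show UM ∈ Ici UM from self_mem_Ici)
        (show UM + 1 ∈ Ici UM from by simp) (by linarith)
      linarith [hmax (UM + 1) (by linarith)]

theorem f_hasDeriv {V V' V'' : ℝ → ℝ} {UM : ℝ} (h : A1 V V' V'' UM) (K c : ℝ) :
    ∀ x, 0 < x → HasDerivAt (fTV V K c) (fdTV V' K x) x := by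
  intro x hx
  have hV : HasDerivAt V (V' x) x := (h.1 x hx.le).hasDerivAt (Ici_mem_nhds hx)
  have := ((((hasDerivAt_id x).const_mul K).sub hV).sub_const c).div_const K
  refine this.congr_deriv ?_
  simp [fdTV]

theorem f_cont {V V' V'' : ℝ → ℝ} {UM : ℝ} (h : A1 V V' V'' UM) (K c : ℝ) :
    ContinuousOn (fTV V K c) (Ici 0) := by
  have hV : ContinuousOn V (Ici 0) := fun x hx => (h.1 x hx).continuousWithinAt
  unfold fTV
  exact (((continuousOn_const.mul continuousOn_id).sub hV).sub continuousOn_const).div_const K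

theorem f_shape {V V' V'' : ℝ → ℝ} {UM K : ℝ} {uMx umx : ℝ → ℝ} (h : A1 V V' V'' UM)
    (c : ℝ) (hK : K ≠ 0)
    (huMx : UMaxHyp V' UM uMx) (humx : UMinHyp V' UM umx) :
    ∃ p m, 0 ≤ p ∧ p ≤ m ∧ StrictMonoOn (fTV V K c) (Icc 0 p) ∧
      StrictAntiOn (fTV V K c) (Icc p m) ∧ StrictMonoOn (fTV V K c) (Ici m) ∧
      (m = 0 ∨ (0 < K ∧ K < V' UM ∧ m = umx K ∧
        ((V' 0 < K ∧ p = uMx K) ∨ (K ≤ V' 0 ∧ p = 0)))) := by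
  obtain ⟨vm, va⟩ := Vp_mono h
  have hfc := f_cont h K c
  have hfd := f_hasDeriv h K c
  have hUM : 0 < UM := h.2.2.2.2.2.2.2.1
  have hpos : ∀ u, 0 < u → 0 < V' u := h.2.2.2.2.1
  have hmax : ∀ u, 0 < u → V' u ≤ V' UM := h.2.2.2.2.2.2.2.2.1
  have hV0 : V' 0 < V' UM := vm ⟨le_rfl, hUM.le⟩ ⟨hUM.le, le_rfl⟩ hUM
  rcases lt_or_gt_of_ne hK with hK | hK
  · refine ⟨0, 0, le_rfl, le_rfl, by simp, by simp, ?_, Or.inl rfl⟩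
    refine strictMonoOn_of_deriv_pos (convex_Ici _) hfc fun x hx => ?_
    rw [interior_Ici] at hx
    rw [(hfd x hx).deriv]
    exact div_pos_of_neg_of_neg (by linarith [hpos x hx]) hK
  rcases le_or_gt (V' UM) K with hKM | hKM
  · refine ⟨0, 0, le_rfl, le_rfl, by simp, by simp, ?_, Or.inl rfl⟩
    rw [← Icc_union_Ici_eq_Ici hUM.le]
    refine StrictMonoOn.union (c := UM) ?_ ?_ (isGreatest_Icc hUM.le) isLeast_Ici
    · refine strictMonoOn_of_deriv_pos (convex_Icc _ _) (hfc.mono Icc_subset_Ici_self) fun x hx => ?_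
      rw [interior_Icc] at hx
      rw [(hfd x hx.1).deriv]
      have := vm ⟨hx.1.le, hx.2.le⟩ ⟨hUM.le, le_rfl⟩ hx.2
      exact div_pos (by linarith) hK
    · refine strictMonoOn_of_deriv_pos (convex_Ici _) (hfc.mono (Ici_subset_Ici.2 hUM.le))
        fun x hx => ?_
      rw [interior_Ici] at hx
      rw [(hfd x (hUM.trans hx)).deriv]
      have := va (show UM ∈ Ici UM from self_mem_Ici) (Ioi_subset_Ici_self hx) hx
      exact div_pos (by linarith) hK
  obtain ⟨hm1, hm2⟩ := humx K hK hKM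
  have hmono : StrictMonoOn (fTV V K c) (Ici (umx K)) := by
    refine strictMonoOn_of_deriv_pos (convex_Ici _) (hfc.mono (Ici_subset_Ici.2 (hUM.trans hm1).le))
        fun x hx => ?_
    rw [interior_Ici] at hx
    rw [(hfd x ((hUM.trans hm1).trans hx)).deriv]
    have hx' : umx K < x := hx
    have := va (show umx K ∈ Ici UM from hm1.le) (show x ∈ Ici UM from (hm1.trans hx').le) hx
    exact div_pos (by linarith) hK
  have hanti : ∀ p, 0 ≤ p → p < UM → K ≤ V' p → StrictAntiOn (fTV V K c) (Icc p (umx K)) := by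
    intro p hp hpU hKp
    refine strictAntiOn_of_deriv_neg (convex_Icc _ _)
      (hfc.mono (fun x hx => hp.trans hx.1)) fun x hx => ?_
    rw [interior_Icc] at hx
    have hx0 : 0 < x := hp.trans_lt hx.1
    rw [(hfd x hx0).deriv]
    have : K < V' x := by
      rcases le_or_gt x UM with hxU | hxU
      · exact hKp.trans_lt (vm ⟨hp, hpU.le⟩ ⟨hx0.le, hxU⟩ hx.1)
      · rw [← hm2]
        exact va (show x ∈ Ici UM from hxU.le) (show umx K ∈ Ici UM from hm1.le) hx.2
    exact div_neg_of_neg_of_pos (by linarith) hK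
  rcases lt_or_ge (V' 0) K with hK0 | hK0
  · obtain ⟨⟨hp0, hpU⟩, hpK⟩ := huMx K hK0 hKM
    refine ⟨uMx K, umx K, hp0.le, (hpU.trans hm1).le, ?_, hanti _ hp0.le hpU hpK.ge, hmono,
      Or.inr ⟨hK, hKM, rfl, Or.inl ⟨hK0, rfl⟩⟩⟩
    refine strictMonoOn_of_deriv_pos (convex_Icc _ _) (hfc.mono Icc_subset_Ici_self) fun x hx => ?_
    rw [interior_Icc] at hx
    rw [(hfd x hx.1).deriv]
    have := vm ⟨hx.1.le, (hx.2.trans hpU).le⟩ ⟨hp0.le, hpU.le⟩ hx.2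
    exact div_pos (by linarith) hK
  · exact ⟨0, umx K, le_rfl, (hUM.trans hm1).le, by simp, hanti 0 le_rfl hUM hK0, hmono,
      Or.inr ⟨hK, hKM, rfl, Or.inr ⟨hK0, rfl⟩⟩⟩

/-- The sign pattern `f a > 0 > f b` with `a < b` forces `(K,c) ∈ D₁ ∪ D₂`. -/
theorem mem_D {V V' V'' : ℝ → ℝ} {UM K c K₁ : ℝ} {uMx umx : ℝ → ℝ} (h : A1 V V' V'' UM)
    (hK : K ≠ 0) (huMx : UMaxHyp V' UM uMx) (humx : UMinHyp V' UM umx)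
    (hK1 : K1Hyp V V' UM umx K₁) {a b : ℝ} (ha : 0 < a) (hab : a < b)
    (fa : 0 < fTV V K c a) (fb : fTV V K c b < 0) :
    (K, c) ∈ D1 V V' UM uMx umx ∪ D2 V V' umx K₁ := by
  obtain ⟨p, m, hp, hpm, m1, a1, m2, hcase⟩ := f_shape h c hK huMx humx
  have ham : a < m := by
    by_contra hc
    have := m2 (show a ∈ Ici m from not_lt.1 hc) (show b ∈ Ici m from (not_lt.1 hc).trans hab.le) hab
    linarith
  have hpb : p < b := by
    by_contra hc
    have := m1 ⟨ha.le, hab.le.trans (not_lt.1 hc)⟩ ⟨(ha.trans hab).le, not_lt.1 hc⟩ hab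
    linarith
  have fm : fTV V K c m < 0 := by
    rcases le_or_gt m b with hb | hb
    · exact (m2.monotoneOn (show m ∈ Ici m from self_mem_Ici) hb hb).trans_lt fb
    · exact (a1 ⟨hpb.le, hb.le⟩ ⟨hpm, le_rfl⟩ hb).trans fb
  have fp : 0 < fTV V K c p := by
    rcases le_or_gt a p with hb | hb
    · exact fa.trans_le (m1.monotoneOn ⟨ha.le, hb⟩ ⟨hp, le_rfl⟩ hb)
    · exact fa.trans (a1 ⟨le_rfl, hpm⟩ ⟨hb.le, ham.le⟩ hb)
  rcases hcase with hm0 | ⟨hK0, hKM, rfl, hcase⟩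
  · linarith
  have hm' : cmf V umx K < c := by
    have : K * umx K - V (umx K) - c < 0 := by
      by_contra hc
      exact absurd fm (not_lt.2 (div_nonneg (not_lt.1 hc) hK0.le))
    unfold cmf; linarith
  have hp' : c < K * p - V p := by
    have : 0 < K * p - V p - c := by
      by_contra hc
      exact absurd fp (not_lt.2 (div_nonpos_of_nonpos_of_nonneg (not_lt.1 hc) hK0.le))
    linarith
  obtain ⟨k1, k2, k3, k4, k5⟩ := hK1
  have hKK1 : c ≤ c0v V → K < K₁ := by
    intro hc
    rcases lt_trichotomy K K₁ with hh | hh | hh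
    · exact hh
    · rw [hh, k4] at hm'; linarith
    · have := k5 K hh hKM; linarith
  rcases lt_trichotomy c (c0v V) with hc | hc | hc
  · exact Or.inr (Or.inr ⟨hK0, hKK1 hc.le, hm', hc⟩)
  · rcases hcase with ⟨hV0, rfl⟩ | ⟨hV0, rfl⟩
    · exact Or.inr (Or.inl ⟨hV0, hKK1 hc.le, hc⟩)
    · exfalso
      unfold c0v at hc; linarith
  · rcases hcase with ⟨hV0, rfl⟩ | ⟨hV0, rfl⟩
    · exact Or.inl ⟨hV0, hKM, max_lt hc hm', hp'⟩
    · exfalso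
      unfold c0v at hc; linarith

/-- Separation point. -/
theorem exists_sep {V V' V'' : ℝ → ℝ} {UM K c : ℝ} {uMx umx : ℝ → ℝ} (h : A1 V V' V'' UM)
    (hK : K ≠ 0) (huMx : UMaxHyp V' UM uMx) (humx : UMinHyp V' UM umx)
    {a b : ℝ} (ha : 0 < a) (hab : a < b)
    (fa : 0 < fTV V K c a) (fb : fTV V K c b < 0) :
    ∃ u0, (∀ x ∈ Icc a b, x ≤ u0 → 0 ≤ fTV V K c x) ∧
      (∀ x ∈ Icc a b, u0 ≤ x → fTV V K c x ≤ 0) := by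
  obtain ⟨p, m, hp, hpm, m1, a1, m2, -⟩ := f_shape h c hK huMx humx
  have hfc := (f_cont h K c).mono (show Icc a b ⊆ Ici 0 from fun x hx => ha.le.trans hx.1)
  set f := fTV V K c with hf
  have pat : ∀ x y, a < x → x < y → y < b → f x < f a → f x < f y → f b < f y → False := by
    intro x y h1 h2 h3 h4 h5 h6
    have hpx : p < x := by
      by_contra hc
      have := m1 ⟨ha.le, h1.le.trans (not_lt.1 hc)⟩ ⟨(ha.trans h1).le, not_lt.1 hc⟩ h1
      linarith
    have hmy : m < y := by
      by_contra hc
      have := a1 ⟨hpx.le, h2.le.trans (not_lt.1 hc)⟩ ⟨(hpx.trans h2).le, not_lt.1 hc⟩ h2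
      linarith
    have := m2 hmy.le (hmy.trans h3).le h3
    linarith
  obtain ⟨u0, hu0, hfu0⟩ := intermediate_value_Icc' hab.le hfc
    (show (0:ℝ) ∈ Icc (f b) (f a) from ⟨fb.le, fa.le⟩)
  have hau : a < u0 := lt_of_le_of_ne hu0.1 (by rintro rfl; linarith)
  have hub : u0 < b := lt_of_le_of_ne hu0.2 (by rintro rfl; linarith)
  refine ⟨u0, fun x hx hxu => ?_, fun x hx hxu => ?_⟩
  · by_contra hc
    push Not at hc
    have h1 : a < x := lt_of_le_of_ne hx.1 (by rintro rfl; linarith)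
    have h2 : x < u0 := lt_of_le_of_ne hxu (by rintro rfl; linarith)
    exact pat x u0 h1 h2 hub (by linarith) (by linarith) (by linarith)
  · by_contra hc
    push Not at hc
    have h1 : x < b := lt_of_le_of_ne hx.2 (by rintro rfl; linarith)
    have h2 : u0 < x := lt_of_le_of_ne hxu (by rintro rfl; linarith)
    exact pat u0 x hau h2 h1 (by linarith) (by linarith) (by linarith)

theorem coef_smooth {V V' V'' κ : ℝ → ℝ} {UM τ : ℝ} (h : A1 V V' V'' UM) (h2 : A2 κ)
    (hτ : 0 < τ) (K c μ : ℝ) :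
    ContDiffOn ℝ 1 (fun x => g1TV κ τ x * fTV V K c x) (Ioi 0) ∧
    ContDiffOn ℝ 1 (fun x => g2TV κ τ x * hTV V' K μ x) (Ioi 0) := by
  have hinv : ContDiffOn ℝ 1 (fun x : ℝ => 1 / x) (Ioi 0) :=
    contDiffOn_const.div contDiffOn_id (fun x hx => ne_of_gt hx)
  have hκ : ContDiffOn ℝ 1 (fun x => κ (1 / x)) (Ioi 0) :=
    h2.1.comp hinv (fun x hx => mem_Ioi.2 (one_div_pos.2 (mem_Ioi.1 hx)))
  have hκp : ∀ x ∈ Ioi (0:ℝ), 0 < κ (1 / x) := fun x hx => h2.2 _ (one_div_pos.2 hx)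
  have hg1 : ContDiffOn ℝ 1 (g1TV κ τ) (Ioi 0) :=
    contDiffOn_const.div (contDiffOn_const.mul hκ) (fun x hx => (mul_pos hτ (hκp x hx)).ne')
  have hg2 : ContDiffOn ℝ 1 (g2TV κ τ) (Ioi 0) :=
    contDiffOn_id.div (contDiffOn_const.mul hκ)
      (fun x hx => (mul_pos (mul_pos two_pos hτ) (hκp x hx)).ne')
  have hV'c : ContinuousOn V' (Ioi 0) := h.2.1.mono Ioi_subset_Ici_self
  have hf : ContDiffOn ℝ 1 (fTV V K c) (Ioi 0) :=
    contDiffOn_one_of_deriv (fun x hx => f_hasDeriv h K c x hx)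
      ((continuousOn_const.sub hV'c).div_const K)
  have hV' : ContDiffOn ℝ 1 V' (Ioi 0) := contDiffOn_one_of_deriv h.2.2.1 h.2.2.2.1
  have hh : ContDiffOn ℝ 1 (hTV V' K μ) (Ioi 0) :=
    ((contDiffOn_const.sub hV').div_const K).add contDiffOn_const
  exact ⟨hg1.mul hf, hg2.mul hh⟩

theorem tv_facts {V V' V'' κ : ℝ → ℝ} {UM τ K c μ : ℝ} (h : A1 V V' V'' UM) (h2 : A2 κ)
    (hτ : 0 < τ) {u w : ℝ → ℝ} (hs : IsTVSol V V' κ τ K c μ u w) (hpos : ∀ z, 0 < u z)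
    (hper : IsPeriodicSol u w) (hnc : Nonconst u w) :
    (∀ s t, u s = u t → w s = w t → ∀ z, u (s + z) = u (t + z) ∧ w (s + z) = w (t + z)) ∧
    (∀ z, w z = 0 → g1TV κ τ (u z) * fTV V K c (u z) ≠ 0) ∧
    ∃ a b, 0 < a ∧ a < b ∧ (∀ z, u z ∈ Icc a b) ∧ 0 < fTV V K c a ∧ fTV V K c b < 0 := by
  obtain ⟨s1, s2⟩ := coef_smooth h h2 hτ K c μ
  obtain ⟨h3, h4, a, b, ha, hab, hu, fa, fb⟩ := per_facts s1 s2 hs.1 hs.2 hpos hper hnc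
  have g1p : ∀ x, 0 < x → 0 < g1TV κ τ x := fun x hx =>
    one_div_pos.2 (mul_pos hτ (h2.2 _ (one_div_pos.2 hx)))
  refine ⟨h3, h4, a, b, ha, hab, hu, ?_, ?_⟩
  · exact (mul_pos_iff_of_pos_left (g1p a ha)).1 fa
  · have := g1p b (ha.trans hab)
    by_contra hc
    exact absurd fb (not_lt.2 (mul_nonneg this.le (not_lt.1 hc)))

theorem tv_unique {V V' V'' κ : ℝ → ℝ} {UM τ K c : ℝ} {uMx umx : ℝ → ℝ} (h : A1 V V' V'' UM)
    (h2 : A2 κ) (hτ : 0 < τ) (hK : K ≠ 0) (huMx : UMaxHyp V' UM uMx) (humx : UMinHyp V' UM umx)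
    {μ1 μ2 : ℝ} (hμ : μ1 < μ2) {u1 w1 u2 w2 : ℝ → ℝ}
    (hs1 : IsTVSol V V' κ τ K c μ1 u1 w1) (hpos1 : ∀ z, 0 < u1 z)
    (hper1 : IsPeriodicSol u1 w1) (hnc1 : Nonconst u1 w1)
    (hs2 : IsTVSol V V' κ τ K c μ2 u2 w2) (hpos2 : ∀ z, 0 < u2 z)
    (hper2 : IsPeriodicSol u2 w2) (hnc2 : Nonconst u2 w2)
    (hu : u1 0 = u2 0) (hw1 : w1 0 = 0) (hw2 : w2 0 = 0) : False := by
  obtain ⟨q1, n1, a1, b1, ha1, hab1, hr1, fa1, fb1⟩ := tv_facts h h2 hτ hs1 hpos1 hper1 hnc1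
  obtain ⟨q2, n2, a2, b2, ha2, hab2, hr2, fa2, fb2⟩ := tv_facts h h2 hτ hs2 hpos2 hper2 hnc2
  have g1p : ∀ x, 0 < x → 0 < g1TV κ τ x := fun x hx =>
    one_div_pos.2 (mul_pos hτ (h2.2 _ (one_div_pos.2 hx)))
  have g2p : ∀ x, 0 < x → 0 < g2TV κ τ x := fun x hx =>
    div_pos hx (mul_pos (mul_pos two_pos hτ) (h2.2 _ (one_div_pos.2 hx)))
  have fa : 0 < fTV V K c (min a1 a2) := by
    rcases min_choice a1 a2 with hh | hh <;> rw [hh] <;> assumption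
  have fb : fTV V K c (max b1 b2) < 0 := by
    rcases max_choice b1 b2 with hh | hh <;> rw [hh] <;> assumption
  obtain ⟨u0, sL, sR⟩ := exists_sep h hK huMx humx (lt_min ha1 ha2)
    ((min_le_left _ _).trans_lt (hab1.trans_le (le_max_left _ _))) fa fb
  have r1 : ∀ z, u1 z ∈ Icc (min a1 a2) (max b1 b2) := fun z =>
    ⟨(min_le_left _ _).trans (hr1 z).1, (hr1 z).2.trans (le_max_left _ _)⟩
  have r2 : ∀ z, u2 z ∈ Icc (min a1 a2) (max b1 b2) := fun z =>
    ⟨(min_le_right _ _).trans (hr2 z).1, (hr2 z).2.trans (le_max_right _ _)⟩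
  have P1 : PO (fun x => g1TV κ τ x * fTV V K c x) (fun x => g2TV κ τ x * hTV V' K μ1 x)
      u0 u1 w1 :=
    ⟨hs1.1, hs1.2, hper1, q1, n1,
      fun z hz => mul_nonneg (g1p _ (hpos1 z)).le (sL _ (r1 z) hz),
      fun z hz => mul_nonpos_of_nonneg_of_nonpos (g1p _ (hpos1 z)).le (sR _ (r1 z) hz)⟩
  have P2 : PO (fun x => g1TV κ τ x * fTV V K c x) (fun x => g2TV κ τ x * hTV V' K μ2 x)
      u0 u2 w2 :=
    ⟨hs2.1, hs2.2, hper2, q2, n2,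
      fun z hz => mul_nonneg (g1p _ (hpos2 z)).le (sL _ (r2 z) hz),
      fun z hz => mul_nonpos_of_nonneg_of_nonpos (g1p _ (hpos2 z)).le (sR _ (r2 z) hz)⟩
  refine P1.no_two P2 (fun z => ?_) hu hw1 hw2
  refine mul_lt_mul_of_pos_left ?_ (g2p _ (hpos1 z))
  unfold hTV; linarith

theorem stmt7
    (V V' V'' κ : ℝ → ℝ) (τ UM K c K₁ : ℝ) (uMx umx : ℝ → ℝ)
    (hA1 : A1 V V' V'' UM) (hA2 : A2 κ) (hτ : 0 < τ) (hK : K ≠ 0)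
    (huMx : UMaxHyp V' UM uMx) (humx : UMinHyp V' UM umx)
    (hK1 : K1Hyp V V' UM umx K₁)
    (u0 u2 q μper : ℝ) (Adm : Set ℝ) :
    ((K, c) ∉ D1 V V' UM uMx umx ∪ D2 V V' umx K₁ →
      ∀ μ : ℝ, ¬ ∃ u w : ℝ → ℝ, IsTVSol V V' κ τ K c μ u w ∧ (∀ z, 0 < u z) ∧
        IsPeriodicSol u w ∧ Nonconst u w) ∧
    (CondC V' κ UM K₁ K →
      (
        ((K, c) ∈ D1 V V' UM uMx umx ∧
          ∃ u1 μb μf, ZerosD1 V K c u1 u0 u2 ∧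
            (∀ μ, HasHE1 V V' κ τ K c μ u1 u2 ↔ μ = μb) ∧
            (∀ μ, HasHE2 V V' κ τ K c μ u1 u2 ↔ μ = μf) ∧
            ((μf ≤ μb ∧ Adm = Ioo u1 u0) ∨ (μb < μf ∧ Adm = Ioo u0 u2))) ∨
        ((K, c) ∈ D2 V V' umx K₁ ∧ ZerosD2 V K c u0 u2 ∧ Adm = Ioo u0 u2)) →
      q ∈ Adm →
      (∃ u w : ℝ → ℝ, IsTVSol V V' κ τ K c μper u w ∧ (∀ z, 0 < u z) ∧
        u 0 = q ∧ w 0 = 0 ∧ IsPeriodicSol u w ∧ Nonconst u w) →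
      ∀ μ : ℝ, μ ≠ μper →
        ¬ ∃ u w : ℝ → ℝ, IsTVSol V V' κ τ K c μ u w ∧ (∀ z, 0 < u z) ∧
          u 0 = q ∧ w 0 = 0 ∧ IsPeriodicSol u w ∧ Nonconst u w) := by
  refine ⟨?_, ?_⟩
  · rintro hnot μ ⟨u, w, hs, hpos, hper, hnc⟩
    obtain ⟨-, -, a, b, ha, hab, -, fa, fb⟩ := tv_facts hA1 hA2 hτ hs hpos hper hnc
    exact hnot (mem_D hA1 hK huMx humx hK1 ha hab fa fb)
  · rintro - - - ⟨u, w, hs, hpos, hu, hw, hper, hnc⟩ μ hμ ⟨u', w', hs', hpos', hu', hw', hper', hnc'⟩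
    rcases lt_or_gt_of_ne hμ with hlt | hlt
    · exact tv_unique hA1 hA2 hτ hK huMx humx hlt hs' hpos' hper' hnc' hs hpos hper hnc
        (hu'.trans hu.symm) hw' hw
    · exact tv_unique hA1 hA2 hτ hK huMx humx hlt hs hpos hper hnc hs' hpos' hper' hnc'
        (hu.trans hu'.symm) hw hw'

end TrafficTW
end
end

section
/- Assume condition (C) and fix K ∈ (K₀,K_M). Then there exists a unique c_* = c_*(K) ∈ (c₁(K), c_M(K)) such that μ_b(K,c) < μ_f(K,c) for c₁(K) < c < c_*, μ_b(K,c) > μ_f(K,c) for c_* < c < c_M(K), and μ_b(K,c_*) = μ_f(K,c_*). In particular, for (c,μ) = (c_*, μ_b(K,c_*)) the system (TV) possesses a heteroclinic cycle consisting of the equilibria (u₁,0), (u₂,0) and two heteroclinic orbits joining them. -/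
open Set Filter MeasureTheory

noncomputable section

namespace TrafficTW

/-- Forward fence lemma. -/
lemma fence {D : ℝ → ℝ} {a b : ℝ} (hc : ContinuousOn D (Icc a b)) (ha : D a < 0)
    (h : ∀ x ∈ Ioo a b, D x = 0 → ∃ d, d < 0 ∧ HasDerivAt D d x) :
    ∀ x ∈ Icc a b, D x ≤ 0 := by
  intro y hy
  by_contra hpos
  push Not at hpos
  have hc' : ContinuousOn D (Icc a y) := hc.mono (Icc_subset_Icc_right hy.2)
  set T : Set ℝ := Icc a y ∩ D ⁻¹' (Iic 0) with hT
  have hTc : IsClosed T := hc'.preimage_isClosed_of_isClosed isClosed_Icc isClosed_Iic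
  have hTne : T.Nonempty := ⟨a, ⟨le_refl _, hy.1⟩, ha.le⟩
  have hTb : BddAbove T := ⟨y, fun x hx => hx.1.2⟩
  have hξ : sSup T ∈ T := hTc.csSup_mem hTne hTb
  set ξ := sSup T with hξd
  have hξle : D ξ ≤ 0 := hξ.2
  have hξy : ξ < y := lt_of_le_of_ne hξ.1.2 (fun e => by rw [e] at hξle; linarith)
  have hgt : ∀ x, ξ < x → x ≤ y → 0 < D x := by
    intro x hx hxy
    by_contra hx0
    push Not at hx0
    have : x ≤ ξ := le_csSup hTb ⟨⟨hξ.1.1.trans hx.le, hxy⟩, hx0⟩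
    linarith
  have h0 : D ξ = 0 := by
    refine le_antisymm hξle ?_
    have hcw : ContinuousWithinAt D (Icc ξ y) ξ :=
      (hc' ξ hξ.1).mono (Icc_subset_Icc_left hξ.1.1)
    have : Tendsto D (nhdsWithin ξ (Ioc ξ y)) (nhds (D ξ)) :=
      (hcw.mono Ioc_subset_Icc_self)
    rw [nhdsWithin_Ioc_eq_nhdsGT hξy] at this
    refine ge_of_tendsto this ?_
    filter_upwards [Ioc_mem_nhdsGT hξy] with x hx
    exact (hgt x hx.1 hx.2).le
  have hξa : a < ξ := lt_of_le_of_ne hξ.1.1 (fun e => by rw [e] at ha; linarith)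
  obtain ⟨d, hd, hD⟩ := h ξ ⟨hξa, hξy.trans_le hy.2⟩ h0
  have hsl := hasDerivAt_iff_tendsto_slope.1 hD
  have hsl' : Tendsto (slope D ξ) (nhdsWithin ξ (Ioi ξ)) (nhds d) :=
    hsl.mono_left (nhdsWithin_mono _ (fun x hx => ne_of_gt hx))
  have hev : ∀ᶠ x in nhdsWithin ξ (Ioi ξ), slope D ξ x < 0 := hsl'.eventually_lt_const hd
  obtain ⟨x, hx1, hx2⟩ := (hev.and (Ioc_mem_nhdsGT hξy)).exists
  have := hgt x hx2.1 hx2.2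
  rw [slope_def_field, h0, sub_zero] at hx1
  have h3 : 0 < x - ξ := by linarith [hx2.1]
  have := div_pos this h3
  linarith

/-- Backward fence lemma. -/
lemma fence' {D : ℝ → ℝ} {a b : ℝ} (hc : ContinuousOn D (Icc a b)) (hb : D b < 0)
    (h : ∀ x ∈ Ioo a b, D x = 0 → ∃ d, 0 < d ∧ HasDerivAt D d x) :
    ∀ x ∈ Icc a b, D x ≤ 0 := by
  intro x hx
  have := fence (D := fun v => D (-v)) (a := -b) (b := -a) ?_ (by simpa using hb) ?_ (-x)
    ⟨by linarith [hx.2], by linarith [hx.1]⟩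
  · simpa using this
  · refine hc.comp continuous_neg.continuousOn ?_
    intro v hv
    exact ⟨by linarith [hv.2], by linarith [hv.1]⟩
  · intro v hv hv0
    obtain ⟨d, hd, hD⟩ := h (-v) ⟨by linarith [hv.2], by linarith [hv.1]⟩ hv0
    refine ⟨-d, by linarith, ?_⟩
    have := hD.comp v (hasDerivAt_neg v)
    exact this.congr_deriv (by ring)

/-- Slope bound. -/
lemma slope_le {Y : ℝ → ℝ} {p q C : ℝ} (hpq : p ≤ q) (hc : ContinuousOn Y (Icc p q))
    (h : ∀ x ∈ Ioo p q, ∃ d, d ≤ C ∧ HasDerivAt Y d x) : Y q ≤ Y p + C * (q - p) := by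
  have hd : DifferentiableOn ℝ Y (interior (Icc p q)) := by
    rw [interior_Icc]
    intro x hx
    obtain ⟨d, _, hD⟩ := h x hx
    exact hD.differentiableAt.differentiableWithinAt
  have := (convex_Icc p q).image_sub_le_mul_sub_of_deriv_le hc hd (C := C) (by
    rw [interior_Icc]
    intro x hx
    obtain ⟨d, h1, hD⟩ := h x hx
    rw [hD.deriv]; exact h1) p (left_mem_Icc.2 hpq) q (right_mem_Icc.2 hpq) hpq
  linarith

/-- A positive orbit written as a graph over `[a,b]`. -/
def Gr (A B : ℝ → ℝ) (a b : ℝ) (W : ℝ → ℝ) : Prop :=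
  ContinuousOn W (Icc a b) ∧ W a = 0 ∧ W b = 0 ∧
  ∀ u ∈ Ioo a b, 0 < W u ∧ HasDerivAt W (A u / W u + B u) u

lemma Gr.reflect {A B W : ℝ → ℝ} {a b : ℝ} (h : Gr A B a b W) :
    Gr (fun v => - A (-v)) (fun v => - B (-v)) (-b) (-a) (fun v => W (-v)) := by
  obtain ⟨h1, h2, h3, h4⟩ := h
  refine ⟨?_, by simpa using h3, by simpa using h2, ?_⟩
  · refine h1.comp continuous_neg.continuousOn ?_
    intro v hv
    exact ⟨by linarith [hv.2], by linarith [hv.1]⟩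
  · intro v hv
    obtain ⟨h5, h6⟩ := h4 (-v) ⟨by linarith [hv.2], by linarith [hv.1]⟩
    refine ⟨h5, ?_⟩
    have := h6.comp v (hasDerivAt_neg v)
    refine this.congr_deriv ?_
    ring

/-- From a heteroclinic solution to a graph. -/
lemma gr_of_sol {A B u w : ℝ → ℝ} {a b : ℝ} (hab : a < b)
    (hu : ∀ z, HasDerivAt u (w z) z)
    (hw : ∀ z, HasDerivAt w (A (u z) + B (u z) * w z) z) (hpos : ∀ z, 0 < w z)
    (ha : Tendsto u atBot (nhds a)) (hb : Tendsto u atTop (nhds b))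
    (wa : Tendsto w atBot (nhds 0)) (wb : Tendsto w atTop (nhds 0)) :
    ∃ W, Gr A B a b W := by
  have hmono : StrictMono u := strictMono_of_hasDerivAt_pos hu hpos
  have hcont : Continuous u := continuous_iff_continuousAt.2 fun z => (hu z).continuousAt
  have hla : ∀ z, a < u z := fun z =>
    lt_of_le_of_lt (hmono.monotone.le_of_tendsto ha (z - 1)) (hmono (by linarith))
  have hlb : ∀ z, u z < b := fun z =>
    lt_of_lt_of_le (hmono (by linarith)) (hmono.monotone.ge_of_tendsto hb (z + 1))
  have hsurj : ∀ x ∈ Ioo a b, ∃ z, u z = x := by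
    intro x hx
    obtain ⟨z1, h1⟩ := (ha.eventually_lt_const hx.1).exists
    obtain ⟨z2, h2⟩ := (hb.eventually_const_lt hx.2).exists
    exact mem_range_of_exists_le_of_exists_ge hcont ⟨z1, h1.le⟩ ⟨z2, h2.le⟩
  set v := Function.invFun u with hv
  have hvu : ∀ z, v (u z) = z := Function.leftInverse_invFun hmono.injective
  have huv : ∀ x ∈ Ioo a b, u (v x) = x := fun x hx => by
    obtain ⟨z, rfl⟩ := hsurj x hx
    rw [hvu]
  classical
  set W : ℝ → ℝ := fun x => if x ∈ Ioo a b then w (v x) else 0 with hW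
  have hWin : ∀ x ∈ Ioo a b, W x = w (v x) := fun x hx => by simp only [hW, if_pos hx]
  have hWa : W a = 0 := by simp [hW]
  have hWb : W b = 0 := by simp [hW]
  have hvc : ∀ x ∈ Ioo a b, ContinuousAt v x := by
    intro x hx
    obtain ⟨z, rfl⟩ := hsurj x hx
    rw [Metric.continuousAt_iff']
    intro ε hε
    have h1 : u (z - ε) < u z := hmono (by linarith)
    have h2 : u z < u (z + ε) := hmono (by linarith)
    filter_upwards [Ioo_mem_nhds h1 h2] with y hy
    have hy' : y ∈ Ioo a b := ⟨(hla _).trans hy.1, hy.2.trans (hlb _)⟩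
    obtain ⟨t, rfl⟩ := hsurj y hy'
    rw [hvu, hvu, Real.dist_eq, abs_lt]
    have := hmono.lt_iff_lt.1 hy.1
    have := hmono.lt_iff_lt.1 hy.2
    constructor <;> linarith
  have hder : ∀ x ∈ Ioo a b, 0 < W x ∧ HasDerivAt W (A x / W x + B x) x := by
    intro x hx
    have hev : ∀ᶠ y in nhds x, y ∈ Ioo a b := Ioo_mem_nhds hx.1 hx.2
    refine ⟨by rw [hWin x hx]; exact hpos _, ?_⟩
    have h1 : HasDerivAt v (w (v x))⁻¹ x :=
      HasDerivAt.of_local_left_inverse (hvc x hx) (hu (v x)) (hpos _).ne'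
        (hev.mono fun y hy => huv y hy)
    have h2 := (hw (v x)).comp x h1
    have h3 : HasDerivAt W ((A (u (v x)) + B (u (v x)) * w (v x)) * (w (v x))⁻¹) x :=
      h2.congr_of_eventuallyEq (hev.mono fun y hy => hWin y hy)
    refine h3.congr_deriv ?_
    rw [huv x hx, hWin x hx]
    have := (hpos (v x)).ne'
    field_simp
  refine ⟨W, ?_, hWa, hWb, hder⟩
  intro x hx
  rcases eq_or_lt_of_le hx.1 with rfl | h1
  · rw [Metric.continuousWithinAt_iff']
    intro ε hε
    obtain ⟨Z, hZ⟩ := (eventually_atBot.1 (wa.eventually_lt_const hε))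
    have : ∀ᶠ y in nhdsWithin a (Icc a b), y < u Z :=
      nhdsWithin_le_nhds (Iio_mem_nhds (hla Z))
    filter_upwards [this, self_mem_nhdsWithin] with y hy hyI
    rw [hWa, Real.dist_eq, sub_zero]
    rcases eq_or_lt_of_le hyI.1 with rfl | h2
    · rw [hWa]; simpa using hε
    · have hy' : y ∈ Ioo a b := ⟨h2, hy.trans (hlb Z)⟩
      obtain ⟨t, rfl⟩ := hsurj y hy'
      rw [hWin _ hy', hvu, abs_of_pos (hpos _)]
      exact hZ t (hmono.lt_iff_lt.1 hy).le
  rcases eq_or_lt_of_le hx.2 with rfl | h2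
  · rw [Metric.continuousWithinAt_iff']
    intro ε hε
    obtain ⟨Z, hZ⟩ := (eventually_atTop.1 (wb.eventually_lt_const hε))
    have : ∀ᶠ y in nhdsWithin x (Icc a x), u Z < y :=
      nhdsWithin_le_nhds (Ioi_mem_nhds (hlb Z))
    filter_upwards [this, self_mem_nhdsWithin] with y hy hyI
    rw [hWb, Real.dist_eq, sub_zero]
    rcases eq_or_lt_of_le hyI.2 with rfl | h2
    · rw [hWb]; simpa using hε
    · have hy' : y ∈ Ioo a x := ⟨(hla Z).trans hy, h2⟩
      obtain ⟨t, rfl⟩ := hsurj y hy'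
      rw [hWin _ hy', hvu, abs_of_pos (hpos _)]
      exact hZ t (hmono.lt_iff_lt.1 hy).le
  · exact (hder x ⟨h1, h2⟩).2.continuousAt.continuousWithinAt

lemma gr_mono {A B A' B' W X : ℝ → ℝ} {a b a' b' : ℝ} (hW : Gr A B a b W)
    (hX : Gr A' B' a' b' X) (h1 : a < a') (h2 : a' < b) (h3 : b < b')
    (hA : ∀ u ∈ Ioo a' b, A' u < A u) (hB : ∀ u ∈ Ioo a' b, B' u ≤ B u) : False := by
  have key := fence (D := fun u => X u - W u) (a := a') (b := b) ?_ ?_ ?_ b ⟨h2.le, le_refl _⟩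
  · have := (hX.2.2.2 b ⟨h2, h3⟩).1
    simp only [hW.2.2.1] at key
    linarith
  · exact (hX.1.mono (Icc_subset_Icc_right h3.le)).sub (hW.1.mono (Icc_subset_Icc_left h1.le))
  · have := (hW.2.2.2 a' ⟨h1, h2⟩).1
    simp only [hX.2.1]
    linarith
  · intro u hu h0
    obtain ⟨hw1, hw2⟩ := hW.2.2.2 u ⟨h1.trans hu.1, hu.2⟩
    obtain ⟨hx1, hx2⟩ := hX.2.2.2 u ⟨hu.1, hu.2.trans h3⟩
    refine ⟨_, ?_, hx2.sub hw2⟩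
    have : X u = W u := by linarith
    rw [this]
    have := div_lt_div_of_pos_right (hA u hu) hw1
    linarith [hB u hu]

lemma gr_jump {A B A' B' W X : ℝ → ℝ} {a b a' b' p q m η ρ Am Bm : ℝ} (hW : Gr A B a b W)
    (hX : Gr A' B' a' b' X) (h1 : a < p) (h2 : p < m) (h3 : m < q) (h4 : q < b)
    (h5 : a' < p) (h6 : q < b') (hη : 0 < η) (hρ0 : 0 < ρ) (hρ : ρ ≤ η * (q - m))
    (hA1 : ∀ u ∈ Ioo p q, u ≤ m → 0 ≤ A' u) (hA2 : ∀ u ∈ Ioo p q, m ≤ u → A' u ≤ 0)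
    (hD : ∀ u ∈ Ioo p q, η < (A' u - A u) / W u + (B' u - B u))
    (hp : W p < η * (m - p)) (hAm : 0 ≤ Am)
    (hS1 : ∀ u ∈ Ioo q b', - Am ≤ A' u) (hS2 : ∀ u ∈ Ioo q b', - Bm ≤ B' u)
    (hS : (b' - q) * (2 * Am / ρ + Bm + 1) ≤ ρ / 2) (hBm : 0 ≤ Bm) : False := by
  have hcW : ContinuousOn W (Icc p q) := hW.1.mono (Icc_subset_Icc h1.le h4.le)
  have hcX : ContinuousOn X (Icc p q) := hX.1.mono (Icc_subset_Icc h5.le h6.le)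
  have key := fence (D := fun u => η * (u - m) - (X u - W u)) (a := p) (b := q) ?_ ?_ ?_ q
    ⟨by linarith, le_refl _⟩
  rotate_left
  · exact (by fun_prop : ContinuousOn (fun u => η * (u - m)) (Icc p q)).sub (hcX.sub hcW)
  · have := (hX.2.2.2 p ⟨h5, by linarith⟩).1
    linarith
  · intro u hu h0
    obtain ⟨hw1, hw2⟩ := hW.2.2.2 u ⟨h1.trans hu.1, hu.2.trans h4⟩
    obtain ⟨hx1, hx2⟩ := hX.2.2.2 u ⟨h5.trans hu.1, hu.2.trans h6⟩
    refine ⟨_, ?_, (((hasDerivAt_id u).sub_const m).const_mul η).sub (hx2.sub hw2)⟩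
    have hd := hD u hu
    have hXW : X u - W u = η * (u - m) := by linarith
    have h7 : 0 ≤ A' u * (1 / X u - 1 / W u) := by
      have : A' u * (1 / X u - 1 / W u) = (A' u * (η * (m - u))) / (X u * W u) := by
        rw [show η * (m - u) = W u - X u by linarith]
        field_simp
      rw [this]
      refine div_nonneg ?_ (mul_pos hx1 hw1).le
      rcases le_total u m with h | h
      · exact mul_nonneg (hA1 u hu h) (mul_nonneg hη.le (by linarith))
      · exact mul_nonneg_of_nonpos_of_nonpos (hA2 u hu h)
          (mul_nonpos_of_nonneg_of_nonpos hη.le (by linarith))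
    have h8 : A' u / X u - A u / W u = A' u * (1 / X u - 1 / W u) + (A' u - A u) / W u := by ring
    simp only [mul_one]
    linarith
  have hWq := (hW.2.2.2 q ⟨by linarith, h4⟩).1
  have hXq : ρ < X q := by linarith
  set S := 2 * Am / ρ + Bm + 1 with hSd
  have hSpos : 0 < S := by positivity
  have key2 := fence (D := fun u => (ρ - S * (u - q)) - X u) (a := q) (b := b') ?_ ?_ ?_ b'
    ⟨h6.le, le_refl _⟩
  · simp only [hX.2.2.1] at key2
    nlinarith
  · exact (by fun_prop : ContinuousOn (fun u => ρ - S * (u - q)) (Icc q b')).sub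
      (hX.1.mono (Icc_subset_Icc_left (by linarith)))
  · linarith
  · intro u hu h0
    obtain ⟨hx1, hx2⟩ := hX.2.2.2 u ⟨by linarith [hu.1], hu.2⟩
    refine ⟨_, ?_, ((((hasDerivAt_id u).sub_const q).const_mul S).const_sub ρ).sub hx2⟩
    have hge : ρ / 2 ≤ X u := by
      have : S * (u - q) ≤ S * (b' - q) := by
        apply mul_le_mul_of_nonneg_left _ hSpos.le
        linarith [hu.2]
      nlinarith
    have h9 : - (2 * Am / ρ) ≤ A' u / X u := by
      rw [le_div_iff₀ hx1]
      have h10 : Am ≤ 2 * Am / ρ * X u := by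
        calc Am = 2 * Am / ρ * (ρ / 2) := by field_simp
          _ ≤ _ := mul_le_mul_of_nonneg_left hge (by positivity)
      have := hS1 u hu
      linarith
    have := hS2 u hu
    simp only [mul_one]
    rw [hSd]
    linarith

/-- A one parameter family of orbits. -/
structure Fam (S : Set ℝ) (g1 g2 k F : ℝ → ℝ) (C0 C1 e1 e2 : ℝ) (a m b ν : ℝ → ℝ) : Prop where
  oc : S.OrdConnected
  op : IsOpen S
  g1c : ContinuousOn g1 S
  g2c : ContinuousOn g2 S
  kc : ContinuousOn k S
  Fc : ContinuousOn F S
  g1p : ∀ u ∈ S, 0 < g1 u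
  g2p : ∀ u ∈ S, 0 < g2 u
  aS : ∀ c ∈ Ioo C0 C1, a c ∈ S
  bS : ∀ c ∈ Ioo C0 C1, b c ∈ S
  o1 : ∀ c ∈ Ioo C0 C1, a c < e1
  o2 : ∀ c ∈ Ioo C0 C1, e1 < m c
  o3 : ∀ c ∈ Ioo C0 C1, m c < e2
  o4 : ∀ c ∈ Ioo C0 C1, e2 < b c
  za : ∀ c ∈ Ioo C0 C1, F (a c) = c
  zb : ∀ c ∈ Ioo C0 C1, F (b c) = c
  s1 : ∀ c ∈ Ioo C0 C1, ∀ u ∈ S, u < a c → F u < c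
  s2 : ∀ c ∈ Ioo C0 C1, ∀ u ∈ Ioo (a c) (m c), c < F u
  zm : ∀ c ∈ Ioo C0 C1, F (m c) = c
  s3 : ∀ c ∈ Ioo C0 C1, ∀ u ∈ Ioo (m c) (b c), F u < c
  s4 : ∀ c ∈ Ioo C0 C1, ∀ u ∈ S, b c < u → c < F u
  gr : ∀ c ∈ Ioo C0 C1, ∃ W, Gr (fun u => g1 u * (F u - c)) (fun u => k u + ν c * g2 u) (a c) (b c) W

section
variable {S : Set ℝ} {g1 g2 k F : ℝ → ℝ} {C0 C1 e1 e2 : ℝ} {a m b ν : ℝ → ℝ}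

lemma Fam.reflect (H : Fam S g1 g2 k F C0 C1 e1 e2 a m b ν) :
    Fam (Neg.neg ⁻¹' S) (fun v => g1 (-v)) (fun v => g2 (-v)) (fun v => - k (-v))
      (fun v => - F (-v)) (-C1) (-C0) (-e2) (-e1) (fun c => - b (-c)) (fun c => - m (-c))
      (fun c => - a (-c)) (fun c => - ν (-c)) := by
  have hI : ∀ c, c ∈ Ioo (-C1) (-C0) → -c ∈ Ioo C0 C1 := fun c hc =>
    ⟨by linarith [hc.2], by linarith [hc.1]⟩
  have hcomp : ∀ g : ℝ → ℝ, ContinuousOn g S → ContinuousOn (fun v => g (-v)) (Neg.neg ⁻¹' S) :=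
    fun g hg => hg.comp continuous_neg.continuousOn (fun v hv => hv)
  refine ⟨?_, H.op.preimage continuous_neg, hcomp _ H.g1c, hcomp _ H.g2c, (hcomp _ H.kc).neg,
    (hcomp _ H.Fc).neg, fun u hu => H.g1p _ hu, fun u hu => H.g2p _ hu, ?_, ?_, ?_, ?_, ?_, ?_,
    ?_, ?_, ?_, ?_, ?_, ?_, ?_, ?_⟩
  · refine ⟨fun x hx y hy z hz => ?_⟩
    exact H.oc.out hy hx ⟨by simpa using hz.2, by simpa using hz.1⟩
  · intro c hc
    simpa using H.bS _ (hI c hc)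
  · intro c hc
    simpa using H.aS _ (hI c hc)
  · intro c hc
    have := H.o4 _ (hI c hc)
    linarith
  · intro c hc
    have := H.o3 _ (hI c hc)
    linarith
  · intro c hc
    have := H.o2 _ (hI c hc)
    linarith
  · intro c hc
    have := H.o1 _ (hI c hc)
    linarith
  · intro c hc
    simp [H.zb _ (hI c hc)]
  · intro c hc
    simp [H.za _ (hI c hc)]
  · intro c hc u hu h
    have := H.s4 _ (hI c hc) (-u) hu (by linarith)
    linarith
  · intro c hc u hu
    have := H.s3 _ (hI c hc) (-u) ⟨by linarith [hu.2], by linarith [hu.1]⟩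
    linarith
  · intro c hc
    simp [H.zm _ (hI c hc)]
  · intro c hc u hu
    have := H.s2 _ (hI c hc) (-u) ⟨by linarith [hu.2], by linarith [hu.1]⟩
    linarith
  · intro c hc u hu h
    have := H.s1 _ (hI c hc) (-u) hu (by linarith)
    linarith
  · intro c hc
    obtain ⟨W, hW⟩ := H.gr _ (hI c hc)
    refine ⟨fun v => W (-v), ?_⟩
    have := hW.reflect
    convert this using 2 <;> ring

lemma Fam.a_lt (H : Fam S g1 g2 k F C0 C1 e1 e2 a m b ν) {c c' : ℝ} (hc : c ∈ Ioo C0 C1)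
    (hc' : c' ∈ Ioo C0 C1) (h : c < c') : a c < a c' := by
  by_contra hn
  push Not at hn
  have h1 := H.za c' hc'
  rcases eq_or_lt_of_le hn with e | e
  · rw [e, H.za c hc] at h1; linarith
  · have := H.s1 c hc _ (H.aS c' hc') e
    linarith

lemma Fam.b_lt (H : Fam S g1 g2 k F C0 C1 e1 e2 a m b ν) {c c' : ℝ} (hc : c ∈ Ioo C0 C1)
    (hc' : c' ∈ Ioo C0 C1) (h : c < c') : b c < b c' := by
  by_contra hn
  push Not at hn
  have h1 := H.zb c' hc'
  rcases eq_or_lt_of_le hn with e | e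
  · rw [e, H.zb c hc] at h1; linarith
  · have := H.s3 c hc (b c') ⟨(H.o3 c hc).trans (H.o4 c' hc'), e⟩
    linarith

lemma Fam.e_lt (H : Fam S g1 g2 k F C0 C1 e1 e2 a m b ν) {c : ℝ} (hc : c ∈ Ioo C0 C1) :
    e1 < e2 := (H.o2 c hc).trans (H.o3 c hc)

lemma Fam.mono (H : Fam S g1 g2 k F C0 C1 e1 e2 a m b ν) {c c' : ℝ} (hc : c ∈ Ioo C0 C1)
    (hc' : c' ∈ Ioo C0 C1) (h : c < c') : ν c < ν c' := by
  by_contra hn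
  push Not at hn
  obtain ⟨W, hW⟩ := H.gr c hc
  obtain ⟨X, hX⟩ := H.gr c' hc'
  have he := H.e_lt hc
  have hS : ∀ u ∈ Ioo (a c') (b c), u ∈ S := fun u hu =>
    H.oc.out (H.aS c' hc') (H.bS c hc) ⟨hu.1.le, hu.2.le⟩
  refine gr_mono hW hX (H.a_lt hc hc' h) (by linarith [H.o1 c' hc', H.o4 c hc]) (H.b_lt hc hc' h)
    ?_ ?_
  · intro u hu
    exact mul_lt_mul_of_pos_left (by linarith) (H.g1p u (hS u hu))
  · intro u hu
    have := mul_le_mul_of_nonneg_right hn (H.g2p u (hS u hu)).le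
    linarith

lemma bdd_of_cont {g : ℝ → ℝ} {x y : ℝ} (hg : ContinuousOn g (Icc x y)) :
    ∃ M, 0 < M ∧ ∀ u ∈ Icc x y, |g u| ≤ M := by
  obtain ⟨M, hM⟩ := isCompact_Icc.exists_bound_of_continuousOn hg
  exact ⟨|M| + 1, by positivity, fun u hu => by
    have := hM u hu
    rw [Real.norm_eq_abs] at this
    linarith [le_abs_self M]⟩

lemma pos_of_cont {g : ℝ → ℝ} {x y : ℝ} (hg : ContinuousOn g (Icc x y))
    (hp : ∀ u ∈ Icc x y, 0 < g u) : ∃ γ, 0 < γ ∧ ∀ u ∈ Icc x y, γ ≤ g u := by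
  rcases (Icc x y).eq_empty_or_nonempty with h | h
  · exact ⟨1, one_pos, by simp [h]⟩
  · obtain ⟨t, ht, hmin⟩ := isCompact_Icc.exists_isMinOn h hg
    exact ⟨g t, hp t ht, fun u hu => hmin hu⟩

lemma Fam.right (H : Fam S g1 g2 k F C0 C1 e1 e2 a m b ν) {c : ℝ} (hc : c ∈ Ioo C0 C1)
    {δ : ℝ} (hδ : 0 < δ) : ∃ ε, 0 < ε ∧ ∀ c' ∈ Ioo C0 C1, c < c' → c' < c + ε → ν c' < ν c + δ := by
  obtain ⟨W, hW⟩ := H.gr c hc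
  have he := H.e_lt hc
  have ha1 := H.o1 c hc
  have hb2 := H.o4 c hc
  have hm1 := H.o2 c hc
  have hm2 := H.o3 c hc
  have haS := H.aS c hc
  have hbS := H.bS c hc
  obtain ⟨t, ht, htS⟩ := Metric.isOpen_iff.1 H.op _ hbS
  set r0 := t / 2 with hr0
  have hr0p : 0 < r0 := by positivity
  have hbrS : b c + r0 ∈ S := htS (by
    rw [Metric.mem_ball, Real.dist_eq, show b c + r0 - b c = r0 by ring, abs_of_pos hr0p]
    linarith)
  have hJ : Icc (a c) (b c + r0) ⊆ S := H.oc.out haS hbrS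
  obtain ⟨γ, hγ, hγ'⟩ := pos_of_cont (H.g2c.mono hJ) (fun u hu => H.g2p u (hJ hu))
  obtain ⟨G, hG, hG'⟩ := bdd_of_cont (H.g1c.mono hJ)
  obtain ⟨Φ, hΦ, hΦ'⟩ := bdd_of_cont ((H.Fc.mono hJ).sub (continuousOn_const (c := c)))
  obtain ⟨Bm, hBm, hBm'⟩ := bdd_of_cont ((H.kc.mono hJ).add
    ((continuousOn_const (c := ν c)).mul (H.g2c.mono hJ)))
  set Am := G * (Φ + 1) with hAm
  have hAmp : 0 < Am := by positivity
  set η := γ * δ / 2 with hη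
  have hηp : 0 < η := by positivity
  set d := min (e1 - a c) (b c - e2) with hd
  have hdp : 0 < d := lt_min (by linarith) (by linarith)
  have hd1 : d ≤ e1 - a c := min_le_left _ _
  have hd2 : d ≤ b c - e2 := min_le_right _ _
  set ρ := η * (d / 2) with hρ
  have hρp : 0 < ρ := by positivity
  set Q := 2 * Am / ρ + Bm + 1 with hQ
  have hQp : 0 < Q := by positivity
  -- choose r
  have hWc : ContinuousWithinAt W (Icc (a c) (b c)) (a c) := hW.1 _ ⟨le_refl _, by linarith⟩
  have hWev : ∀ᶠ u in nhdsWithin (a c) (Ioi (a c)), W u < ρ := by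
    have h1 : Tendsto W (nhdsWithin (a c) (Icc (a c) (b c))) (nhds 0) := by
      have := hWc.tendsto
      rwa [hW.2.1] at this
    have h2 : Tendsto W (nhdsWithin (a c) (Ioc (a c) (b c))) (nhds 0) :=
      h1.mono_left (nhdsWithin_mono _ Ioc_subset_Icc_self)
    rw [nhdsWithin_Ioc_eq_nhdsGT (by linarith)] at h2
    exact h2.eventually_lt_const hρp
  have hr1 : 0 < min (min (d / 2) r0) (ρ / (4 * Q)) := by positivity
  obtain ⟨p, hp1, hp2⟩ := (hWev.and (Ioo_mem_nhdsGT
    (show a c < a c + min (min (d / 2) r0) (ρ / (4 * Q)) by linarith))).exists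
  set r := p - a c with hr
  have hrp : 0 < r := by linarith [hp2.1]
  have hrlt : r < min (min (d / 2) r0) (ρ / (4 * Q)) := by linarith [hp2.2]
  have hrd : r < d / 2 := hrlt.trans_le ((min_le_left _ _).trans (min_le_left _ _))
  have hrr0 : r < r0 := hrlt.trans_le ((min_le_left _ _).trans (min_le_right _ _))
  have hrQ : r < ρ / (4 * Q) := hrlt.trans_le (min_le_right _ _)
  have hpd : p = a c + r := by rw [hr]; ring
  set q := b c - r with hq
  have hpW : Icc p q ⊆ Ioo (a c) (b c) := fun u hu =>
    ⟨by linarith [hu.1], by linarith [hu.2]⟩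
  obtain ⟨ω, hω, hω'⟩ := pos_of_cont (hW.1.mono (hpW.trans Ioo_subset_Icc_self))
    (fun u hu => (hW.2.2.2 u (hpW hu)).1)
  have hFp : c < F p := H.s2 c hc p ⟨by linarith, by linarith⟩
  have hbr : b c + r ∈ S := hJ ⟨by linarith, by linarith⟩
  have hFb : c < F (b c + r) := H.s4 c hc _ hbr (by linarith)
  set ε := min (min 1 (η * ω / (2 * G))) (min (F p - c) (F (b c + r) - c)) with hε
  have hεp : 0 < ε := by
    refine lt_min (lt_min one_pos (by positivity)) (lt_min (by linarith) (by linarith))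
  have hε1 : ε ≤ 1 := (min_le_left _ _).trans (min_le_left _ _)
  have hε2 : ε ≤ η * ω / (2 * G) := (min_le_left _ _).trans (min_le_right _ _)
  have hε3 : ε ≤ F p - c := (min_le_right _ _).trans (min_le_left _ _)
  have hε4 : ε ≤ F (b c + r) - c := (min_le_right _ _).trans (min_le_right _ _)
  refine ⟨ε, hεp, ?_⟩
  intro c' hc' hcc hcε
  by_contra hn
  push Not at hn
  obtain ⟨X, hX⟩ := H.gr c' hc'
  have ha'1 := H.o1 c' hc'
  have hb'2 := H.o4 c' hc'
  have hm'1 := H.o2 c' hc'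
  have hm'2 := H.o3 c' hc'
  have haa := H.a_lt hc hc' hcc
  have hbb := H.b_lt hc hc' hcc
  have ha'p : a c' < p := by
    by_contra h
    push Not at h
    have : F p ≤ c' := by
      rcases eq_or_lt_of_le h with e | e
      · rw [e, H.za c' hc']
      · exact (H.s1 c' hc' p (hJ ⟨by linarith, by linarith⟩) e).le
    linarith
  have hb'r : b c' < b c + r := by
    by_contra h
    push Not at h
    have : F (b c + r) ≤ c' := by
      rcases eq_or_lt_of_le h with e | e
      · rw [e, H.zb c' hc']
      · exact (H.s3 c' hc' _ ⟨by linarith, e⟩).le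
    linarith
  have hrQ2 : 2 * r * Q ≤ ρ / 2 := by
    rw [lt_div_iff₀ (by positivity)] at hrQ
    linarith
  refine gr_jump (p := p) (q := q) (m := m c') (η := η) (ρ := ρ) (Am := Am) (Bm := Bm) hW hX
    (by linarith) (by linarith) (by linarith) (by linarith) ha'p (by linarith) hηp hρp
    (mul_le_mul_of_nonneg_left (by linarith) hηp.le) ?_ ?_ ?_ ?_ hAmp.le ?_ ?_ ?_ hBm.le
  · intro u hu hum
    have hg := H.g1p u (hJ ⟨by linarith [hu.1], by linarith [hu.2]⟩)
    refine mul_nonneg hg.le ?_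
    rcases eq_or_lt_of_le hum with e | e
    · rw [e, H.zm c' hc']; simp
    · linarith [H.s2 c' hc' u ⟨by linarith [hu.1], e⟩]
  · intro u hu hum
    have hg := H.g1p u (hJ ⟨by linarith [hu.1], by linarith [hu.2]⟩)
    refine mul_nonpos_of_nonneg_of_nonpos hg.le ?_
    rcases eq_or_lt_of_le hum with e | e
    · rw [← e, H.zm c' hc']; simp
    · linarith [H.s3 c' hc' u ⟨e, by linarith [hu.2]⟩]
  · intro u hu
    have huJ : u ∈ Icc (a c) (b c + r0) := ⟨by linarith [hu.1], by linarith [hu.2]⟩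
    have hWu := hω' u ⟨hu.1.le, hu.2.le⟩
    have hg1 := hG' u huJ
    rw [abs_of_pos (H.g1p u (hJ huJ))] at hg1
    have hg2 := hγ' u huJ
    have hWp : 0 < W u := by linarith
    have e1 : (g1 u * (F u - c') - g1 u * (F u - c)) / W u = - (g1 u * (c' - c) / W u) := by ring
    have e2 : g1 u * (c' - c) / W u ≤ η / 2 := by
      rw [div_le_iff₀ hWp]
      calc g1 u * (c' - c) ≤ G * (η * ω / (2 * G)) :=
            mul_le_mul hg1 (by linarith) (by linarith) hG.le
        _ = η / 2 * ω := by field_simp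
        _ ≤ η / 2 * W u := mul_le_mul_of_nonneg_left hWu (by positivity)
    have e3 : γ * δ ≤ (ν c' - ν c) * g2 u := by
      rw [mul_comm]
      exact mul_le_mul (by linarith) hg2 hγ.le (by linarith)
    rw [e1]
    have : γ * δ = 2 * η := by rw [hη]; ring
    linarith
  · have : η * (d / 2) ≤ η * (m c' - p) := mul_le_mul_of_nonneg_left (by linarith) hηp.le
    linarith
  · intro u hu
    have huJ : u ∈ Icc (a c) (b c + r0) := ⟨by linarith [hu.1], by linarith [hu.2]⟩
    have hg1 := hG' u huJ
    rw [abs_of_pos (H.g1p u (hJ huJ))] at hg1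
    have hF := (abs_le.1 (hΦ' u huJ)).1
    have e1 : -(Φ + 1) ≤ F u - c' := by
      change -Φ ≤ F u - c at hF
      linarith
    have e2 := mul_le_mul_of_nonneg_left e1 (H.g1p u (hJ huJ)).le
    have e3 := mul_le_mul_of_nonneg_right hg1 (show 0 ≤ Φ + 1 by linarith)
    linarith
  · intro u hu
    have huJ : u ∈ Icc (a c) (b c + r0) := ⟨by linarith [hu.1], by linarith [hu.2]⟩
    have e1 : -Bm ≤ k u + ν c * g2 u := (abs_le.1 (hBm' u huJ)).1
    have e2 : ν c * g2 u ≤ ν c' * g2 u :=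
      mul_le_mul_of_nonneg_right (by linarith) (H.g2p u (hJ huJ)).le
    linarith
  · calc (b c' - q) * Q ≤ 2 * r * Q := mul_le_mul_of_nonneg_right (by linarith) hQp.le
      _ ≤ _ := hrQ2

lemma Fam.cont (H : Fam S g1 g2 k F C0 C1 e1 e2 a m b ν) : ContinuousOn ν (Ioo C0 C1) := by
  intro c hc
  rw [Metric.continuousWithinAt_iff]
  intro δ hδ
  obtain ⟨ε1, h1, h1'⟩ := H.right hc hδ
  obtain ⟨ε2, h2, h2'⟩ := H.reflect.right (c := -c) ⟨by linarith [hc.2], by linarith [hc.1]⟩ hδ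
  refine ⟨min ε1 ε2, lt_min h1 h2, ?_⟩
  intro c' hc' hd
  rw [Real.dist_eq, abs_lt] at hd ⊢
  have hm1 := min_le_left ε1 ε2
  have hm2 := min_le_right ε1 ε2
  rcases lt_trichotomy c c' with h | h | h
  · have := H.mono hc hc' h
    have := h1' c' hc' h (by linarith)
    constructor <;> linarith
  · subst h; constructor <;> linarith
  · have := H.mono hc' hc h
    have := h2' (-c') ⟨by linarith [hc'.2], by linarith [hc'.1]⟩ (by linarith) (by linarith)
    simp only [neg_neg] at this
    constructor <;> linarith

end

lemma end_lem {g2 d : ℝ → ℝ} {lo e hi Am N : ℝ} (h1 : lo < e) (h2 : e < hi)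
    (g2c : ContinuousOn g2 (Icc lo hi)) (dc : ContinuousOn d (Icc lo hi))
    (g2p : ∀ u ∈ Icc lo hi, 0 < g2 u) (de : d e = 0) (dn : ∀ u ∈ Ioc e hi, d u < 0)
    (hAm : 0 < Am) (hN : 0 < N) :
    ∃ r, 0 < r ∧ ∀ a m b μ μ' : ℝ, ∀ A W X : ℝ → ℝ, e - r < a → lo ≤ a → a < e → e < m →
      m < e + r → hi < b → |μ| ≤ N → |μ'| ≤ N →
      (∀ u ∈ Ioo a m, A u ≤ Am) → (∀ u ∈ Ico m b, A u ≤ 0) →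
      Gr A (fun u => g2 u * (d u + μ)) a b W → Gr A (fun u => - (g2 u * (d u + μ'))) a b X →
      μ' < μ := by
  obtain ⟨γ, hγ, hγ'⟩ := pos_of_cont g2c g2p
  obtain ⟨Γ, hΓ, hΓ'⟩ := bdd_of_cont g2c
  obtain ⟨Dm, hDm, hDm'⟩ := bdd_of_cont dc
  set B := Γ * (Dm + N) with hB
  have hBp : 0 < B := by positivity
  set p := (e + hi) / 2 with hp
  have hsub : Icc p hi ⊆ Icc lo hi := Icc_subset_Icc_left (by linarith)
  obtain ⟨m1, hm1, hm1'⟩ := pos_of_cont (g := fun u => - d u) (x := p) (y := hi)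
    (dc.mono hsub).neg (fun u hu => by
      have := dn u ⟨by linarith [hu.1], hu.2⟩
      linarith)
  set m0 := m1 / 2 with hm0
  have hm0p : 0 < m0 := by positivity
  set L := γ * m0 * (hi - p) with hL
  have hhp : 0 < hi - p := by linarith
  have hLp : 0 < L := by positivity
  set μ0 := min m0 (L / (2 * Γ * (hi - lo))) with hμ0
  have hhl : 0 < hi - lo := by linarith
  have hμ0p : 0 < μ0 := lt_min hm0p (by positivity)
  have hμ0a : μ0 ≤ m0 := min_le_left _ _
  have hμ0b : Γ * μ0 * (hi - lo) ≤ L / 2 := by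
    have : μ0 ≤ L / (2 * Γ * (hi - lo)) := min_le_right _ _
    rw [le_div_iff₀ (by positivity)] at this
    linarith
  -- choose p
  have hdc : ContinuousWithinAt d (Icc e hi) e :=
    (dc e ⟨h1.le, h2.le⟩).mono (Icc_subset_Icc_left h1.le)
  obtain ⟨t, ht, ht'⟩ := Metric.continuousWithinAt_iff.1 hdc (μ0 / 2) (by positivity)
  set p' := min (e + t / 2) hi with hp'
  have hp'e : e < p' := lt_min (by linarith) h2
  have hp'hi : p' ≤ hi := min_le_right _ _
  have hp't : p' ≤ e + t / 2 := min_le_left _ _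
  have hdp' : ∀ u ∈ Icc e p', - (μ0 / 2) ≤ d u := by
    intro u hu
    have := ht' (x := u) ⟨hu.1, hu.2.trans hp'hi⟩ (by
      rw [Real.dist_eq, abs_lt]; constructor <;> linarith [hu.1, hu.2])
    rw [Real.dist_eq, de, sub_zero, abs_lt] at this
    exact this.1.le
  have hp'ep : 0 < p' - e := by linarith
  set σ := min (L / 8) (γ * μ0 * (p' - e) / 16) with hσ
  have hσp : 0 < σ := by positivity
  have hσ1 : σ ≤ L / 8 := min_le_left _ _
  have hσ2 : σ ≤ γ * μ0 * (p' - e) / 16 := min_le_right _ _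
  set Q := Am / σ + B + 1 with hQ
  have hQp : 0 < Q := by positivity
  set r := min (σ / (2 * Q)) (min ((hi - e) / 2) ((p' - e) / 2)) with hr
  have hrp : 0 < r := by
    refine lt_min (by positivity) (lt_min (by linarith) (by linarith))
  have hr1 : 2 * r * Q ≤ σ := by
    have : r ≤ σ / (2 * Q) := min_le_left _ _
    rw [le_div_iff₀ (by positivity)] at this
    linarith
  have hr2 : r ≤ (hi - e) / 2 := (min_le_right _ _).trans (min_le_left _ _)
  have hr3 : r ≤ (p' - e) / 2 := (min_le_right _ _).trans (min_le_right _ _)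
  refine ⟨r, hrp, ?_⟩
  intro a m b μ μ' A W X har hlo hae hem hmr hib hμ hμ' hA1 hA2 hW hX
  -- bounds at m
  have step : ∀ (Y C : ℝ → ℝ), Gr A C a b Y → (∀ u ∈ Ioo a m, C u ≤ B) → Y m ≤ 2 * σ := by
    intro Y C hY hC
    have := fence (D := fun u => Y u - (σ + Q * (u - a))) (a := a) (b := m) ?_ ?_ ?_ m
      ⟨by linarith, le_refl _⟩
    · have h3 : Q * (m - a) ≤ Q * (2 * r) := mul_le_mul_of_nonneg_left (by linarith) hQp.le
      linarith
    · exact (hY.1.mono (Icc_subset_Icc_right (by linarith))).sub (by fun_prop)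
    · simp only [hY.2.1]; linarith
    · intro u hu h0
      obtain ⟨hy1, hy2⟩ := hY.2.2.2 u ⟨hu.1, by linarith [hu.2]⟩
      refine ⟨_, ?_, hy2.sub ((((hasDerivAt_id u).sub_const a).const_mul Q).const_add σ)⟩
      have hge : σ ≤ Y u := by
        have : 0 ≤ Q * (u - a) := mul_nonneg hQp.le (by linarith [hu.1])
        linarith
      have h5 : A u / Y u ≤ Am / σ :=
        (div_le_div_of_nonneg_right (hA1 u hu) hy1.le).trans
          (div_le_div_of_nonneg_left hAm.le hσp hge)
      have := hC u hu
      linarith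
  have hbd : ∀ x : ℝ, |x| ≤ N → ∀ u ∈ Icc lo hi, |g2 u * (d u + x)| ≤ B := by
    intro x hx u hu
    rw [abs_mul]
    refine mul_le_mul (hΓ' u hu) ?_ (abs_nonneg _) hΓ.le
    exact (abs_add_le _ _).trans (add_le_add (hDm' u hu) hx)
  have hWm : W m ≤ 2 * σ := step W _ hW (fun u hu =>
    (abs_le.1 (hbd μ hμ u ⟨by linarith [hu.1], by linarith [hu.2]⟩)).2)
  have hXm : X m ≤ 2 * σ := step X _ hX (fun u hu => by
    have := (abs_le.1 (hbd μ' hμ' u ⟨by linarith [hu.1], by linarith [hu.2]⟩)).1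
    linarith)
  have hmu : μ0 < μ := by
    by_contra hn
    push Not at hn
    have e1 : W p ≤ W m + (Γ * μ0) * (p - m) := by
      refine slope_le (by linarith) (hW.1.mono (Icc_subset_Icc (by linarith) (by linarith))) ?_
      intro u hu
      have huI : u ∈ Icc lo hi := ⟨by linarith [hu.1], by linarith [hu.2]⟩
      obtain ⟨hw1, hw2⟩ := hW.2.2.2 u ⟨by linarith [hu.1], by linarith [hu.2]⟩
      refine ⟨_, ?_, hw2⟩
      have e2 := div_nonpos_of_nonpos_of_nonneg (hA2 u ⟨hu.1.le, by linarith [hu.2]⟩) hw1.le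
      have e3 := dn u ⟨by linarith [hu.1], by linarith [hu.2]⟩
      have e4 := g2p u huI
      have e5 : g2 u ≤ Γ := (le_abs_self _).trans (hΓ' u huI)
      have e6 : g2 u * (d u + μ) ≤ g2 u * μ0 := mul_le_mul_of_nonneg_left (by linarith) e4.le
      have e7 : g2 u * μ0 ≤ Γ * μ0 := mul_le_mul_of_nonneg_right e5 hμ0p.le
      linarith
    have e1' : W hi ≤ W p + (- (γ * m0)) * (hi - p) := by
      refine slope_le (by linarith) (hW.1.mono (Icc_subset_Icc (by linarith) (by linarith))) ?_
      intro u hu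
      have huI : u ∈ Icc lo hi := ⟨by linarith [hu.1], by linarith [hu.2]⟩
      obtain ⟨hw1, hw2⟩ := hW.2.2.2 u ⟨by linarith [hu.1], by linarith [hu.2]⟩
      refine ⟨_, ?_, hw2⟩
      have e2 := div_nonpos_of_nonpos_of_nonneg
        (hA2 u ⟨by linarith [hu.1], by linarith [hu.2]⟩) hw1.le
      have e3 := hm1' u ⟨hu.1.le, hu.2.le⟩
      have e4 := g2p u huI
      have e5 : γ ≤ g2 u := hγ' u huI
      have e6 : g2 u * (d u + μ) ≤ g2 u * (-m0) := mul_le_mul_of_nonneg_left (by linarith) e4.le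
      have e7 : γ * m0 ≤ g2 u * m0 := mul_le_mul_of_nonneg_right e5 hm0p.le
      linarith
    have e8 : Γ * μ0 * (p - m) ≤ Γ * μ0 * (hi - lo) :=
      mul_le_mul_of_nonneg_left (by linarith) (by positivity)
    have e9 := (hW.2.2.2 hi ⟨by linarith, hib⟩).1
    linarith
  have hmu' : μ' < μ0 := by
    by_contra hn
    push Not at hn
    have e1 : X p' ≤ X m + (- (γ * (μ0 / 2))) * (p' - m) := by
      refine slope_le (by linarith) (hX.1.mono (Icc_subset_Icc (by linarith) (by linarith))) ?_
      intro u hu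
      have huI : u ∈ Icc lo hi := ⟨by linarith [hu.1], by linarith [hu.2]⟩
      obtain ⟨hw1, hw2⟩ := hX.2.2.2 u ⟨by linarith [hu.1], by linarith [hu.2]⟩
      refine ⟨_, ?_, hw2⟩
      have e2 := div_nonpos_of_nonpos_of_nonneg (hA2 u ⟨hu.1.le, by linarith [hu.2]⟩) hw1.le
      have e3 := hdp' u ⟨by linarith [hu.1], by linarith [hu.2]⟩
      have e4 := g2p u huI
      have e5 : γ ≤ g2 u := hγ' u huI
      have e6 : g2 u * (μ0 / 2) ≤ g2 u * (d u + μ') :=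
        mul_le_mul_of_nonneg_left (by linarith) e4.le
      have e7 : γ * (μ0 / 2) ≤ g2 u * (μ0 / 2) :=
        mul_le_mul_of_nonneg_right e5 (by positivity)
      linarith
    have e8 : γ * (μ0 / 2) * ((p' - e) / 2) ≤ γ * (μ0 / 2) * (p' - m) :=
      mul_le_mul_of_nonneg_left (by linarith) (by positivity)
    have e9 := (hX.2.2.2 p' ⟨by linarith, by linarith⟩).1
    linarith
  linarith

/-- Backward bound from the right end. -/
lemma gr_back {A B Y : ℝ → ℝ} {a b p Am Bm : ℝ} (hY : Gr A B a b Y) (h1 : a < p) (h2 : p < b)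
    (hAm : 0 ≤ Am) (hBm : 0 ≤ Bm) (hA : ∀ u ∈ Ioo p b, -Am ≤ A u) (hB : ∀ u ∈ Ioo p b, -Bm ≤ B u) :
    Y p ≤ 1 + (Am + Bm + 1) * (b - p) := by
  set Q := Am + Bm + 1 with hQ
  have := fence' (D := fun u => Y u - (1 + Q * (b - u))) (a := p) (b := b) ?_ ?_ ?_ p
    ⟨le_refl _, h2.le⟩
  · linarith
  · exact (hY.1.mono (Icc_subset_Icc_left h1.le)).sub (by fun_prop)
  · simp [hY.2.2.1]
  · intro u hu h0
    obtain ⟨hy1, hy2⟩ := hY.2.2.2 u ⟨h1.trans hu.1, hu.2⟩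
    refine ⟨_, ?_, hy2.sub ((((hasDerivAt_id u).const_sub b).const_mul Q).const_add 1)⟩
    have hge : 1 ≤ Y u := by
      have : 0 ≤ Q * (b - u) := mul_nonneg (by positivity) (by linarith [hu.2])
      linarith
    have h5 : -Am ≤ A u / Y u := by
      rw [le_div_iff₀ hy1]
      have := hA u hu
      nlinarith
    have := hB u hu
    linarith

/-- Condition (H) gives a primitive of `g₂` which is unbounded below near zero. -/
lemma condH_prim {κ : ℝ → ℝ} {τ : ℝ} (hτ : 0 < τ) (hA2 : A2 κ) (hH : CondH κ) :
    ∃ P : ℝ → ℝ, (∀ u, 0 < u → HasDerivAt P (g2TV κ τ u) u) ∧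
      ∀ M, ∃ ε, 0 < ε ∧ ∀ u, 0 < u → u < ε → P u < M := by
  obtain ⟨hκ1, hκp⟩ := hA2
  have hκc : ContinuousOn κ (Ioi 0) := hκ1.continuousOn
  set q : ℝ → ℝ := fun ρ => 1 / (ρ ^ 3 * κ ρ) with hq
  have hqc : ContinuousOn q (Ioi 0) := by
    refine continuousOn_const.div ((continuousOn_pow 3).mul hκc) ?_
    intro ρ hρ
    have h1 : (0:ℝ) < ρ := hρ
    have := hκp ρ h1
    positivity
  have hqp : ∀ ρ, 0 < ρ → 0 < q ρ := fun ρ hρ => by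
    have := hκp ρ hρ
    simp only [hq]; positivity
  have hqInt : ∀ x y, 0 < x → 0 < y → IntervalIntegrable q volume x y := by
    intro x y hx hy
    refine (hqc.mono ?_).intervalIntegrable
    intro t ht
    have := ht.1
    exact lt_of_lt_of_le (lt_min hx hy) this
  set Ψ : ℝ → ℝ := fun R => ∫ ρ in (1:ℝ)..R, q ρ with hΨ
  have hΨd : ∀ R, 0 < R → HasDerivAt Ψ (q R) R := by
    intro R hR
    have hca : ContinuousAt q R := hqc.continuousAt (Ioi_mem_nhds hR)
    refine intervalIntegral.integral_hasDerivAt_right (hqInt 1 R one_pos hR) ?_ hca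
    exact hqc.stronglyMeasurableAtFilter isOpen_Ioi R hR
  have hΨm : ∀ x y, 0 < x → x ≤ y → Ψ x ≤ Ψ y := by
    intro x y hx hxy
    have : Ψ y - Ψ x = ∫ ρ in x..y, q ρ := by
      simp only [hΨ]
      rw [intervalIntegral.integral_interval_sub_left (hqInt 1 y one_pos (by linarith))
        (hqInt 1 x one_pos hx)]
    have h0 : 0 ≤ ∫ ρ in x..y, q ρ :=
      intervalIntegral.integral_nonneg hxy (fun t ht => (hqp t (by linarith [ht.1])).le)
    linarith
  have hΨu : ∀ M, ∃ R, 1 ≤ R ∧ M < Ψ R := by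
    intro M
    by_contra hn
    push Not at hn
    apply hH
    refine integrableOn_Ioi_of_intervalIntegral_norm_bounded (ι := ℝ) (l := atTop) (b := id)
      M 1 ?_ tendsto_id ?_
    · intro R
      rcases le_total R 1 with h | h
      · simp [Ioc_eq_empty (not_lt.2 h)]
      · exact (intervalIntegrable_iff_integrableOn_Ioc_of_le h).1
          (hqInt 1 R one_pos (by linarith))
    · filter_upwards [eventually_ge_atTop (1:ℝ)] with R hR
      have : ∫ x in (1:ℝ)..R, ‖q x‖ = Ψ R := by
        refine intervalIntegral.integral_congr ?_
        intro x hx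
        rw [uIcc_of_le hR] at hx
        exact Real.norm_of_nonneg (hqp x (by linarith [hx.1])).le
      change ∫ x in (1:ℝ)..R, ‖q x‖ ≤ M
      rw [this]
      exact hn R hR
  refine ⟨fun u => - Ψ (u⁻¹) / (2 * τ), ?_, ?_⟩
  · intro u hu
    have h1 := (hΨd u⁻¹ (inv_pos.2 hu)).comp u (hasDerivAt_inv hu.ne')
    have h2 := (h1.neg).div_const (2 * τ)
    refine h2.congr_deriv ?_
    have := hκp _ (inv_pos.2 hu)
    simp only [hq, g2TV, one_div]
    field_simp
  · intro M
    obtain ⟨R, hR, hR'⟩ := hΨu (- (2 * τ * M))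
    refine ⟨R⁻¹, by positivity, ?_⟩
    intro u hu hu'
    have : R ≤ u⁻¹ := by
      rw [le_inv_comm₀ (by linarith) hu]
      exact hu'.le
    have := hΨm R u⁻¹ (by linarith) this
    simp only
    rw [div_lt_iff₀ (by positivity)]
    linarith

lemma zeroA {A B W P g2 : ℝ → ℝ} {a b p η : ℝ} (hW : Gr A B a b W) (h0 : 0 < a) (h1 : a < p)
    (h2 : p < b) (hP : ∀ u, 0 < u → HasDerivAt P (g2 u) u)
    (hA : ∀ u ∈ Ioo a p, 0 ≤ A u) (hB : ∀ u ∈ Ioo a p, η * g2 u ≤ B u) :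
    η * (P p - P a) ≤ W p := by
  have := slope_le (Y := fun u => η * P u - W u) (p := a) (q := p) (C := 0) h1.le ?_ ?_
  · simp only [hW.2.1] at this
    linarith
  · refine ContinuousOn.sub (ContinuousOn.mul continuousOn_const ?_)
      (hW.1.mono (Icc_subset_Icc_right h2.le))
    intro u hu
    exact (hP u (by linarith [hu.1])).continuousAt.continuousWithinAt
  · intro u hu
    obtain ⟨hw1, hw2⟩ := hW.2.2.2 u ⟨hu.1, hu.2.trans h2⟩
    refine ⟨_, ?_, ((hP u (by linarith [hu.1])).const_mul η).sub hw2⟩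
    have := div_nonneg (hA u hu) hw1.le
    linarith [hB u hu]

lemma zeroB {A B W P g2 : ℝ → ℝ} {a b p η α M : ℝ} (hW : Gr A B a b W) (h0 : 0 < a)
    (h1 : 2 * a < p) (h2 : p < b) (hP : ∀ u, 0 < u → HasDerivAt P (g2 u) u)
    (g2p : ∀ u, 0 < u → 0 < g2 u) (hη : 0 ≤ η)
    (hα : 0 < α) (hM : 0 < M) (hηM : η * M ≤ α / 2) (hWp : W p < M)
    (hA : ∀ u ∈ Ioo (2 * a) p, α * g2 u ≤ A u) (hB : ∀ u ∈ Ioo (2 * a) p, - η * g2 u ≤ B u) :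
    α / 2 * (P p - P (2 * a)) ≤ M ^ 2 / 2 := by
  have hsub : Icc (2 * a) p ⊆ Icc a b := Icc_subset_Icc (by linarith) h2.le
  have hle : ∀ u ∈ Icc (2 * a) p, W u - M ≤ 0 := by
    refine fence' (D := fun u => W u - M) ((hW.1.mono hsub).sub continuousOn_const)
      (by linarith) ?_
    intro u hu hz
    obtain ⟨hw1, hw2⟩ := hW.2.2.2 u ⟨by linarith [hu.1], hu.2.trans h2⟩
    refine ⟨_, ?_, hw2.sub_const M⟩
    have hWM : W u = M := by linarith
    have hg := g2p u (by linarith [hu.1])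
    have e1 : α * g2 u / M ≤ A u / W u := by
      rw [hWM]; exact div_le_div_of_nonneg_right (hA u hu) hM.le
    have e2 : η * g2 u < α * g2 u / M := by
      rw [lt_div_iff₀ hM]
      nlinarith
    linarith [hB u hu]
  have := slope_le (Y := fun u => α / 2 * P u - W u ^ 2 / 2) (p := 2 * a) (q := p) (C := 0)
    h1.le ?_ ?_
  · have hWp0 := (hW.2.2.2 p ⟨by linarith, h2⟩).1
    have : W p ^ 2 ≤ M ^ 2 := by nlinarith
    have : 0 ≤ W (2 * a) ^ 2 := sq_nonneg _
    linarith
  · refine ContinuousOn.sub (ContinuousOn.mul continuousOn_const ?_)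
      (((hW.1.mono hsub).pow 2).div_const 2)
    intro u hu
    exact (hP u (by linarith [hu.1])).continuousAt.continuousWithinAt
  · intro u hu
    obtain ⟨hw1, hw2⟩ := hW.2.2.2 u ⟨by linarith [hu.1], hu.2.trans h2⟩
    refine ⟨_, ?_, ((hP u (by linarith [hu.1])).const_mul (α / 2)).sub
      ((hw2.pow 2).div_const 2)⟩
    have hg := g2p u (by linarith [hu.1])
    have e0 : W u ≤ M := by linarith [hle u ⟨hu.1.le, hu.2.le⟩]
    have e1 : (↑(2:ℕ) * W u ^ (2 - 1) * (A u / W u + B u)) / 2 = A u + B u * W u := by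
      push_cast
      field_simp
    have e2 : - η * g2 u * W u ≤ B u * W u := mul_le_mul_of_nonneg_right (hB u hu) hw1.le
    have e3 : η * g2 u * W u ≤ η * g2 u * M :=
      mul_le_mul_of_nonneg_left e0 (by positivity)
    have e4 : η * M * g2 u ≤ α / 2 * g2 u := mul_le_mul_of_nonneg_right hηM hg.le
    rw [e1]
    have := hA u hu
    linarith

lemma V'_mono {V V' V'' : ℝ → ℝ} {UM : ℝ} (hA1 : A1 V V' V'' UM) :
    StrictMonoOn V' (Icc 0 UM) ∧ StrictAntiOn V' (Ici UM) := by
  obtain ⟨-, h2, h3, -, -, -, -, h8, h9, h10⟩ := hA1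
  have rolle : ∀ x y, 0 ≤ x → x < y → V' x = V' y → ∃ z ∈ Ioo x y, z = UM := by
    intro x y hx hxy he
    obtain ⟨z, hz, hz0⟩ := exists_hasDerivAt_eq_zero hxy
      (h2.mono (fun t ht => hx.trans ht.1)) he (f' := V'')
      (fun t ht => h3 t (lt_of_le_of_lt hx ht.1))
    exact ⟨z, hz, (h10 z (lt_of_le_of_lt hx hz.1)).1 hz0⟩
  constructor
  · have hinj : InjOn V' (Icc 0 UM) := by
      intro x hx y hy he
      by_contra hne
      rcases lt_or_gt_of_ne hne with h | h
      · obtain ⟨z, hz, rfl⟩ := rolle x y hx.1 h he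
        linarith [hz.2, hy.2]
      · obtain ⟨z, hz, rfl⟩ := rolle y x hy.1 h he.symm
        linarith [hz.2, hx.2]
    rcases ContinuousOn.strictMonoOn_of_injOn_Icc' h8.le (h2.mono (fun t ht => ht.1)) hinj with h | h
    · exact h
    · have := h (⟨by linarith, by linarith⟩ : UM / 2 ∈ Icc 0 UM) ⟨h8.le, le_refl _⟩ (by linarith)
      have := h9 (UM / 2) (by linarith)
      linarith
  · intro x hx y hy hxy
    have hx' : UM ≤ x := hx
    have hinj : InjOn V' (Icc UM y) := by
      intro s hs t ht he
      by_contra hne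
      rcases lt_or_gt_of_ne hne with h | h
      · obtain ⟨z, hz, rfl⟩ := rolle s t (by linarith [hs.1]) h he
        linarith [hz.1, hs.1]
      · obtain ⟨z, hz, rfl⟩ := rolle t s (by linarith [ht.1]) h he.symm
        linarith [hz.1, ht.1]
    have hUy : UM < y := lt_of_le_of_lt hx' hxy
    rcases ContinuousOn.strictMonoOn_of_injOn_Icc' hUy.le
      (h2.mono (fun t ht => h8.le.trans ht.1)) hinj with h | h
    · have := h (⟨le_refl _, hUy.le⟩ : UM ∈ Icc UM y) ⟨hUy.le, le_refl _⟩ hUy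
      have := h9 y (by linarith)
      linarith
    · exact h ⟨hx', hxy.le⟩ ⟨hUy.le, le_refl _⟩ hxy

lemma F_mono {V V' V'' : ℝ → ℝ} {UM K e1 e2 : ℝ} (hA1 : A1 V V' V'' UM)
    (he1 : e1 ∈ Ioo 0 UM) (hV1 : V' e1 = K) (he2 : UM < e2) (hV2 : V' e2 = K) :
    (∀ u, 0 < u → HasDerivAt (fun u => K * u - V u) (K - V' u) u) ∧
    ContinuousOn (fun u => K * u - V u) (Ici 0) ∧
    (∀ u ∈ Ioo e1 e2, K < V' u) ∧
    StrictMonoOn (fun u => K * u - V u) (Icc 0 e1) ∧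
    StrictAntiOn (fun u => K * u - V u) (Icc e1 e2) ∧
    StrictMonoOn (fun u => K * u - V u) (Ici e2) := by
  obtain ⟨m1, m2⟩ := V'_mono hA1
  have hder : ∀ u, 0 < u → HasDerivAt (fun u => K * u - V u) (K - V' u) u := by
    intro u hu
    have h1 := (hA1.1 u hu.le).hasDerivAt (Ici_mem_nhds hu)
    have := ((hasDerivAt_id u).const_mul K).sub h1
    exact this.congr_deriv (by simp)
  have hc : ContinuousOn (fun u => K * u - V u) (Ici 0) := by
    refine ContinuousOn.sub (by fun_prop) ?_
    intro u hu
    exact (hA1.1 u hu).continuousWithinAt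
  have h12 : ∀ u ∈ Ioo e1 e2, K < V' u := by
    intro u hu
    rcases le_total u UM with h | h
    · have := m1 ⟨he1.1.le, he1.2.le⟩ ⟨by linarith [hu.1, he1.1], h⟩ hu.1
      linarith
    · have := m2 h he2.le hu.2
      linarith
  refine ⟨hder, hc, h12, ?_, ?_, ?_⟩
  · refine strictMonoOn_of_deriv_pos (convex_Icc _ _) (hc.mono (fun t ht => ht.1)) ?_
    rw [interior_Icc]
    intro u hu
    rw [(hder u hu.1).deriv]
    have := m1 ⟨hu.1.le, by linarith [hu.2, he1.2]⟩ ⟨he1.1.le, he1.2.le⟩ hu.2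
    linarith
  · refine strictAntiOn_of_deriv_neg (convex_Icc _ _)
      (hc.mono (fun t ht => he1.1.le.trans ht.1)) ?_
    rw [interior_Icc]
    intro u hu
    rw [(hder u (he1.1.trans hu.1)).deriv]
    linarith [h12 u hu]
  · have h02 : 0 < e2 := by linarith [he1.1, he1.2]
    refine strictMonoOn_of_deriv_pos (convex_Ici _) (hc.mono (fun t ht => h02.le.trans ht)) ?_
    rw [interior_Ici]
    intro u hu
    have hu' : e2 < u := hu
    rw [(hder u (h02.trans hu')).deriv]
    have := m2 he2.le (by linarith : UM ≤ u) hu'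
    linarith

/-- The geometric part of the family. -/
lemma zeros_loc {F : ℝ → ℝ} {e1 e2 c u1 u0 u2 : ℝ} (h01 : 0 < e1) (h12 : e1 < e2)
    (m1 : StrictMonoOn F (Icc 0 e1)) (m2 : StrictAntiOn F (Icc e1 e2)) (m3 : StrictMonoOn F (Ici e2))
    (hc1 : F e2 < c) (hc2 : c < F e1) (p1 : 0 < u1) (p2 : u1 < u0) (p3 : u0 < u2)
    (z1 : F u1 = c) (z0 : F u0 = c) (z2 : F u2 = c) :
    u1 < e1 ∧ e1 < u0 ∧ u0 < e2 ∧ e2 < u2 ∧ (∀ u ∈ Ioi (0:ℝ), u < u1 → F u < c) ∧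
    (∀ u ∈ Ioo u1 u0, c < F u) ∧ (∀ u ∈ Ioo u0 u2, F u < c) ∧
    (∀ u ∈ Ioi (0:ℝ), u2 < u → c < F u) := by
  have A : ∀ x y, 0 < x → x < y → F x = c → F y = c → e1 < y := by
    intro x y hx hxy hFx hFy
    by_contra hn
    push Not at hn
    have := m1 ⟨hx.le, by linarith⟩ ⟨by linarith, hn⟩ hxy
    linarith
  have B : ∀ x y, x < y → F x = c → F y = c → x < e1 ∨ e2 < y := by
    intro x y hxy hFx hFy
    by_contra hn
    push Not at hn
    have := m2 ⟨hn.1, by linarith [hn.2]⟩ ⟨by linarith [hn.1], hn.2⟩ hxy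
    linarith
  have C : ∀ x y, x < y → F x = c → F y = c → x < e2 := by
    intro x y hxy hFx hFy
    by_contra hn
    push Not at hn
    have := m3 hn (by simpa using hn.trans hxy.le) hxy
    linarith
  have k1 := A u1 u0 p1 p2 z1 z0
  have k2 := C u0 u2 p3 z0 z2
  have k3 : u1 < e1 := by
    rcases B u1 u0 p2 z1 z0 with h | h
    · exact h
    · linarith
  have k4 : e2 < u2 := by
    rcases B u0 u2 p3 z0 z2 with h | h
    · linarith
    · exact h
  refine ⟨k3, k1, k2, k4, ?_, ?_, ?_, ?_⟩
  · intro u hu h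
    have := m1 ⟨le_of_lt hu, by linarith⟩ ⟨p1.le, k3.le⟩ h
    linarith
  · intro u hu
    rcases le_total u e1 with h | h
    · have := m1 ⟨p1.le, k3.le⟩ ⟨by linarith [hu.1], h⟩ hu.1
      linarith
    · have := m2 ⟨h, by linarith [hu.2]⟩ ⟨k1.le, k2.le⟩ hu.2
      linarith
  · intro u hu
    rcases le_total u e2 with h | h
    · have := m2 ⟨k1.le, k2.le⟩ ⟨by linarith [hu.1], h⟩ hu.1
      linarith
    · have := m3 h k4.le hu.2
      linarith
  · intro u hu h
    have := m3 k4.le (by simpa using (k4.trans h).le) h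
    linarith

lemma high_end {g1 g2 d F μb μf u1 u0 u2 : ℝ → ℝ} {C0 C1 e1 e2 UM : ℝ} (hC : C0 < C1)
    (HB : Fam (Ioi 0) g1 g2 (fun u => g2 u * d u) F C0 C1 e1 e2 u1 u0 u2 μb)
    (HF : Fam (Ioi 0) g1 g2 (fun u => - (g2 u * d u)) F C0 C1 e1 e2 u1 u0 u2 (fun c => - μf c))
    (h01 : 0 < e1) (h1U : e1 < UM) (hU2 : UM < e2) (dc : ContinuousOn d (Ioi 0))
    (de : d e1 = 0) (dn : ∀ u ∈ Ioo e1 e2, d u < 0)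
    (m1 : StrictMonoOn F (Icc 0 e1)) (m2 : StrictAntiOn F (Icc e1 e2)) (hC1 : F e1 = C1) :
    ∃ c ∈ Ioo C0 C1, μf c < μb c := by
  by_contra hcon
  push Not at hcon
  set cb := (C0 + C1) / 2 with hcb
  have hcbI : cb ∈ Ioo C0 C1 := ⟨by linarith, by linarith⟩
  set lo := u1 cb with hlo
  have hlo0 : 0 < lo := HB.aS cb hcbI
  have hloe : lo < e1 := HB.o1 cb hcbI
  have hJ : Icc lo UM ⊆ Ioi 0 := fun u hu => lt_of_lt_of_le hlo0 hu.1
  obtain ⟨G, hG, hG'⟩ := bdd_of_cont (HB.g1c.mono hJ)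
  obtain ⟨Φ, hΦ, hΦ'⟩ := bdd_of_cont (HB.Fc.mono hJ)
  set Am := G * (Φ + |C0|) with hAm
  have hAmp : 0 < Am := by positivity
  set N := |μb cb| + |μf cb| + 1 with hN
  have hNp : 0 < N := by positivity
  obtain ⟨r0, hr0, H⟩ := end_lem (Am := Am) (N := N) hloe h1U (HB.g2c.mono hJ) (dc.mono hJ)
    (fun u hu => HB.g2p u (hJ hu)) de (fun u hu => dn u ⟨hu.1, by linarith [hu.2]⟩) hAmp hNp
  set r := min r0 (min (UM - e1) e1) / 2 with hr
  have hmp : 0 < min r0 (min (UM - e1) e1) := lt_min hr0 (lt_min (by linarith) h01)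
  have hrp : 0 < r := by positivity
  have hr1 : r < r0 := by linarith [min_le_left r0 (min (UM - e1) e1)]
  have hr2 : r < UM - e1 := by
    linarith [min_le_right r0 (min (UM - e1) e1), min_le_left (UM - e1) e1]
  have hr3 : r < e1 := by
    linarith [min_le_right r0 (min (UM - e1) e1), min_le_right (UM - e1) e1]
  have hx1 : F (e1 - r) < C1 := by
    rw [← hC1]
    exact m1 ⟨by linarith, by linarith⟩ ⟨h01.le, le_refl _⟩ (by linarith)
  have hx2 : F (e1 + r) < C1 := by
    rw [← hC1]
    exact m2 ⟨le_refl _, by linarith⟩ ⟨by linarith, by linarith⟩ (by linarith)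
  obtain ⟨c, hc1, hc2⟩ := exists_between (max_lt hcbI.2 (max_lt hx1 hx2))
  have hc3 : cb < c := (le_max_left _ _).trans_lt hc1
  have hc4 : F (e1 - r) < c := ((le_max_left _ _).trans (le_max_right _ _)).trans_lt hc1
  have hc5 : F (e1 + r) < c := ((le_max_right _ _).trans (le_max_right _ _)).trans_lt hc1
  have hcI : c ∈ Ioo C0 C1 := ⟨by linarith, hc2⟩
  have ho1 := HB.o1 c hcI
  have ho2 := HB.o2 c hcI
  have ho3 := HB.o3 c hcI
  have ho4 := HB.o4 c hcI
  have hu1 : e1 - r < u1 c := by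
    have h0 : 0 < u1 c := HB.aS c hcI
    rw [← m1.lt_iff_lt ⟨by linarith, by linarith⟩ ⟨h0.le, ho1.le⟩, HB.za c hcI]
    exact hc4
  have hu0 : u0 c < e1 + r := by
    rw [← m2.lt_iff_gt ⟨by linarith, by linarith⟩ ⟨ho2.le, ho3.le⟩, HB.zm c hcI]
    exact hc5
  obtain ⟨W, hW⟩ := HB.gr c hcI
  obtain ⟨X, hX⟩ := HF.gr c hcI
  have hb1 := HB.mono hcbI hcI hc3
  have hf1 := HF.mono hcbI hcI hc3
  have hbf := hcon c hcI
  have ha := HB.a_lt hcbI hcI hc3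
  have hμ1 : |μb c| ≤ N := by
    rw [abs_le]
    constructor <;> linarith [neg_abs_le (μb cb), le_abs_self (μf cb), abs_nonneg (μb cb),
      abs_nonneg (μf cb)]
  have hμ2 : |μf c| ≤ N := by
    rw [abs_le]
    constructor <;> linarith [neg_abs_le (μb cb), le_abs_self (μf cb), abs_nonneg (μb cb),
      abs_nonneg (μf cb)]
  have := H (u1 c) (u0 c) (u2 c) (μb c) (μf c) (fun u => g1 u * (F u - c)) W X (by linarith) ha.le ho1 ho2
    (by linarith) (by linarith) hμ1 hμ2 ?_ ?_ ?_ ?_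
  · linarith
  · intro u hu
    have huJ : u ∈ Icc lo UM := ⟨by linarith [hu.1], by linarith [hu.2]⟩
    have e1 := (le_abs_self _).trans (hG' u huJ)
    have e2 := (le_abs_self _).trans (hΦ' u huJ)
    have e3 : F u - c ≤ Φ + |C0| := by linarith [neg_abs_le C0, hcI.1]
    have e4 := HB.g1p u (hJ huJ)
    exact (mul_le_mul_of_nonneg_left e3 e4.le).trans
      (mul_le_mul_of_nonneg_right e1 (by positivity))
  · intro u hu
    have hu0 : u ∈ Ioi (0:ℝ) := show (0:ℝ) < u by linarith [hu.1]
    refine mul_nonpos_of_nonneg_of_nonpos (HB.g1p u hu0).le ?_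
    rcases eq_or_lt_of_le hu.1 with e | e
    · rw [← e, HB.zm c hcI]; simp
    · linarith [HB.s3 c hcI u ⟨e, hu.2⟩]
  · convert hW using 2; ring
  · convert hX using 2; ring

lemma low_end1 {g1 g2 d F μb μf u1 u0 u2 : ℝ → ℝ} {C0 C1 e1 e2 UM : ℝ} (hC : C0 < C1)
    (HB : Fam (Ioi 0) g1 g2 (fun u => g2 u * d u) F C0 C1 e1 e2 u1 u0 u2 μb)
    (HF : Fam (Ioi 0) g1 g2 (fun u => - (g2 u * d u)) F C0 C1 e1 e2 u1 u0 u2 (fun c => - μf c))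
    (h01 : 0 < e1) (h1U : e1 < UM) (hU2 : UM < e2) (dc : ContinuousOn d (Ioi 0))
    (de : d e2 = 0) (dn : ∀ u ∈ Ioo e1 e2, d u < 0)
    (m2 : StrictAntiOn F (Icc e1 e2)) (m3 : StrictMonoOn F (Ici e2)) (hC0 : F e2 = C0) :
    ∃ c ∈ Ioo C0 C1, μb c < μf c := by
  by_contra hcon
  push Not at hcon
  set cb := (C0 + C1) / 2 with hcb
  have hcbI : cb ∈ Ioo C0 C1 := ⟨by linarith, by linarith⟩
  set lo := u2 cb with hlo
  have hloe : e2 < lo := HB.o4 cb hcbI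
  have hJ : Icc UM lo ⊆ Ioi 0 := fun u hu => show (0:ℝ) < u by linarith [hu.1]
  have hneg : ∀ v, v ∈ Icc (-lo) (-UM) → -v ∈ Icc UM lo := fun v hv =>
    ⟨by linarith [hv.2], by linarith [hv.1]⟩
  have hcomp : ∀ g : ℝ → ℝ, ContinuousOn g (Ioi 0) →
      ContinuousOn (fun v => g (-v)) (Icc (-lo) (-UM)) :=
    fun g hg => hg.comp continuous_neg.continuousOn (fun v hv => hJ (hneg v hv))
  obtain ⟨G, hG, hG'⟩ := bdd_of_cont (HB.g1c.mono hJ)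
  obtain ⟨Φ, hΦ, hΦ'⟩ := bdd_of_cont (HB.Fc.mono hJ)
  set Am := G * (Φ + |C1|) with hAm
  have hAmp : 0 < Am := by positivity
  set N := |μb cb| + |μf cb| + 1 with hN
  have hNp : 0 < N := by positivity
  obtain ⟨r0, hr0, H⟩ := end_lem (g2 := fun v => g2 (-v)) (d := fun v => d (-v)) (lo := -lo)
    (e := -e2) (hi := -UM) (Am := Am) (N := N) (by linarith) (by linarith) (hcomp _ HB.g2c)
    (hcomp _ dc) (fun u hu => HB.g2p _ (hJ (hneg u hu))) (by simpa using de)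
    (fun u hu => dn _ ⟨by linarith [hu.2], by linarith [hu.1]⟩) hAmp hNp
  set r := min r0 (e2 - UM) / 2 with hr
  have hmp : 0 < min r0 (e2 - UM) := lt_min hr0 (by linarith)
  have hrp : 0 < r := by positivity
  have hr1 : r < r0 := by linarith [min_le_left r0 (e2 - UM)]
  have hr2 : r < e2 - UM := by linarith [min_le_right r0 (e2 - UM)]
  have hx1 : C0 < F (e2 + r) := by
    rw [← hC0]
    exact m3 (show e2 ∈ Set.Ici e2 from le_refl e2) (show e2 ≤ e2 + r by linarith) (by linarith)
  have hx2 : C0 < F (e2 - r) := by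
    rw [← hC0]
    exact m2 ⟨by linarith, by linarith⟩ ⟨by linarith, le_refl _⟩ (by linarith)
  obtain ⟨c, hc1, hc2⟩ := exists_between (lt_min hcbI.1 (lt_min hx1 hx2))
  have hc3 : c < cb := hc2.trans_le (min_le_left _ _)
  have hc4 : c < F (e2 + r) := hc2.trans_le ((min_le_right _ _).trans (min_le_left _ _))
  have hc5 : c < F (e2 - r) := hc2.trans_le ((min_le_right _ _).trans (min_le_right _ _))
  have hcI : c ∈ Ioo C0 C1 := ⟨hc1, by linarith⟩
  have ho1 := HB.o1 c hcI
  have ho2 := HB.o2 c hcI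
  have ho3 := HB.o3 c hcI
  have ho4 := HB.o4 c hcI
  have hu2 : u2 c < e2 + r := by
    rw [← m3.lt_iff_lt (show e2 ≤ u2 c from ho4.le) (show e2 ≤ e2 + r by linarith), HB.zb c hcI]
    exact hc4
  have hu0 : e2 - r < u0 c := by
    rw [← m2.lt_iff_gt ⟨ho2.le, ho3.le⟩ ⟨by linarith, by linarith⟩, HB.zm c hcI]
    exact hc5
  obtain ⟨W, hW⟩ := HB.gr c hcI
  obtain ⟨X, hX⟩ := HF.gr c hcI
  have hb1 := HB.mono hcI hcbI hc3
  have hf1 := HF.mono hcI hcbI hc3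
  have hbf := hcon c hcI
  have ha := HB.b_lt hcI hcbI hc3
  have hμ1 : |μb c| ≤ N := by
    rw [abs_le]
    constructor <;> linarith [neg_abs_le (μf cb), le_abs_self (μb cb), abs_nonneg (μb cb),
      abs_nonneg (μf cb)]
  have hμ2 : |μf c| ≤ N := by
    rw [abs_le]
    constructor <;> linarith [neg_abs_le (μf cb), le_abs_self (μb cb), abs_nonneg (μb cb),
      abs_nonneg (μf cb)]
  have := H (-u2 c) (-u0 c) (-u1 c) (μf c) (μb c) (fun v => -(g1 (-v) * (F (-v) - c)))
    (fun v => X (-v)) (fun v => W (-v)) (by linarith) (by linarith) (by linarith) (by linarith)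
    (by linarith) (by linarith) hμ2 hμ1 ?_ ?_ ?_ ?_
  · linarith
  · intro v hv
    have huJ : -v ∈ Icc UM lo := ⟨by linarith [hv.2], by linarith [hv.1]⟩
    have e1 := (le_abs_self _).trans (hG' _ huJ)
    have e2 := (abs_le.1 (hΦ' _ huJ)).1
    have e3 : c - F (-v) ≤ Φ + |C1| := by linarith [le_abs_self C1, hcI.2]
    have e4 := HB.g1p _ (hJ huJ)
    have := (mul_le_mul_of_nonneg_left e3 e4.le).trans
      (mul_le_mul_of_nonneg_right e1 (by positivity))
    linarith
  · intro v hv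
    have h0 : 0 < u1 c := HB.aS c hcI
    have hu0 : -v ∈ Ioi (0:ℝ) := show (0:ℝ) < -v by linarith [hv.2]
    have : 0 ≤ g1 (-v) * (F (-v) - c) := by
      refine mul_nonneg (HB.g1p _ hu0).le ?_
      rcases eq_or_lt_of_le hv.1 with e | e
      · rw [← e, neg_neg, HB.zm c hcI]; simp
      · linarith [HB.s2 c hcI (-v) ⟨by linarith [hv.2], by linarith⟩]
    linarith
  · convert hX.reflect using 2; ring
  · convert hW.reflect using 2; ring

lemma low_end2 {g1 g2 d F μb μf u1 u0 u2 P : ℝ → ℝ} {C0 C1 e1 e2 K : ℝ} (hC : C0 < C1)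
    (HB : Fam (Ioi 0) g1 g2 (fun u => g2 u * d u) F C0 C1 e1 e2 u1 u0 u2 μb)
    (HF : Fam (Ioi 0) g1 g2 (fun u => - (g2 u * d u)) F C0 C1 e1 e2 u1 u0 u2 (fun c => - μf c))
    (h01 : 0 < e1) (hK : 0 < K) (dc : ContinuousOn d (Ici 0))
    (hg : ∀ u, 0 < u → g1 u * K * u = 2 * g2 u)
    (hFd : ∀ u, 0 < u → HasDerivAt F (K * d u) u)
    (de : d e1 = 0) (dn : StrictAntiOn d (Icc 0 e1))
    (m1 : StrictMonoOn F (Icc 0 e1)) (hC0 : F 0 = C0)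
    (hP : ∀ u, 0 < u → HasDerivAt P (g2 u) u)
    (hPu : ∀ M, ∃ ε, 0 < ε ∧ ∀ u, 0 < u → u < ε → P u < M) :
    ∃ c ∈ Ioo C0 C1, μb c < μf c := by
  by_contra hcon
  push Not at hcon
  set cb := (C0 + C1) / 2 with hcb
  have hcbI : cb ∈ Ioo C0 C1 := ⟨by linarith, by linarith⟩
  have he12 := HB.e_lt hcbI
  set U2 := u2 cb with hU2
  have hU2e : e2 < U2 := HB.o4 cb hcbI
  set N := |μb cb| + |μf cb| + 1 with hN
  have hNp : 0 < N := by positivity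
  have hμ : ∀ c ∈ Ioo C0 C1, c < cb → |μb c| ≤ N ∧ |μf c| ≤ N := by
    intro c hcI hc3
    have hb1 := HB.mono hcI hcbI hc3
    have hf1 := HF.mono hcI hcbI hc3
    have hbf := hcon c hcI
    constructor <;> rw [abs_le] <;>
    constructor <;> linarith [neg_abs_le (μf cb), le_abs_self (μb cb), abs_nonneg (μb cb),
      abs_nonneg (μf cb)]
  have hbound : ∀ p, 0 < p → p < e1 → ∃ M, 0 < M ∧ ∀ c ∈ Ioo C0 C1, c < cb → u1 c < p →
      ∀ μ, |μ| ≤ N → ∀ s : ℝ, |s| = 1 → ∀ Y, Gr (fun u => g1 u * (F u - c))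
        (fun u => s * (g2 u * (d u + μ))) (u1 c) (u2 c) Y → Y p < M := by
    intro p hp hpe
    have hJ : Icc p U2 ⊆ Ioi 0 := fun u hu => lt_of_lt_of_le hp hu.1
    obtain ⟨G, hG, hG'⟩ := bdd_of_cont (HB.g1c.mono hJ)
    obtain ⟨Φ, hΦ, hΦ'⟩ := bdd_of_cont (HB.Fc.mono hJ)
    obtain ⟨Γ, hΓ, hΓ'⟩ := bdd_of_cont (HB.g2c.mono hJ)
    obtain ⟨Dm, hDm, hDm'⟩ := bdd_of_cont (dc.mono (hJ.trans Ioi_subset_Ici_self))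
    set Am := G * (Φ + |C1|) with hAm
    set Bm := Γ * (Dm + N) with hBm
    have hAmp : 0 < Am := by positivity
    have hBmp : 0 < Bm := by positivity
    have hU2p : 0 < U2 - p := by linarith
    refine ⟨2 + (Am + Bm + 1) * (U2 - p), by positivity, ?_⟩
    intro c hcI hccb hup μ hμN s hs Y hY
    have hb2 := HB.b_lt hcI hcbI hccb
    have ho4 := HB.o4 c hcI
    have := gr_back (p := p) (Am := Am) (Bm := Bm) hY hup (by linarith) hAmp.le hBmp.le ?_ ?_
    · have : (Am + Bm + 1) * (u2 c - p) ≤ (Am + Bm + 1) * (U2 - p) :=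
        mul_le_mul_of_nonneg_left (by linarith) (by positivity)
      linarith
    · intro u hu
      have huJ : u ∈ Icc p U2 := ⟨hu.1.le, by linarith [hu.2]⟩
      have e1 := (le_abs_self _).trans (hG' _ huJ)
      have e2 := (abs_le.1 (hΦ' _ huJ)).1
      have e3 : c - F u ≤ Φ + |C1| := by linarith [le_abs_self C1, hcI.2]
      have e4 := HB.g1p _ (hJ huJ)
      have := (mul_le_mul_of_nonneg_left e3 e4.le).trans
        (mul_le_mul_of_nonneg_right e1 (by positivity))
      linarith
    · intro u hu
      have huJ : u ∈ Icc p U2 := ⟨hu.1.le, by linarith [hu.2]⟩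
      have e1 : |s * (g2 u * (d u + μ))| ≤ Bm := by
        rw [abs_mul, abs_mul, hs, one_mul]
        refine mul_le_mul (hΓ' u huJ) ?_ (abs_nonneg _) hΓ.le
        exact (abs_add_le _ _).trans (add_le_add (hDm' u huJ) hμN)
      exact (abs_le.1 e1).1
  set p := e1 / 2 with hp
  have hp0 : 0 < p := by positivity
  have hpe : p < e1 := by linarith
  set α := d p with hα
  have hαp : 0 < α := by
    have := dn ⟨hp0.le, hpe.le⟩ ⟨h01.le, le_refl _⟩ hpe
    linarith
  obtain ⟨M, hM, hM'⟩ := hbound p hp0 hpe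
  set η := α / (2 * M) with hη
  have hηp : 0 < η := by positivity
  obtain ⟨t, ht, ht'⟩ := Metric.continuousWithinAt_iff.1 (dc 0 (show (0:ℝ) ≤ 0 from le_refl _)) (η / 2) (by positivity)
  set p' := min (t / 2) p with hp'
  have hp'0 : 0 < p' := by positivity
  have hp'p : p' ≤ p := min_le_right _ _
  have hp't : p' ≤ t / 2 := min_le_left _ _
  have hdp' : ∀ u, 0 ≤ u → u ≤ p' → d 0 - η / 2 ≤ d u := by
    intro u hu0 hu1
    have := ht' (x := u) hu0 (by rw [Real.dist_eq, abs_lt]; constructor <;> linarith)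
    rw [Real.dist_eq, abs_lt] at this
    linarith [this.1]
  obtain ⟨M', hM1, hM1'⟩ := hbound p' hp'0 (by linarith)
  obtain ⟨ε1, hε1, hε1'⟩ := hPu (P p - (M ^ 2 / α + 1))
  obtain ⟨ε2, hε2, hε2'⟩ := hPu (P p' - 2 * M' / η)
  set y := min (min (ε1 / 2) ε2) (min (p / 2) p') with hy
  have hy0 : 0 < y := by positivity
  have hy1 : y ≤ ε1 / 2 := (min_le_left _ _).trans (min_le_left _ _)
  have hy2 : y ≤ ε2 := (min_le_left _ _).trans (min_le_right _ _)
  have hy3 : y ≤ p / 2 := (min_le_right _ _).trans (min_le_left _ _)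
  have hy4 : y ≤ p' := (min_le_right _ _).trans (min_le_right _ _)
  have hFy : C0 < F y := by
    rw [← hC0]
    exact m1 ⟨le_refl _, h01.le⟩ ⟨hy0.le, by linarith⟩ hy0
  obtain ⟨c, hc1, hc2⟩ := exists_between (lt_min hcbI.1 hFy)
  have hc3 : c < cb := hc2.trans_le (min_le_left _ _)
  have hc4 : c < F y := hc2.trans_le (min_le_right _ _)
  have hcI : c ∈ Ioo C0 C1 := ⟨hc1, by linarith [hcbI.2]⟩
  have ho1 := HB.o1 c hcI
  have ho2 := HB.o2 c hcI
  have ho3 := HB.o3 c hcI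
  have ho4 := HB.o4 c hcI
  have ha0 : 0 < u1 c := HB.aS c hcI
  have hay : u1 c < y := by
    rw [← m1.lt_iff_lt ⟨ha0.le, ho1.le⟩ ⟨hy0.le, by linarith⟩, HB.za c hcI]
    exact hc4
  obtain ⟨hμ1, hμ2⟩ := hμ c hcI hc3
  obtain ⟨W, hW⟩ := HB.gr c hcI
  obtain ⟨X, hX⟩ := HF.gr c hcI
  have hWp : W p' < M' := by
    refine hM1' c hcI hc3 (by linarith) (μb c) hμ1 1 (by simp) W ?_
    convert hW using 2; ring
  have hXp : X p < M := by
    refine hM' c hcI hc3 (by linarith) (μf c) hμ2 (-1) (by simp) X ?_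
    convert hX using 2; ring
  have claim1 : η < d 0 + μf c := by
    by_contra hn
    push Not at hn
    have hPa := hε1' (2 * u1 c) (by linarith) (by linarith)
    have := zeroB (p := p) (η := η) (α := α) (M := M) hX ha0 (by linarith) (by linarith) hP
      HB.g2p hηp.le hαp hM (by rw [hη]; field_simp; exact le_refl _) hXp ?_ ?_
    · have e1 : α / 2 * (M ^ 2 / α + 1) = M ^ 2 / 2 + α / 2 := by field_simp
      have e2 : α / 2 * (M ^ 2 / α + 1) ≤ α / 2 * (P p - P (2 * u1 c)) :=
        mul_le_mul_of_nonneg_left (by linarith) (by positivity)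
      linarith
    · intro u hu
      have hu0 : 0 < u := by linarith [hu.1]
      have hF : -F u ≤ -F (u1 c) + (-(K * α)) * (u - u1 c) := by
        refine slope_le (Y := fun u => - F u) (by linarith [hu.1]) ?_ ?_
        · refine (HB.Fc.mono ?_).neg
          intro x hx
          exact lt_of_lt_of_le ha0 hx.1
        · intro x hx
          have hx0 : 0 < x := by linarith [hx.1]
          refine ⟨_, ?_, (hFd x hx0).neg⟩
          have : α ≤ d x := (dn ⟨hx0.le, by linarith [hx.2, hu.2]⟩ ⟨hp0.le, hpe.le⟩
            (by linarith [hx.2, hu.2])).le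
          have := mul_le_mul_of_nonneg_left this hK.le
          linarith
      rw [HB.za c hcI] at hF
      have hF2 : K * α * (u / 2) ≤ F u - c := by
        have : K * α * (u / 2) ≤ K * α * (u - u1 c) :=
          mul_le_mul_of_nonneg_left (by linarith [hu.1]) (by positivity)
        linarith
      have := mul_le_mul_of_nonneg_left hF2 (HB.g1p u hu0).le
      have h2 := hg u hu0
      have h3 : g1 u * (K * α * (u / 2)) = α * g2 u := by
        have : g1 u * (K * α * (u / 2)) = (g1 u * K * u) * (α / 2) := by ring
        rw [this, h2]; ring
      linarith
    · intro u hu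
      have hu0 : 0 < u := by linarith [hu.1]
      have h1 : d u ≤ d 0 := (dn ⟨le_refl _, h01.le⟩ ⟨hu0.le, by linarith [hu.2]⟩ hu0).le
      have := mul_le_mul_of_nonneg_right (show d u + μf c ≤ η by linarith) (HB.g2p u hu0).le
      linarith
  have claim2 : d 0 + μb c < η := by
    by_contra hn
    push Not at hn
    have hPa := hε2' (u1 c) ha0 (by linarith)
    have := zeroA (p := p') (η := η / 2) hW ha0 (by linarith) (by linarith) hP ?_ ?_
    · have e1 : η / 2 * (2 * M' / η) = M' := by field_simp
      have e2 : η / 2 * (2 * M' / η) ≤ η / 2 * (P p' - P (u1 c)) :=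
        mul_le_mul_of_nonneg_left (by linarith) (by positivity)
      linarith
    · intro u hu
      have hu0 : 0 < u := by linarith [hu.1]
      have := HB.s2 c hcI u ⟨hu.1, by linarith [hu.2]⟩
      exact mul_nonneg (HB.g1p u hu0).le (by linarith)
    · intro u hu
      have hu0 : 0 < u := by linarith [hu.1]
      have h1 := hdp' u hu0.le hu.2.le
      have := mul_le_mul_of_nonneg_right (show η / 2 ≤ d u + μb c by linarith) (HB.g2p u hu0).le
      linarith
  linarith [hcon c hcI]

lemma fam_core {V V' V'' κ : ℝ → ℝ} {τ UM K C0 C1 e1 e2 : ℝ} {u1c u0c u2c : ℝ → ℝ} {k ν : ℝ → ℝ}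
    (hA1 : A1 V V' V'' UM) (hA2 : A2 κ) (hτ : 0 < τ) (hK : 0 < K)
    (he1 : e1 ∈ Ioo 0 UM) (hV1 : V' e1 = K) (he2 : UM < e2) (hV2 : V' e2 = K)
    (hC0 : K * e2 - V e2 ≤ C0) (hC1 : C1 ≤ K * e1 - V e1)
    (hz : ∀ cc ∈ Ioo C0 C1, ZerosD1 V K cc (u1c cc) (u0c cc) (u2c cc))
    (hk : ContinuousOn k (Ioi 0))
    (hgr : ∀ c ∈ Ioo C0 C1, ∃ W, Gr (fun u => g1TV κ τ u / K * (K * u - V u - c))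
      (fun u => k u + ν c * g2TV κ τ u) (u1c c) (u2c c) W) :
    Fam (Ioi 0) (fun u => g1TV κ τ u / K) (g2TV κ τ) k (fun u => K * u - V u) C0 C1 e1 e2
      u1c u0c u2c ν := by
  obtain ⟨hd, hc, hmid, m1, m2, m3⟩ := F_mono hA1 he1 hV1 he2 hV2
  have hκ : ContinuousOn (fun u : ℝ => κ (1 / u)) (Ioi 0) := by
    refine hA2.1.continuousOn.comp ?_ (fun u hu => ?_)
    · exact ContinuousOn.div continuousOn_const continuousOn_id (fun u hu => ne_of_gt hu)
    · exact one_div_pos.2 (show (0:ℝ) < u from hu)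
  have hκp : ∀ u ∈ Ioi (0:ℝ), 0 < κ (1 / u) := fun u hu => hA2.2 _ (one_div_pos.2 hu)
  have hzz : ∀ c ∈ Ioo C0 C1, _ := fun c hcI => by
    obtain ⟨q1, q2, q3, q4, q5, q6, -⟩ := hz c hcI
    have conv : ∀ u, fTV V K c u = 0 → K * u - V u = c := by
      intro u h
      unfold fTV at h
      rcases div_eq_zero_iff.1 h with h | h <;> linarith
    exact And.intro q1 (And.intro (lt_trans q2 q3) (And.intro (conv _ q4) (And.intro (conv _ q5)
      (And.intro (conv _ q6)
      (zeros_loc (F := fun u => K * u - V u) (c := c) he1.1 (he1.2.trans he2) m1 m2 m3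
      (lt_of_le_of_lt hC0 hcI.1) (lt_of_lt_of_le hcI.2 hC1) q1 q2 q3 (conv _ q4) (conv _ q5)
      (conv _ q6))))))
  refine ⟨ordConnected_Ioi, isOpen_Ioi, ?_, ?_, hk, hc.mono Ioi_subset_Ici_self, ?_, ?_,
    fun c h => (hzz c h).1, fun c h => lt_trans (hzz c h).1 (hzz c h).2.1,
    fun c h => (hzz c h).2.2.2.2.2.1, fun c h => (hzz c h).2.2.2.2.2.2.1,
    fun c h => (hzz c h).2.2.2.2.2.2.2.1, fun c h => (hzz c h).2.2.2.2.2.2.2.2.1,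
    fun c h => (hzz c h).2.2.1, fun c h => (hzz c h).2.2.2.2.1,
    fun c h => (hzz c h).2.2.2.2.2.2.2.2.2.1, fun c h => (hzz c h).2.2.2.2.2.2.2.2.2.2.1,
    fun c h => (hzz c h).2.2.2.1, fun c h => (hzz c h).2.2.2.2.2.2.2.2.2.2.2.1,
    fun c h => (hzz c h).2.2.2.2.2.2.2.2.2.2.2.2, hgr⟩
  · refine ContinuousOn.div_const ?_ K
    exact ContinuousOn.div continuousOn_const (continuousOn_const.mul hκ)
      (fun u hu => (mul_pos hτ (hκp u hu)).ne')
  · exact ContinuousOn.div continuousOn_id (continuousOn_const.mul hκ)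
      (fun u hu => (mul_pos (mul_pos two_pos hτ) (hκp u hu)).ne')
  · intro u hu
    exact div_pos (one_div_pos.2 (mul_pos hτ (hκp u hu))) hK
  · intro u hu
    exact div_pos hu (mul_pos (mul_pos two_pos hτ) (hκp u hu))

theorem stmt8
    (V V' V'' κ : ℝ → ℝ) (τ UM K K₁ : ℝ) (uMx umx : ℝ → ℝ)
    (u1c u0c u2c μbc μfc : ℝ → ℝ)
    (hA1 : A1 V V' V'' UM) (hA2 : A2 κ) (hτ : 0 < τ)
    (huMx : UMaxHyp V' UM uMx) (humx : UMinHyp V' UM umx)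
    (hK1 : K1Hyp V V' UM umx K₁)
    (hK0 : V' 0 < K) (hKM : K < V' UM)
    (hC : CondC V' κ UM K₁ K)
    (hne : c1f V umx K < cMf V uMx K)
    (hz : ∀ cc, c1f V umx K < cc → cc < cMf V uMx K →
      ZerosD1 V K cc (u1c cc) (u0c cc) (u2c cc))
    (hμb : ∀ cc, c1f V umx K < cc → cc < cMf V uMx K →
      ∀ μ, HasHE1 V V' κ τ K cc μ (u1c cc) (u2c cc) ↔ μ = μbc cc)
    (hμf : ∀ cc, c1f V umx K < cc → cc < cMf V uMx K →
      ∀ μ, HasHE2 V V' κ τ K cc μ (u1c cc) (u2c cc) ↔ μ = μfc cc) :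
    ∃ cs : ℝ, c1f V umx K < cs ∧ cs < cMf V uMx K ∧
      (∀ cc, c1f V umx K < cc → cc < cs → μbc cc < μfc cc) ∧
      (∀ cc, cs < cc → cc < cMf V uMx K → μfc cc < μbc cc) ∧
      μbc cs = μfc cs ∧
      (∀ cs', c1f V umx K < cs' → cs' < cMf V uMx K → μbc cs' = μfc cs' → cs' = cs) ∧
      HasHE1 V V' κ τ K cs (μbc cs) (u1c cs) (u2c cs) ∧
      HasHE2 V V' κ τ K cs (μbc cs) (u1c cs) (u2c cs) := by
  have hd0 : 0 ≤ V' 0 := by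
    have h1 : ContinuousWithinAt V' (Ioi 0) 0 :=
      (hA1.2.1 0 (show (0:ℝ) ≤ 0 from le_refl _)).mono Ioi_subset_Ici_self
    refine ge_of_tendsto h1 ?_
    filter_upwards [self_mem_nhdsWithin] with u hu
    exact (hA1.2.2.2.2.1 u hu).le
  have hK : 0 < K := lt_of_le_of_lt hd0 hK0
  obtain ⟨he1, hV1⟩ := huMx K hK0 hKM
  obtain ⟨he2, hV2⟩ := humx K hK hKM
  obtain ⟨hd, hcF, hmid, m1, m2, m3⟩ := F_mono hA1 he1 hV1 he2 hV2
  have hzI : ∀ cc ∈ Ioo (c1f V umx K) (cMf V uMx K),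
      ZerosD1 V K cc (u1c cc) (u0c cc) (u2c cc) := fun cc h => hz cc h.1 h.2
  have hCm : K * umx K - V (umx K) ≤ c1f V umx K := le_max_right _ _
  have hCM : cMf V uMx K ≤ K * uMx K - V (uMx K) := le_refl _
  have dc : ContinuousOn (fdTV V' K) (Ici 0) :=
    (continuousOn_const.sub hA1.2.1).div_const K
  have dc' : ContinuousOn (fdTV V' K) (Ioi 0) := dc.mono Ioi_subset_Ici_self
  have hκ : ContinuousOn (fun u : ℝ => κ (1 / u)) (Ioi 0) := by
    refine hA2.1.continuousOn.comp ?_ (fun u hu => ?_)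
    · exact ContinuousOn.div continuousOn_const continuousOn_id (fun u hu => ne_of_gt hu)
    · exact one_div_pos.2 (show (0:ℝ) < u from hu)
  have hκp : ∀ u ∈ Ioi (0:ℝ), 0 < κ (1 / u) := fun u hu => hA2.2 _ (one_div_pos.2 hu)
  have g2c : ContinuousOn (g2TV κ τ) (Ioi 0) :=
    ContinuousOn.div continuousOn_id (continuousOn_const.mul hκ)
      (fun u hu => (mul_pos (mul_pos two_pos hτ) (hκp u hu)).ne')
  have hlt : ∀ cc ∈ Ioo (c1f V umx K) (cMf V uMx K), u1c cc < u2c cc := fun cc h =>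
    lt_trans (hzI cc h).2.1 (hzI cc h).2.2.1
  have HB : Fam (Ioi 0) (fun u => g1TV κ τ u / K) (g2TV κ τ)
      (fun u => g2TV κ τ u * fdTV V' K u) (fun u => K * u - V u)
      (c1f V umx K) (cMf V uMx K) (uMx K) (umx K) u1c u0c u2c μbc := by
    refine fam_core hA1 hA2 hτ hK he1 hV1 he2 hV2 hCm hCM hzI (g2c.mul dc') ?_
    intro c hcI
    obtain ⟨u, w, ⟨hu, hw⟩, -, t1, t2, t3, t4, hp⟩ := (hμb c hcI.1 hcI.2 (μbc c)).2 rfl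
    refine gr_of_sol (hlt c hcI) hu (fun z => (hw z).congr_deriv ?_) hp t1 t2 t3 t4
    unfold fTV hTV
    ring
  have HF : Fam (Ioi 0) (fun u => g1TV κ τ u / K) (g2TV κ τ)
      (fun u => - (g2TV κ τ u * fdTV V' K u)) (fun u => K * u - V u)
      (c1f V umx K) (cMf V uMx K) (uMx K) (umx K) u1c u0c u2c (fun c => - μfc c) := by
    refine fam_core hA1 hA2 hτ hK he1 hV1 he2 hV2 hCm hCM hzI (g2c.mul dc').neg ?_
    intro c hcI
    obtain ⟨u, w, ⟨hu, hw⟩, -, t1, t2, t3, t4, hp⟩ := (hμf c hcI.1 hcI.2 (μfc c)).2 rfl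
    refine gr_of_sol (u := fun z => u (-z)) (w := fun z => - w (-z)) (hlt c hcI)
      (fun z => ?_) (fun z => ?_) (fun z => by linarith [hp (-z)])
      (t2.comp tendsto_neg_atBot_atTop) (t1.comp tendsto_neg_atTop_atBot) ?_ ?_
    · exact ((hu (-z)).comp z (hasDerivAt_neg z)).congr_deriv (by ring)
    · refine (((hw (-z)).comp z (hasDerivAt_neg z)).neg).congr_deriv ?_
      unfold fTV hTV
      ring
    · simpa using (t4.comp tendsto_neg_atBot_atTop).neg
    · simpa using (t3.comp tendsto_neg_atTop_atBot).neg
  have hdn : ∀ u ∈ Ioo (uMx K) (umx K), fdTV V' K u < 0 := fun u hu =>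
    div_neg_of_neg_of_pos (by linarith [hmid u hu]) hK
  have hde1 : fdTV V' K (uMx K) = 0 := by simp [fdTV, hV1]
  have hde2 : fdTV V' K (umx K) = 0 := by simp [fdTV, hV2]
  obtain ⟨ch, hchI, hch⟩ := high_end hne HB HF he1.1 he1.2 he2 dc' hde1 hdn m1 m2 rfl
  have hlow : ∃ c ∈ Ioo (c1f V umx K) (cMf V uMx K), μbc c < μfc c := by
    rcases hC with ⟨h1, h2⟩ | ⟨hH, -, h2⟩
    · exact low_end1 hne HB HF he1.1 he1.2 he2 dc' hde2 hdn m2 m3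
        (max_eq_right (hK1.2.2.2.2 K h1 h2).le).symm
    · obtain ⟨P, hP, hPu⟩ := condH_prim hτ hA2 hH
      have hle : cmf V umx K ≤ c0v V := by
        rcases lt_or_eq_of_le h2 with h | h
        · exact (hK1.2.2.1 K hK h).le
        · rw [h]; exact hK1.2.2.2.1.le
      have hC0 : (fun u => K * u - V u) 0 = c1f V umx K := by
        rw [c1f, max_eq_left hle]
        simp [c0v]
      refine low_end2 (K := K) hne HB HF he1.1 hK dc ?_ ?_ hde1 ?_ m1 hC0 hP hPu
      · intro u hu
        have := hκp u hu
        unfold g1TV g2TV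
        field_simp
      · intro u hu
        refine (hd u hu).congr_deriv ?_
        unfold fdTV
        field_simp
      · intro x hx y hy hxy
        have h3 := (V'_mono hA1).1 (show x ∈ Icc 0 UM from ⟨hx.1, hx.2.trans he1.2.le⟩)
          (show y ∈ Icc 0 UM from ⟨hy.1, hy.2.trans he1.2.le⟩) hxy
        exact div_lt_div_of_pos_right (by linarith) hK
  obtain ⟨cl, hclI, hcl⟩ := hlow
  have hmono : ∀ c ∈ Ioo (c1f V umx K) (cMf V uMx K), ∀ c' ∈ Ioo (c1f V umx K) (cMf V uMx K),
      c < c' → μbc c - μfc c < μbc c' - μfc c' := by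
    intro c h c' h' hcc
    have a1 := HB.mono h h' hcc
    have a2 := HF.mono h h' hcc
    linarith
  have hlh : cl ≤ ch := by
    by_contra hcon
    push Not at hcon
    have := hmono ch hchI cl hclI hcon
    linarith
  have hsub : Icc cl ch ⊆ Ioo (c1f V umx K) (cMf V uMx K) := fun x hx =>
    ⟨lt_of_lt_of_le hclI.1 hx.1, lt_of_le_of_lt hx.2 hchI.2⟩
  have hcont : ContinuousOn (fun c => μbc c + - μfc c) (Icc cl ch) :=
    (HB.cont.add HF.cont).mono hsub
  obtain ⟨cs, hcs, hcs0⟩ := intermediate_value_Icc hlh hcont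
    (show (0:ℝ) ∈ Icc _ _ from ⟨by linarith, by linarith⟩)
  have hcsI := hsub hcs
  have heq : μbc cs = μfc cs := by
    have : μbc cs + - μfc cs = 0 := hcs0
    linarith
  refine ⟨cs, hcsI.1, hcsI.2, ?_, ?_, heq, ?_, (hμb cs hcsI.1 hcsI.2 _).2 rfl,
    (hμf cs hcsI.1 hcsI.2 _).2 heq⟩
  · intro cc h1 h2
    have := hmono cc ⟨h1, h2.trans hcsI.2⟩ cs hcsI h2
    linarith
  · intro cc h1 h2
    have := hmono cs hcsI cc ⟨hcsI.1.trans h1, h2⟩ h1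
    linarith
  · intro c' h1 h2 h3
    rcases lt_trichotomy c' cs with h | h | h
    · have := hmono c' ⟨h1, h2⟩ cs hcsI h
      linarith
    · exact h
    · have := hmono cs hcsI c' ⟨h1, h2⟩ h
      linarith

end TrafficTW
end
end

section
/- (i) If (K,c) ∈ D₁, then f has exactly three zeros u₁ < u₀ < u₂ in (0,∞), with f > 0 on (u₁,u₀) ∪ (u₂,∞), f < 0 on (0,u₁) ∪ (u₀,u₂), f'(u₁) > 0, f'(u₂) > 0, and f'(u₀) < 0. (ii) If (K,c) ∈ D₂, then f has exactly two zeros u₀ < u₂ in (0,∞), with f > 0 on (0,u₀) ∪ (u₂,∞), f < 0 on (u₀,u₂), f'(u₂) > 0, f'(u₀) < 0; moreover f(0) = 0 and f'(0) > 0 when K₀ < K < K₁ and c = c₀, while f(0) > 0 when 0 < K < K₁ and c_m(K) < c < c₀. -/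
open Set Filter MeasureTheory

noncomputable section

namespace TrafficTW

/-! ### Helper lemmas -/

section Helpers

variable {V V' V'' : ℝ → ℝ} {UM : ℝ}

lemma A1.cont (h : A1 V V' V'' UM) : ContinuousOn V (Ici 0) :=
  fun u hu => (h.1 u hu).continuousWithinAt

lemma A1.hasDeriv (h : A1 V V' V'' UM) {u : ℝ} (hu : 0 < u) : HasDerivAt V (V' u) u :=
  (h.1 u hu.le).hasDerivAt (Ici_mem_nhds hu)

lemma A1.zero_nonneg (h : A1 V V' V'' UM) : 0 ≤ V' 0 := by
  have hc : ContinuousWithinAt V' (Ioi 0) 0 :=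
    (h.2.1 0 self_mem_Ici).mono Ioi_subset_Ici_self
  refine ge_of_tendsto hc ?_
  filter_upwards [self_mem_nhdsWithin] with u hu
  exact (h.2.2.2.2.1 u hu).le

lemma A1.injOn (h : A1 V V' V'' UM) {s : Set ℝ} (hs : s ⊆ Ici 0)
    (hne : ∀ a ∈ s, ∀ b ∈ s, ∀ c ∈ Ioo a b, c ≠ UM) : InjOn V' s := by
  have key : ∀ a ∈ s, ∀ b ∈ s, a < b → V' a ≠ V' b := by
    intro a ha b hb hab heq
    obtain ⟨c, hc, hc0⟩ := exists_hasDerivAt_eq_zero (f := V') (f' := V'') hab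
      (h.2.1.mono (fun x hx => le_trans (hs ha) hx.1)) heq
      (fun x hx => h.2.2.1 x (lt_of_le_of_lt (hs ha) hx.1))
    have hcpos : 0 < c := lt_of_le_of_lt (hs ha) hc.1
    exact hne a ha b hb c hc ((h.2.2.2.2.2.2.2.2.2 c hcpos).1 hc0)
  intro a ha b hb heq
  rcases lt_trichotomy a b with hab | hab | hab
  · exact absurd heq (key a ha b hb hab)
  · exact hab
  · exact absurd heq.symm (key b hb a ha hab)

lemma A1.mono_left (h : A1 V V' V'' UM) : StrictMonoOn V' (Icc 0 UM) := by
  have hUM : 0 < UM := h.2.2.2.2.2.2.2.1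
  have hinj : InjOn V' (Icc 0 UM) := h.injOn (fun x hx => hx.1)
    (fun a _ b hb c hc => (lt_of_lt_of_le hc.2 hb.2).ne)
  rcases ContinuousOn.strictMonoOn_of_injOn_Icc' hUM.le
    (h.2.1.mono (fun x hx => hx.1)) hinj with h1 | h1
  · exact h1
  · have h2 := h1 (a := UM / 2) (b := UM) ⟨by linarith, by linarith⟩ ⟨hUM.le, le_rfl⟩
      (by linarith)
    have h3 := h.2.2.2.2.2.2.2.2.1 (UM / 2) (by linarith)
    linarith

lemma A1.anti_right (h : A1 V V' V'' UM) : StrictAntiOn V' (Ici UM) := by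
  have hUM : 0 < UM := h.2.2.2.2.2.2.2.1
  intro a ha b hb hab
  have ha' : UM ≤ a := ha
  have hUb : UM < b := lt_of_le_of_lt ha' hab
  have hinj : InjOn V' (Icc UM b) := h.injOn (fun x hx => hUM.le.trans hx.1)
    (fun a ha b _ c hc => (lt_of_le_of_lt ha.1 hc.1).ne')
  rcases ContinuousOn.strictMonoOn_of_injOn_Icc' hUb.le
    (h.2.1.mono (fun x hx => hUM.le.trans hx.1)) hinj with h1 | h1
  · have h2 := h1 ⟨le_rfl, hUb.le⟩ ⟨hUb.le, le_rfl⟩ hUb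
    have h3 := h.2.2.2.2.2.2.2.2.1 b (hUM.trans hUb)
    linarith
  · exact h1 ⟨ha', hab.le⟩ ⟨hUb.le, le_rfl⟩ hab

lemma A1.contG (h : A1 V V' V'' UM) (K : ℝ) :
    ContinuousOn (fun u => K * u - V u) (Ici 0) :=
  (continuousOn_const.mul continuousOn_id).sub h.cont

lemma A1.derivG (h : A1 V V' V'' UM) (K : ℝ) {u : ℝ} (hu : 0 < u) :
    deriv (fun u => K * u - V u) u = K - V' u := by
  have h1 : HasDerivAt (fun u => K * u - V u) (K * 1 - V' u) u :=
    ((hasDerivAt_id u).const_mul K).sub (h.hasDeriv hu)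
  rw [h1.deriv, mul_one]

lemma A1.G_mono (h : A1 V V' V'' UM) (K : ℝ) {a b : ℝ} (ha : 0 ≤ a) (hab : a < b)
    (hd : ∀ u, a < u → u < b → V' u < K) : K * a - V a < K * b - V b := by
  have hm := strictMonoOn_of_deriv_pos (convex_Icc a b)
    ((h.contG K).mono (fun x hx => ha.trans hx.1)) (by
      intro x hx
      rw [interior_Icc] at hx
      rw [h.derivG K (lt_of_le_of_lt ha hx.1)]
      linarith [hd x hx.1 hx.2])
  exact hm ⟨le_rfl, hab.le⟩ ⟨hab.le, le_rfl⟩ hab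

lemma A1.G_anti (h : A1 V V' V'' UM) (K : ℝ) {a b : ℝ} (ha : 0 ≤ a) (hab : a < b)
    (hd : ∀ u, a < u → u < b → K < V' u) : K * b - V b < K * a - V a := by
  have hm := strictAntiOn_of_deriv_neg (convex_Icc a b)
    ((h.contG K).mono (fun x hx => ha.trans hx.1)) (by
      intro x hx
      rw [interior_Icc] at hx
      rw [h.derivG K (lt_of_le_of_lt ha hx.1)]
      linarith [hd x hx.1 hx.2])
  exact hm ⟨le_rfl, hab.le⟩ ⟨hab.le, le_rfl⟩ hab

/-- The common part of both cases: from a point `s` with `G(s) > 0` to the left of the minimum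
point `m` with `G(m) < 0`, such that `G` is decreasing in between. -/
lemma A1.core (h : A1 V V' V'' UM) {K c s m : ℝ} (hs : 0 ≤ s) (hsm : s < m) (hm : UM < m)
    (hVm : V' m = K) (hd : ∀ u, s < u → u < m → K < V' u)
    (hGs : 0 < K * s - V s - c) (hGm : K * m - V m - c < 0) :
    ∃ u0 u2 : ℝ, s < u0 ∧ u0 < u2 ∧ K * u0 - V u0 - c = 0 ∧ K * u2 - V u2 - c = 0 ∧
      (∀ u, s < u → u < u0 → 0 < K * u - V u - c) ∧
      (∀ u, u0 < u → u < u2 → K * u - V u - c < 0) ∧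
      (∀ u, u2 < u → 0 < K * u - V u - c) ∧ V' u2 < K ∧ K < V' u0 := by
  have hUM : 0 < UM := h.2.2.2.2.2.2.2.1
  have hm0 : 0 < m := hUM.trans hm
  have hr : ∀ u, m < u → V' u < K := fun u hu => by
    rw [← hVm]; exact h.anti_right hm.le (hm.trans hu).le hu
  obtain ⟨u0, hu0, hG0⟩ := intermediate_value_Ioo' hsm.le
    ((h.contG K).mono (fun x hx => hs.trans hx.1))
    (show c ∈ Ioo (K * m - V m) (K * s - V s) from ⟨by linarith, by linarith⟩)
  have hG0' : K * u0 - V u0 = c := hG0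
  -- a point where `G` is positive, to the right of `m`
  obtain ⟨b, hb, hGb⟩ : ∃ b, m < b ∧ c < K * b - V b := by
    set p := m + 1 with hp
    have hpm : m < p := by linarith
    have hkp : V' p < K := hr p hpm
    have hδ : 0 < K - V' p := by linarith
    refine ⟨p + (|c - (K * p - V p)| + 1) / (K - V' p), ?_, ?_⟩
    · have : 0 < (|c - (K * p - V p)| + 1) / (K - V' p) := by positivity
      linarith
    · set t := (|c - (K * p - V p)| + 1) / (K - V' p) with ht
      have ht0 : 0 < t := by rw [ht]; positivity
      have htm : t * (K - V' p) = |c - (K * p - V p)| + 1 := by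
        rw [ht]; field_simp
      have := h.G_mono (V' p) (a := p) (b := p + t) (by linarith) (by linarith)
        (fun u hu _ => h.anti_right (hm.trans hpm).le ((hm.trans hpm).trans hu).le hu)
      have habs := le_abs_self (c - (K * p - V p))
      nlinarith
  obtain ⟨u2, hu2, hG2⟩ := intermediate_value_Ioo hb.le
    ((h.contG K).mono (fun x hx => hm0.le.trans hx.1))
    (show c ∈ Ioo (K * m - V m) (K * b - V b) from ⟨by linarith, hGb⟩)
  have hG2' : K * u2 - V u2 = c := hG2
  have hu00 : 0 < u0 := lt_of_le_of_lt hs hu0.1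
  refine ⟨u0, u2, hu0.1, hu0.2.trans hu2.1, by linarith, by linarith, ?_, ?_, ?_,
    hr u2 hu2.1, hd u0 hu0.1 hu0.2⟩
  · intro u h1 h2
    have := h.G_anti K (hs.trans h1.le) h2
      (fun x hx hx' => hd x (h1.trans hx) (hx'.trans hu0.2))
    linarith
  · intro u h1 h2
    rcases le_or_gt u m with hum | hum
    · have := h.G_anti K hu00.le h1
        (fun x hx hx' => hd x (hu0.1.trans hx) (lt_of_lt_of_le hx' hum))
      linarith
    · have := h.G_mono K (hm0.trans hum).le h2 (fun x hx _ => hr x (hum.trans hx))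
      linarith
  · intro u h1
    have := h.G_mono K (hm0.trans hu2.1).le h1 (fun x hx _ => hr x (hu2.1.trans hx))
    linarith

/-- Between `s ≤ U_M` with `V' s ≥ K` and `m` one has `V' > K`. -/
lemma A1.between (h : A1 V V' V'' UM) {K s m : ℝ} (hs : 0 ≤ s) (hm : UM < m)
    (hVs : K ≤ V' s) (hVm : V' m = K) : ∀ u, s < u → u < m → K < V' u := by
  intro u h1 h2
  rcases le_or_gt u UM with hu | hu
  · have := h.mono_left ⟨hs, h1.le.trans hu⟩ ⟨hs.trans h1.le, hu⟩ h1
    linarith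
  · have := h.anti_right hu.le hm.le h2
    linarith

lemma fTV_pos {K c u : ℝ} (hK : 0 < K) (h : 0 < K * u - V u - c) : 0 < fTV V K c u :=
  div_pos h hK

lemma fTV_neg {K c u : ℝ} (hK : 0 < K) (h : K * u - V u - c < 0) : fTV V K c u < 0 :=
  div_neg_of_neg_of_pos h hK

lemma fTV_zero {K c u : ℝ} (h : K * u - V u - c = 0) : fTV V K c u = 0 := by
  simp [fTV, h]

end Helpers

theorem stmt10
    (V V' V'' κ : ℝ → ℝ) (τ UM K c K₁ : ℝ) (uMx umx : ℝ → ℝ)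
    (hA1 : A1 V V' V'' UM) (hA2 : A2 κ) (hτ : 0 < τ) (hK : K ≠ 0)
    (huMx : UMaxHyp V' UM uMx) (humx : UMinHyp V' UM umx)
    (hK1 : K1Hyp V V' UM umx K₁) :
    ((K, c) ∈ D1 V V' UM uMx umx →
      ∃ u1 u0 u2 : ℝ, ZerosD1 V K c u1 u0 u2 ∧
        (∀ u, u1 < u → u < u0 → 0 < fTV V K c u) ∧
        (∀ u, u2 < u → 0 < fTV V K c u) ∧
        (∀ u, 0 < u → u < u1 → fTV V K c u < 0) ∧
        (∀ u, u0 < u → u < u2 → fTV V K c u < 0) ∧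
        0 < fdTV V' K u1 ∧ 0 < fdTV V' K u2 ∧ fdTV V' K u0 < 0) ∧
    ((K, c) ∈ D2 V V' umx K₁ →
      ∃ u0 u2 : ℝ, ZerosD2 V K c u0 u2 ∧
        (∀ u, 0 < u → u < u0 → 0 < fTV V K c u) ∧
        (∀ u, u2 < u → 0 < fTV V K c u) ∧
        (∀ u, u0 < u → u < u2 → fTV V K c u < 0) ∧
        0 < fdTV V' K u2 ∧ fdTV V' K u0 < 0 ∧
        (V' 0 < K → K < K₁ → c = c0v V → fTV V K c 0 = 0 ∧ 0 < fdTV V' K 0) ∧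
        (0 < K → K < K₁ → cmf V umx K < c → c < c0v V → 0 < fTV V K c 0)) := by
  have hUM : 0 < UM := hA1.2.2.2.2.2.2.2.1
  have h00 := hA1.zero_nonneg
  constructor
  · rintro ⟨h1, h2, h3, h4⟩
    simp only at h1 h2 h3 h4
    have hKp : 0 < K := by linarith
    obtain ⟨hM, hVM⟩ := huMx K h1 h2
    obtain ⟨hm, hVm⟩ := humx K hKp h2
    obtain ⟨hc0, hcm⟩ := max_lt_iff.1 h3
    simp only [c0v, cmf, cMf] at hc0 hcm h4
    have hleft : ∀ u, 0 ≤ u → u < uMx K → V' u < K := by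
      intro u h5 h6
      rw [← hVM]
      exact hA1.mono_left ⟨h5, (h6.trans hM.2).le⟩ ⟨hM.1.le, hM.2.le⟩ h6
    obtain ⟨u0, u2, a1, a2, a3, a4, a5, a6, a7, a8, a9⟩ := hA1.core (K := K) (c := c)
      hM.1.le (hM.2.trans hm) hm hVm (hA1.between hM.1.le hm hVM.ge hVm)
      (by linarith) (by linarith)
    obtain ⟨u1, hu1, hG1⟩ := intermediate_value_Ioo hM.1.le
      ((hA1.contG K).mono (fun x hx => hx.1))
      (show c ∈ Ioo (K * 0 - V 0) (K * uMx K - V (uMx K)) from ⟨by linarith, by linarith⟩)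
    have hG1' : K * u1 - V u1 = c := hG1
    have b1 : ∀ u, u1 < u → u < u0 → 0 < fTV V K c u := by
      intro u h5 h6
      apply fTV_pos hKp
      rcases le_or_gt u (uMx K) with h7 | h7
      · have := hA1.G_mono K hu1.1.le h5
          (fun x hx hx' => hleft x (hu1.1.trans hx).le (lt_of_lt_of_le hx' h7))
        linarith
      · exact a5 u h7 h6
    have b2 : ∀ u, u2 < u → 0 < fTV V K c u := fun u h5 => fTV_pos hKp (a7 u h5)
    have b3 : ∀ u, 0 < u → u < u1 → fTV V K c u < 0 := by
      intro u h5 h6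
      apply fTV_neg hKp
      have := hA1.G_mono K h5.le h6
        (fun x hx hx' => hleft x (h5.trans hx).le (hx'.trans hu1.2))
      linarith
    have b4 : ∀ u, u0 < u → u < u2 → fTV V K c u < 0 :=
      fun u h5 h6 => fTV_neg hKp (a6 u h5 h6)
    refine ⟨u1, u0, u2, ⟨hu1.1, hu1.2.trans a1, a2, fTV_zero (by linarith), fTV_zero a3,
      fTV_zero a4, ?_⟩, b1, b2, b3, b4, ?_, ?_, ?_⟩
    · intro u h5 h6
      rcases lt_trichotomy u u1 with h7 | h7 | h7
      · exact absurd h6 (b3 u h5 h7).ne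
      · exact Or.inl h7
      rcases lt_trichotomy u u0 with h8 | h8 | h8
      · exact absurd h6 (b1 u h7 h8).ne'
      · exact Or.inr (Or.inl h8)
      rcases lt_trichotomy u u2 with h9 | h9 | h9
      · exact absurd h6 (b4 u h8 h9).ne
      · exact Or.inr (Or.inr h9)
      · exact absurd h6 (b2 u h9).ne'
    · exact div_pos (by linarith [hleft u1 hu1.1.le hu1.2]) hKp
    · exact div_pos (by linarith) hKp
    · exact div_neg_of_neg_of_pos (by linarith) hKp
  · intro hD
    obtain ⟨hk0, hkM, hk, -, -⟩ := hK1
    have hKK : 0 < K ∧ K < K₁ ∧ cmf V umx K < c ∧ c ≤ c0v V ∧ (c = c0v V → V' 0 < K) := by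
      rcases hD with ⟨h1, h2, h3⟩ | ⟨h1, h2, h3, h4⟩
      · simp only at h1 h2 h3
        have hKp : 0 < K := by linarith
        exact ⟨hKp, h2, h3 ▸ hk K hKp h2, h3.le, fun _ => h1⟩
      · simp only at h1 h2 h3 h4
        exact ⟨h1, h2, h3, h4.le, fun h => absurd h h4.ne⟩
    obtain ⟨hKp, hKk, hcm, hc0, himp⟩ := hKK
    have h2 : K < V' UM := hKk.trans hkM
    obtain ⟨hm, hVm⟩ := humx K hKp h2
    simp only [c0v, cmf] at hcm hc0 himp
    have hex : ∃ u0 u2 : ℝ, 0 < u0 ∧ u0 < u2 ∧ K * u0 - V u0 - c = 0 ∧ K * u2 - V u2 - c = 0 ∧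
        (∀ u, 0 < u → u < u0 → 0 < K * u - V u - c) ∧
        (∀ u, u0 < u → u < u2 → K * u - V u - c < 0) ∧
        (∀ u, u2 < u → 0 < K * u - V u - c) ∧ V' u2 < K ∧ K < V' u0 := by
      rcases le_or_gt K (V' 0) with hK0 | hK0
      · have hlt : c < - V 0 := lt_of_le_of_ne hc0 (fun h => by linarith [himp h])
        exact hA1.core le_rfl (hUM.trans hm) hm hVm (hA1.between le_rfl hm hK0 hVm)
          (by linarith) (by linarith)
      · obtain ⟨hM, hVM⟩ := huMx K hK0 h2
        have hpos : ∀ u, 0 < u → u ≤ uMx K → 0 < K * u - V u - c := by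
          intro u h5 h6
          have := hA1.G_mono K le_rfl h5 (fun x hx hx' => by
            rw [← hVM]
            have hxM : x < uMx K := lt_of_lt_of_le hx' h6
            exact hA1.mono_left ⟨hx.le, (hxM.trans hM.2).le⟩ ⟨hM.1.le, hM.2.le⟩ hxM)
          linarith
        obtain ⟨u0, u2, a1, a2, a3, a4, a5, a6⟩ := hA1.core (K := K) (c := c)
          hM.1.le (hM.2.trans hm) hm hVm (hA1.between hM.1.le hm hVM.ge hVm)
          (hpos _ hM.1 le_rfl) (by linarith)
        refine ⟨u0, u2, hM.1.trans a1, a2, a3, a4, ?_, a6⟩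
        intro u h5 h6
        rcases le_or_gt u (uMx K) with h7 | h7
        · exact hpos u h5 h7
        · exact a5 u h7 h6
    obtain ⟨u0, u2, a1, a2, a3, a4, a5, a6, a7, a8, a9⟩ := hex
    refine ⟨u0, u2, ⟨a1, a2, fTV_zero a3, fTV_zero a4, ?_⟩,
      fun u h5 h6 => fTV_pos hKp (a5 u h5 h6), fun u h5 => fTV_pos hKp (a7 u h5),
      fun u h5 h6 => fTV_neg hKp (a6 u h5 h6), div_pos (by linarith) hKp,
      div_neg_of_neg_of_pos (by linarith) hKp, ?_, ?_⟩
    · intro u h5 h6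
      rcases lt_trichotomy u u0 with h8 | h8 | h8
      · exact absurd h6 (fTV_pos hKp (a5 u h5 h8)).ne'
      · exact Or.inl h8
      rcases lt_trichotomy u u2 with h9 | h9 | h9
      · exact absurd h6 (fTV_neg hKp (a6 u h8 h9)).ne
      · exact Or.inr h9
      · exact absurd h6 (fTV_pos hKp (a7 u h9)).ne'
    · intro h5 _ h7
      simp only [c0v] at h7
      exact ⟨fTV_zero (by linarith), div_pos (by linarith) hKp⟩
    · intro _ _ _ h8
      simp only [c0v] at h8
      exact fTV_pos hKp (by linarith)

end TrafficTW
end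
end
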